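/- arXiv:2112.06688 — 2 statements merged into one kernel-verified Lean document; each statement's English description precedes it below -/
import Mathlib

section
/- There exist index sets I0, I1, I2, I3, I4, I5, I6 and an 𝔽₂[G]-module X isomorphic to one of {0}, 𝔽₂, 𝔽₂ ⊕ 𝔽₂, Ω^{−1}, Ω^{−2}, Ω^{−1} ⊕ Ω^{−1}, such that there is an 𝔽₂[G]-module isomorphism J(K) ≅ X ⊕ (⊕_{I0} 𝔽₂[Ḡ0]) ⊕ (⊕_{I1} 𝔽₂[Ḡ1]) ⊕ (⊕_{I2} 𝔽₂[Ḡ2]) ⊕ (⊕_{I3} 𝔽₂[Ḡ3]) ⊕ (⊕_{I4} 𝔽₂[Ḡ4]) ⊕ (⊕_{I5} Ω¹) ⊕ (⊕_{I6} Ω²). -/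
/-!
# Square classes of a biquadratic extension

Write `x = 1 + σ1` and `y = 1 + σ2`, acting on `J = J(K)`; then `x² = y² = 0` and `xy` is the norm.

**Module theory** (`Biquad.exists_decomposition`).  In the socle `S = ker x ∩ ker y` consider the
subspaces `V1 = x (ker y)`, `V2 = y (ker x)`, `V3 = x (ker (x + y))`.  Any two of them have the same
intersection, so such a triple splits into lines in all, in exactly one or in none of the `Vi`, and
planes with three distinct lines (`Biquad.exists_three_subspaces`).  Lifting the pieces yields
summands: the part of `V1 ∩ V2` in `im xy` gives `𝔽₂[G]`, the rest of it `Ω¹`; lines in a single `Vi`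
give `𝔽₂[Ḡi]`; lines in none give `𝔽₂`; planes give `Ω²`.  These sums exhaust `J` provided
`ker xy = ker x + ker y + ker (x + y)`, and in general up to an exceptional summand `X` accounting
for the failure of this equality.

**Field theory.**  Let `V ⊆ J` be the image of `F×`.  If the norm of `k` is a square `n²`, the group
acts on `n` by signs `(s, t)`, the type of `k` (`Biquad.HasType`).  By Hilbert 90 each of `x k`, `y k`
and `(x + y) k` lies in `V` exactly when the type is `(1, 1)` (`Biquad.KleinData.inBase_left_iff` and
its two analogues), and then `k` is a product of elements of the intermediate fields and of an element
with trivial `x` (`Biquad.KleinData.split`).  Hence `ker xy / (ker x + ker y + ker (x + y))` embeds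
into `{±1}²` by the type.

**The exceptional summand.**  If only the trivial type occurs, `X = 0`.  If exactly one nontrivial
type occurs, an element of that type generates `X ≅ Ω⁻¹`.  Otherwise take `p` of type `(-1, 1)` and
`q` of type `(1, -1)`.  Then `x p ≡ y q` modulo `V` (`Biquad.KleinData.relation`), while `y p` is not
congruent modulo `V` to any `x j` (`Biquad.KleinData.not_inBase`).  If `p` and `q` can be modified so
that `x p = y q`, they span `X ≅ Ω⁻²`; if not, they span `X ≅ Ω⁻¹ ⊕ Ω⁻¹`
(`Biquad.Setup.case_both`).
-/

/-! Galois-module structure of square power classes of a biquadratic extension: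
the decomposition theorem (CMSS).  A module over the group ring
`𝔽₂[G]`, `G = Gal(K/F) ≅ ℤ/2ℤ × ℤ/2ℤ = ⟨σ1, σ2⟩`, is an elementary abelian 2-group
together with a pair of commuting additive involutions (the actions of `σ1`, `σ2`);
since `𝔽₂`-linearity is automatic for additive maps, a `𝔽₂[G]`-module isomorphism is an
additive isomorphism commuting with the two actions. -/


lemma zz : ∀ a b : ZMod 2, a + b + b = a := by decide

/-- A module over `𝔽₂[ℤ/2ℤ × ℤ/2ℤ]`: an abelian group with the commuting
pair of additive automorphisms given by the actions of the generators `σ1`, `σ2`. -/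
structure GMod : Type 1 where
  carrier : Type
  [inst : AddCommGroup carrier]
  s1 : carrier ≃+ carrier
  s2 : carrier ≃+ carrier

attribute [instance] GMod.inst

/-- An isomorphism of `𝔽₂[ℤ/2ℤ × ℤ/2ℤ]`-modules: an additive isomorphism commuting with
the two generator actions (`𝔽₂`-linearity is automatic). -/
structure GModIso (M N : GMod) : Type where
  equiv : M.carrier ≃+ N.carrier
  comm1 : ∀ x, equiv (M.s1 x) = N.s1 (equiv x)
  comm2 : ∀ x, equiv (M.s2 x) = N.s2 (equiv x)

/-- Direct sum of two `𝔽₂[G]`-modules. -/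
def GMod.prod (M N : GMod) : GMod where
  carrier := M.carrier × N.carrier
  s1 := M.s1.prodCongr N.s1
  s2 := M.s2.prodCongr N.s2

/-- Direct sum of copies of a `𝔽₂[G]`-module indexed by an arbitrary type `I`. -/
def GMod.dsum (I : Type) (M : GMod) : GMod where
  carrier := DirectSum I fun _ => M.carrier
  s1 := DFinsupp.mapRange.addEquiv fun _ => M.s1
  s2 := DFinsupp.mapRange.addEquiv fun _ => M.s2

/-- The contragredient (dual) action on the `𝔽₂`-linear dual `Hom(M, 𝔽₂)`:
`(σ·f)(m) = f(σ⁻¹ m)`. -/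
def dualAct {M : Type} [AddCommGroup M] (e : M ≃+ M) :
    (M →+ ZMod 2) ≃+ (M →+ ZMod 2) where
  toFun f := f.comp e.symm.toAddMonoidHom
  invFun f := f.comp e.toAddMonoidHom
  left_inv f := by ext x; simp
  right_inv f := by ext x; simp
  map_add' f g := by ext x; simp

/-- The `𝔽₂`-linear dual of a `𝔽₂[G]`-module. -/
def GMod.dual (M : GMod) : GMod where
  carrier := M.carrier →+ ZMod 2
  s1 := dualAct M.s1
  s2 := dualAct M.s2

/-- Translation of functions on an abelian group: the regular-representation action. -/
def shiftEq {G : Type} [AddCommGroup G] (g : G) : (G → ZMod 2) ≃+ (G → ZMod 2) where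
  toFun f := fun x => f (x + g)
  invFun f := fun x => f (x - g)
  left_inv f := by funext x; simp
  right_inv f := by funext x; simp
  map_add' f h := rfl

/-- The trivial module `{0}`. -/
def zeroMod : GMod where
  carrier := PUnit
  s1 := AddEquiv.refl _
  s2 := AddEquiv.refl _

/-- `𝔽₂` with the trivial `G`-action; this is `𝔽₂[Ḡ4]` for the trivial quotient
`Ḡ4 = G/G = {1}`. -/
def f2Mod : GMod where
  carrier := ZMod 2
  s1 := AddEquiv.refl _
  s2 := AddEquiv.refl _

/-- The regular representation `𝔽₂[Ḡ0] = 𝔽₂[G]`, `G = ℤ/2ℤ × ℤ/2ℤ = ⟨σ1⟩ × ⟨σ2⟩`,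
realized as functions on `G`, with `σ1`, `σ2` acting by translation. -/
def fg0Mod : GMod where
  carrier := (ZMod 2 × ZMod 2) → ZMod 2
  s1 := shiftEq ((1 : ZMod 2), (0 : ZMod 2))
  s2 := shiftEq ((0 : ZMod 2), (1 : ZMod 2))

/-- `𝔽₂[Ḡ1]`, `Ḡ1 = Gal(K1/F) = G/⟨σ2⟩ ≅ ℤ/2ℤ`: `σ1` acts by translation, `σ2`
trivially. -/
def fg1Mod : GMod where
  carrier := ZMod 2 → ZMod 2
  s1 := shiftEq (1 : ZMod 2)
  s2 := AddEquiv.refl _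

/-- `𝔽₂[Ḡ2]`, `Ḡ2 = Gal(K2/F) = G/⟨σ1⟩ ≅ ℤ/2ℤ`: `σ2` acts by translation, `σ1`
trivially. -/
def fg2Mod : GMod where
  carrier := ZMod 2 → ZMod 2
  s1 := AddEquiv.refl _
  s2 := shiftEq (1 : ZMod 2)

/-- `𝔽₂[Ḡ3]`, `Ḡ3 = Gal(K3/F) = G/⟨σ1σ2⟩ ≅ ℤ/2ℤ`: both `σ1` and `σ2` act by
translation. -/
def fg3Mod : GMod where
  carrier := ZMod 2 → ZMod 2
  s1 := shiftEq (1 : ZMod 2)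
  s2 := shiftEq (1 : ZMod 2)

/-- `Ω¹`: the 3-dimensional module with (multiplicatively written) generators `a, b, c`
and defining relations `a^{1+σ1} = b = c^{1+σ2}`, `a^{1+σ2} = c^{1+σ1} = 1`.  On the
`𝔽₂`-basis `(a, b, c)` this reads `σ1(a) = a + b`, `σ2(c) = c + b`, `σ2(a) = a`,
`σ1(c) = c`, `σi(b) = b`. -/
def o1Mod : GMod where
  carrier := ZMod 2 × ZMod 2 × ZMod 2
  s1 :=
    { toFun := fun p => (p.1, p.2.1 + p.1, p.2.2)
      invFun := fun p => (p.1, p.2.1 + p.1, p.2.2)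
      left_inv := fun p => by simp [zz]
      right_inv := fun p => by simp [zz]
      map_add' := fun p q => by
        simp only [Prod.fst_add, Prod.snd_add, Prod.mk_add_mk, Prod.mk.injEq]
        exact ⟨trivial, by abel, trivial⟩ }
  s2 :=
    { toFun := fun p => (p.1, p.2.1 + p.2.2, p.2.2)
      invFun := fun p => (p.1, p.2.1 + p.2.2, p.2.2)
      left_inv := fun p => by simp [zz]
      right_inv := fun p => by simp [zz]
      map_add' := fun p q => by
        simp only [Prod.fst_add, Prod.snd_add, Prod.mk_add_mk, Prod.mk.injEq]
        exact ⟨trivial, by abel, trivial⟩ }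

/-- `Ω²`: the 5-dimensional module with (multiplicatively written) generators
`a, b, c, d, e` and defining relations `a^{1+σ1} = b = c^{1+σ2}`,
`c^{1+σ1} = d = e^{1+σ2}`, `a^{1+σ2} = e^{1+σ1} = 1`.  On the `𝔽₂`-basis
`(a, b, c, d, e)` this reads `σ1(a) = a + b`, `σ1(c) = c + d`, `σ2(c) = c + b`,
`σ2(e) = e + d`, all other basis vectors being fixed. -/
def o2Mod : GMod where
  carrier := ZMod 2 × ZMod 2 × ZMod 2 × ZMod 2 × ZMod 2
  s1 :=
    { toFun := fun p => (p.1, p.2.1 + p.1, p.2.2.1, p.2.2.2.1 + p.2.2.1, p.2.2.2.2)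
      invFun := fun p => (p.1, p.2.1 + p.1, p.2.2.1, p.2.2.2.1 + p.2.2.1, p.2.2.2.2)
      left_inv := fun p => by simp [zz]
      right_inv := fun p => by simp [zz]
      map_add' := fun p q => by
        simp only [Prod.fst_add, Prod.snd_add, Prod.mk_add_mk, Prod.mk.injEq]
        exact ⟨trivial, by abel, trivial, by abel, trivial⟩ }
  s2 :=
    { toFun := fun p => (p.1, p.2.1 + p.2.2.1, p.2.2.1, p.2.2.2.1 + p.2.2.2.2, p.2.2.2.2)
      invFun := fun p => (p.1, p.2.1 + p.2.2.1, p.2.2.1, p.2.2.2.1 + p.2.2.2.2, p.2.2.2.2)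
      left_inv := fun p => by simp [zz]
      right_inv := fun p => by simp [zz]
      map_add' := fun p q => by
        simp only [Prod.fst_add, Prod.snd_add, Prod.mk_add_mk, Prod.mk.injEq]
        exact ⟨trivial, by abel, trivial, by abel, trivial⟩ }


section JK

variable (F K : Type) [Field F] [Field K] [Algebra F K]

/-- The subgroup `K×²` of squares in `K×`. -/
def Sq : Subgroup Kˣ := (powMonoidHom 2 : Kˣ →* Kˣ).range

/-- `J(K) = K×/K×²`, written additively. -/
def JK : Type := Additive (Kˣ ⧸ Sq K)

instance : AddCommGroup (JK K) :=
  inferInstanceAs (AddCommGroup (Additive (Kˣ ⧸ Sq K)))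

/-- The class `[γ] ∈ J(K)` of a unit `γ ∈ K×`. -/
def mkJ (u : Kˣ) : JK K := Additive.ofMul (QuotientGroup.mk u : Kˣ ⧸ Sq K)

/-- A field automorphism of `K` induces an automorphism of `K×`. -/
def galU (σ : K ≃ₐ[F] K) : Kˣ ≃* Kˣ := Units.mapEquiv σ.toMulEquiv

lemma map_Sq (σ : K ≃ₐ[F] K) :
    (Sq K).map (galU F K σ).toMonoidHom = Sq K := by
  ext y
  constructor
  · rintro ⟨x, ⟨z, rfl⟩, rfl⟩
    exact ⟨galU F K σ z, by simp [powMonoidHom_apply, map_pow]⟩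
  · rintro ⟨z, rfl⟩
    exact ⟨powMonoidHom 2 ((galU F K σ).symm z),
      ⟨(galU F K σ).symm z, rfl⟩, by simp [powMonoidHom_apply, map_pow]⟩

/-- The `𝔽₂[Gal(K/F)]`-module structure on `J(K)`: the additive automorphism of
`J(K) = K×/K×²` induced by a Galois automorphism `σ`. -/
def Jact (σ : K ≃ₐ[F] K) : JK K ≃+ JK K :=
  MulEquiv.toAdditive (QuotientGroup.congr (Sq K) (Sq K) (galU F K σ) (map_Sq F K σ))

lemma JK_two (x : JK K) : x + x = 0 := by
  have h : ∀ y : Kˣ ⧸ Sq K, y * y = 1 := by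
    intro y
    induction y using QuotientGroup.induction_on with
    | H z =>
      rw [← QuotientGroup.mk_mul, QuotientGroup.eq_one_iff]
      exact ⟨z, by simp [powMonoidHom_apply, sq]⟩
  exact h x.toMul

noncomputable instance : Module (ZMod 2) (JK K) :=
  AddCommGroup.zmodModule (n := 2) (by intro x; rw [two_nsmul]; exact JK_two K x)

end JK

/-- `J(K) = K×/K×²` as a `𝔽₂[Gal(K/F)]`-module, the generators `σ1, σ2` of
`Gal(K/F)` acting through `Jact`. -/
def JMod (F K : Type) [Field F] [Field K] [Algebra F K] (σ1 σ2 : K ≃ₐ[F] K) : GMod where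
  carrier := JK K
  s1 := Jact F K σ1
  s2 := Jact F K σ2

namespace Biquad

/-! ### Linear algebra over `𝔽₂`: three subspaces -/

section LinearAlgebra

variable {J : Type} [AddCommGroup J] [Module (ZMod 2) J]

/-- Relative complements of subspaces, in elementwise form. -/
lemma exists_relCompl (A B : Submodule (ZMod 2) J) (h : A ≤ B) :
    ∃ C : Submodule (ZMod 2) J, C ≤ B ∧ (∀ c ∈ C, c ∈ A → c = 0) ∧
      ∀ b ∈ B, ∃ a ∈ A, ∃ c ∈ C, b = a + c := by
  obtain ⟨C, hC⟩ := Submodule.exists_isCompl A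
  refine ⟨C ⊓ B, inf_le_right, ?_, ?_⟩
  · intro c hc hcA
    have : c ∈ A ⊓ C := ⟨hcA, hc.1⟩
    rw [hC.inf_eq_bot] at this
    simpa using this
  · intro b hb
    have : b ∈ A ⊔ C := by rw [hC.sup_eq_top]; trivial
    obtain ⟨a, ha, c, hc, rfl⟩ := Submodule.mem_sup.1 this
    refine ⟨a, ha, c, ⟨hc, ?_⟩, rfl⟩
    simpa using B.sub_mem hb (h ha)

/-- Pointwise solutions of the linear system `x j = f b`, `y j = g b` can be chosen linearly
in `b`. -/
lemma exists_lift {B : Type} [AddCommGroup B] [Module (ZMod 2) B]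
    (x y : J →ₗ[ZMod 2] J) (f g : B →ₗ[ZMod 2] J)
    (h : ∀ b, ∃ j, x j = f b ∧ y j = g b) :
    ∃ k : B →ₗ[ZMod 2] J, ∀ b, x (k b) = f b ∧ y (k b) = g b := by
  let T := x.prod y
  let fg := (f.prod g).codRestrict (LinearMap.range T) (by
    intro b
    obtain ⟨j, h1, h2⟩ := h b
    exact ⟨j, by simp [T, h1, h2]⟩)
  obtain ⟨k, hk⟩ := Module.projective_lifting_property T.rangeRestrict fg
    T.surjective_rangeRestrict
  refine ⟨k, fun b => ?_⟩
  have := congrArg Subtype.val (LinearMap.congr_fun hk b)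
  simpa [T, fg] using this

/-- Decomposition of a triple of subspaces `V1, V2, V3` of `S` with equal pairwise
intersections, refined by a subspace `U` of the common intersection and a subspace `Z`
independent of `V1 + V2 + V3`.  Besides lines lying in exactly one `Vi`, lines in all of
them and lines in none, the only indecomposable type is a plane with three distinct lines,
here spanned by `q`, `δ q` and `q + δ q` for `q ∈ Q`. -/
lemma exists_three_subspaces (V1 V2 V3 S U Z : Submodule (ZMod 2) J)
    (h1S : V1 ≤ S) (h2S : V2 ≤ S) (h3S : V3 ≤ S) (hZS : Z ≤ S)
    (hU1 : U ≤ V1) (hU2 : U ≤ V2)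
    (h12 : ∀ v ∈ V1, v ∈ V2 → v ∈ V3) (h13 : ∀ v ∈ V1, v ∈ V3 → v ∈ V2)
    (h23 : ∀ v ∈ V2, v ∈ V3 → v ∈ V1)
    (hZ : ∀ z ∈ Z, ∀ v1 ∈ V1, ∀ v2 ∈ V2, ∀ v3 ∈ V3, z = v1 + v2 + v3 → z = 0) :
    ∃ (U' Q L1 L2 L3 L4 : Submodule (ZMod 2) J) (δ : Q →ₗ[ZMod 2] J),
      U' ≤ V1 ∧ U' ≤ V2 ∧ Q ≤ V1 ∧ (∀ q, δ q ∈ V2) ∧ (∀ q : Q, (q : J) + δ q ∈ V3) ∧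
      L1 ≤ V1 ∧ L2 ≤ V2 ∧ L3 ≤ V3 ∧ L4 ≤ S ∧
      (∀ v ∈ V1, ∃ u ∈ U, ∃ u' ∈ U', ∃ q : Q, ∃ l ∈ L1, v = u + u' + q + l) ∧
      (∀ v ∈ V2, ∃ u ∈ U, ∃ u' ∈ U', ∃ q : Q, ∃ l ∈ L2, v = u + u' + δ q + l) ∧
      (∀ v ∈ V3, ∃ u ∈ U, ∃ u' ∈ U', ∃ q : Q, ∃ l ∈ L3, v = u + u' + (q + δ q) + l) ∧
      (∀ s ∈ S, ∃ z ∈ Z, ∃ v1 ∈ V1, ∃ v2 ∈ V2, ∃ v3 ∈ V3, ∃ l ∈ L4,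
        s = z + v1 + v2 + v3 + l) ∧
      (∀ z ∈ Z, ∀ u ∈ U, ∀ u' ∈ U', ∀ q1 q2 : Q, ∀ l1 ∈ L1, ∀ l2 ∈ L2, ∀ l3 ∈ L3,
        ∀ l4 ∈ L4, z + u + u' + q1 + δ q2 + l1 + l2 + l3 + l4 = 0 →
        z = 0 ∧ u = 0 ∧ u' = 0 ∧ q1 = 0 ∧ q2 = 0 ∧ l1 = 0 ∧ l2 = 0 ∧ l3 = 0 ∧ l4 = 0) := by
  set D := V1 ⊓ V2 with hD
  have hD1 : D ≤ V1 := inf_le_left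
  have hD2 : D ≤ V2 := inf_le_right
  have hD3 : D ≤ V3 := fun v hv => h12 v hv.1 hv.2
  obtain ⟨U', hU'D, hU'0, hU's⟩ := exists_relCompl U D (le_inf hU1 hU2)
  obtain ⟨Q, hQ, hQ0, hQs⟩ := exists_relCompl D (V1 ⊓ (V2 ⊔ V3))
    (le_inf hD1 (hD2.trans le_sup_left))
  obtain ⟨L1, hL1, hL10, hL1s⟩ := exists_relCompl (V1 ⊓ (V2 ⊔ V3)) V1 inf_le_left
  obtain ⟨L2, hL2, hL20, hL2s⟩ := exists_relCompl (V2 ⊓ (V1 ⊔ V3)) V2 inf_le_left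
  obtain ⟨L3, hL3, hL30, hL3s⟩ := exists_relCompl (V3 ⊓ (V1 ⊔ V2)) V3 inf_le_left
  obtain ⟨L4, hL4, hL40, hL4s⟩ := exists_relCompl (Z ⊔ (V1 ⊔ V2 ⊔ V3)) S
    (sup_le hZS (sup_le (sup_le h1S h2S) h3S))
  have hδ : ∃ δ : Q →ₗ[ZMod 2] J, ∀ q, δ q ∈ V2 ∧ (q : J) + δ q ∈ V3 := by
    obtain ⟨k, hk⟩ := Module.projective_lifting_property
      ((V2.subtype.coprod V3.subtype).rangeRestrict)
      (Submodule.inclusion (show Q ≤ LinearMap.range (V2.subtype.coprod V3.subtype) by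
        rw [LinearMap.range_coprod, Submodule.range_subtype, Submodule.range_subtype]
        exact hQ.trans inf_le_right)) (LinearMap.surjective_rangeRestrict _)
    refine ⟨V2.subtype ∘ₗ LinearMap.fst _ _ _ ∘ₗ k, fun q => ⟨(k q).1.2, ?_⟩⟩
    have e : ((k q).1 : J) + (k q).2 = q := by
      simpa using congrArg Subtype.val (LinearMap.congr_fun hk q)
    have e' : (q : J) + (k q).1 = (k q).2 := by
      rw [← ZModModule.sub_eq_add, ← e]; abel
    simp [e']
  obtain ⟨δ, hδ⟩ := hδ
  have hδ2 := fun q => (hδ q).1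
  have hδ3 := fun q => (hδ q).2
  have dec1 : ∀ v ∈ V1, v ∈ V2 ⊔ V3 → ∃ d ∈ D, ∃ q : Q, v = d + q := by
    intro v hv hv'
    obtain ⟨d, hd, q, hq, rfl⟩ := hQs v ⟨hv, hv'⟩
    exact ⟨d, hd, ⟨q, hq⟩, rfl⟩
  have dec2 : ∀ v ∈ V2, v ∈ V1 ⊔ V3 → ∃ d ∈ D, ∃ q : Q, v = d + δ q := by
    intro v hv hv'
    obtain ⟨v1, hv1, v3, hv3, rfl⟩ := Submodule.mem_sup.1 hv'
    obtain ⟨d, hd, q, rfl⟩ := dec1 v1 hv1 (Submodule.mem_sup.2 ⟨_, hv, -v3, V3.neg_mem hv3,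
      by abel⟩)
    have e : d + (q : J) + v3 - δ q = d + (q + δ q) + v3 := by
      rw [ZModModule.sub_eq_add]; abel
    have m2 : d + (q : J) + v3 - δ q ∈ V2 := V2.sub_mem hv (hδ2 q)
    have m3 : d + (q : J) + v3 - δ q ∈ V3 := by
      rw [e]; exact V3.add_mem (V3.add_mem (hD3 hd) (hδ3 q)) hv3
    exact ⟨_, ⟨h23 _ m2 m3, m2⟩, q, by abel⟩
  have dec3 : ∀ v ∈ V3, v ∈ V1 ⊔ V2 → ∃ d ∈ D, ∃ q : Q, v = d + (q + δ q) := by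
    intro v hv hv'
    obtain ⟨v1, hv1, v2, hv2, rfl⟩ := Submodule.mem_sup.1 hv'
    obtain ⟨d, hd, q, rfl⟩ := dec1 v1 hv1 (Submodule.mem_sup.2 ⟨-v2, V2.neg_mem hv2, _, hv,
      by abel⟩)
    have e : d + (q : J) + v2 - (q + δ q) = d + v2 - δ q := by abel
    have m3 : d + (q : J) + v2 - (q + δ q) ∈ V3 := V3.sub_mem hv (hδ3 q)
    have m2 : d + (q : J) + v2 - (q + δ q) ∈ V2 := by
      rw [e]; exact V2.sub_mem (V2.add_mem (hD2 hd) hv2) (hδ2 q)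
    exact ⟨_, ⟨h23 _ m2 m3, m2⟩, q, by abel⟩
  refine ⟨U', Q, L1, L2, L3, L4, δ, hU'D.trans hD1, hU'D.trans hD2, hQ.trans inf_le_left, hδ2,
    hδ3, hL1, hL2, hL3, hL4, ?_, ?_, ?_, ?_, ?_⟩
  · intro v hv
    obtain ⟨a, ha, l, hl, rfl⟩ := hL1s v hv
    obtain ⟨d, hd, q, rfl⟩ := dec1 a ha.1 ha.2
    obtain ⟨u, hu, u', hu', rfl⟩ := hU's d hd
    exact ⟨u, hu, u', hu', q, l, hl, rfl⟩
  · intro v hv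
    obtain ⟨a, ha, l, hl, rfl⟩ := hL2s v hv
    obtain ⟨d, hd, q, rfl⟩ := dec2 a ha.1 ha.2
    obtain ⟨u, hu, u', hu', rfl⟩ := hU's d hd
    exact ⟨u, hu, u', hu', q, l, hl, rfl⟩
  · intro v hv
    obtain ⟨a, ha, l, hl, rfl⟩ := hL3s v hv
    obtain ⟨d, hd, q, rfl⟩ := dec3 a ha.1 ha.2
    obtain ⟨u, hu, u', hu', rfl⟩ := hU's d hd
    exact ⟨u, hu, u', hu', q, l, hl, rfl⟩
  · intro s hs
    obtain ⟨a, ha, l, hl, rfl⟩ := hL4s s hs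
    obtain ⟨z, hz, v, hv, rfl⟩ := Submodule.mem_sup.1 ha
    obtain ⟨v', hv', v3, hv3, rfl⟩ := Submodule.mem_sup.1 hv
    obtain ⟨v1, hv1, v2, hv2, rfl⟩ := Submodule.mem_sup.1 hv'
    exact ⟨z, hz, v1, hv1, v2, hv2, v3, hv3, l, hl, by abel⟩
  · intro z hz u hu u' hu' q1 q2 l1 hl1 l2 hl2 l3 hl3 l4 hl4 h
    have mu' := hU'D hu'
    have mq1 := (hQ q1.2).1
    have c1 : u + u' + q1 + l1 ∈ V1 :=
      V1.add_mem (V1.add_mem (V1.add_mem (hU1 hu) mu'.1) mq1) (hL1 hl1)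
    have c2 : δ q2 + l2 ∈ V2 := V2.add_mem (hδ2 q2) (hL2 hl2)
    have hl40 : l4 = 0 := by
      apply hL40 l4 hl4
      have : l4 = (-z) + (-(u + u' + q1 + l1) + -(δ q2 + l2) + -l3) := by
        linear_combination (norm := abel) h
      rw [this]
      exact Submodule.add_mem_sup (Z.neg_mem hz) (Submodule.add_mem_sup
        (Submodule.add_mem_sup (V1.neg_mem c1) (V2.neg_mem c2)) (V3.neg_mem (hL3 hl3)))
    subst hl40
    have hz0 : z = 0 := by
      apply hZ z hz _ (V1.neg_mem c1) _ (V2.neg_mem c2) _ (V3.neg_mem (hL3 hl3))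
      linear_combination (norm := abel) h
    subst hz0
    have hl30 : l3 = 0 := by
      apply hL30 l3 hl3 ⟨hL3 hl3, _⟩
      have : l3 = -(u + u' + q1 + l1) + -(δ q2 + l2) := by
        linear_combination (norm := abel) h
      rw [this]
      exact Submodule.add_mem_sup (V1.neg_mem c1) (V2.neg_mem c2)
    subst hl30
    have hl20 : l2 = 0 := by
      apply hL20 l2 hl2 ⟨hL2 hl2, _⟩
      have : l2 = -(u + u' + q1 + l1 - q2) + -(q2 + δ q2) := by
        linear_combination (norm := abel) h
      rw [this]
      exact Submodule.add_mem_sup (V1.neg_mem (V1.sub_mem c1 (hQ q2.2).1))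
        (V3.neg_mem (hδ3 q2))
    subst hl20
    have hl10 : l1 = 0 := by
      apply hL10 l1 hl1 ⟨hL1 hl1, _⟩
      have : l1 = -(u + u' + δ q2) + -q1 := by
        linear_combination (norm := abel) h
      rw [this]
      exact Submodule.add_mem _ (Submodule.mem_sup_left (V2.neg_mem (V2.add_mem
        (V2.add_mem (hU2 hu) mu'.2) (hδ2 q2)))) (Submodule.neg_mem _ (hQ q1.2).2)
    subst hl10
    have hq1 : (q1 : J) = 0 := by
      apply hQ0 q1 q1.2 ⟨mq1, _⟩
      have : (q1 : J) = -(u + u' + δ q2) := by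
        linear_combination (norm := abel) h
      rw [this]
      exact V2.neg_mem (V2.add_mem (V2.add_mem (hU2 hu) mu'.2) (hδ2 q2))
    have hq2 : (q2 : J) = 0 := by
      apply hQ0 q2 q2.2 ⟨(hQ q2.2).1, h13 _ (hQ q2.2).1 _⟩
      have : (q2 : J) = (q2 + δ q2) + (u + u') := by
        linear_combination (norm := abel) hq1 - h
      rw [this]
      exact V3.add_mem (hδ3 q2) (V3.add_mem (h12 _ (hU1 hu) (hU2 hu)) (hD3 mu'))
    have hq1' : q1 = 0 := Subtype.ext hq1
    have hq2' : q2 = 0 := Subtype.ext hq2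
    subst hq1' hq2'
    have h' : u + u' = 0 := by simpa using h
    have hu'0 : u' = 0 := by
      apply hU'0 u' hu'
      rw [← neg_eq_of_add_eq_zero_right h']
      exact U.neg_mem hu
    subst hu'0
    simpa using h'

end LinearAlgebra

/-! ### Homomorphisms out of the standard modules -/

section Coordinates

/-- An `𝔽₂`-basis of `M` and a basis of `B` identify `⊕_I M` with `Bⁿ = B ⊗ M`. -/
lemma exists_directSum_coord {n : ℕ} {M : Type} [AddCommGroup M]
    (c : M ≃+ (Fin n → ZMod 2)) {I B : Type} [DecidableEq I] [AddCommGroup B]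
    [Module (ZMod 2) B] (b : Module.Basis I (ZMod 2) B) :
    ∃ e : DirectSum I (fun _ => M) ≃+ (Fin n → B),
      ∀ i m k, e (DirectSum.of (fun _ => M) i m) k = c m k • b i := by
  classical
  have h2 : ∀ m : M, 2 • m = 0 := fun m => c.injective (by
    rw [map_nsmul, map_zero, two_nsmul, ZModModule.add_self])
  let _ : Module (ZMod 2) M := AddCommGroup.zmodModule h2
  let toF : DirectSum I (fun _ => M) →+ (Fin n → B) :=
    DirectSum.toAddMonoid fun i =>
      { toFun := fun m k => c m k • b i
        map_zero' := by ext k; simp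
        map_add' := fun m m' => by ext k; simp [add_smul] }
  have htoF : ∀ i m k, toF (DirectSum.of (fun _ => M) i m) k = c m k • b i := by
    intro i m k
    simp [toF]
  let g : Fin n → B →ₗ[ZMod 2] DirectSum I (fun _ => M) := fun k =>
    b.constr (ZMod 2) fun i => DirectSum.of (fun _ => M) i (c.symm (Pi.single k 1))
  let inv : (Fin n → B) →ₗ[ZMod 2] DirectSum I (fun _ => M) :=
    ∑ k, g k ∘ₗ LinearMap.proj k
  have hinv : ∀ p, inv p = ∑ k, g k (p k) := fun p => by simp [inv]
  have hl : inv.toAddMonoidHom.comp toF = AddMonoidHom.id _ := by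
    refine DirectSum.addHom_ext fun i m => ?_
    have e1 : ∀ k, g k (c m k • b i) =
        DirectSum.of (fun _ => M) i (c.symm (Pi.single k (c m k))) := by
      intro k
      rcases (by decide : ∀ t : ZMod 2, t = 0 ∨ t = 1) (c m k) with h | h <;>
        simp [h, g]
    change inv (toF _) = _
    rw [hinv]
    simp only [htoF, e1, AddMonoidHom.id_apply]
    rw [← map_sum, ← map_sum, Finset.univ_sum_single, c.symm_apply_apply]
  have hr : toF.toZModLinearMap 2 ∘ₗ inv = LinearMap.id := by
    refine LinearMap.pi_ext' fun k => b.ext fun i => ?_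
    ext l
    simp only [LinearMap.comp_apply, AddMonoidHom.coe_toZModLinearMap, hinv,
      LinearMap.coe_single, LinearMap.id_apply]
    rw [Finset.sum_eq_single k (fun l _ hl => by simp [hl]) (by simp)]
    simp only [g, Pi.single_eq_same, Module.Basis.constr_basis, htoF, c.apply_symm_apply]
    by_cases h : l = k
    · subst h; simp
    · simp [h]
  refine ⟨{ toF with
    invFun := inv
    left_inv := fun f => DFunLike.congr_fun hl f
    right_inv := fun p => LinearMap.congr_fun hr p }, htoF⟩

/-- Equivariant maps `⊕_I M → J` from linear data: if `σ1, σ2` act on `M` through the matrices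
`1 + N1`, `1 + N2`, then linear maps `g k : B → J` satisfying the same relations assemble to an
equivariant map, `I` being the index set of a basis of `B`. -/
lemma exists_dsum_hom {n : ℕ} (M : GMod) (c : M.carrier ≃+ (Fin n → ZMod 2))
    (N1 N2 : Fin n → Fin n → ZMod 2)
    (h1 : ∀ m k, c (M.s1 m) k = c m k + ∑ l, N1 k l • c m l)
    (h2 : ∀ m k, c (M.s2 m) k = c m k + ∑ l, N2 k l • c m l)
    {J B : Type} [AddCommGroup J] [Module (ZMod 2) J] [AddCommGroup B] [Module (ZMod 2) B]
    (x y : J →ₗ[ZMod 2] J) (g : Fin n → B →ₗ[ZMod 2] J)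
    (hx : ∀ l b, x (g l b) = ∑ k, N1 k l • g k b)
    (hy : ∀ l b, y (g l b) = ∑ k, N2 k l • g k b) :
    ∃ (I : Type) (φ : (M.dsum I).carrier →+ J) (e : (M.dsum I).carrier ≃+ (Fin n → B)),
      (∀ f, φ ((M.dsum I).s1 f) = φ f + x (φ f)) ∧
      (∀ f, φ ((M.dsum I).s2 f) = φ f + y (φ f)) ∧ ∀ f, φ f = ∑ k, g k (e f k) := by
  classical
  obtain ⟨e, he⟩ := exists_directSum_coord c (Module.Basis.ofVectorSpace (ZMod 2) B)
  have key : ∀ (N : Fin n → Fin n → ZMod 2) (s : M.carrier ≃+ M.carrier)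
      (hs : ∀ m k, c (s m) k = c m k + ∑ l, N k l • c m l)
      (f : DirectSum _ fun _ => M.carrier) (k : Fin n),
      e ((DFinsupp.mapRange.addEquiv fun _ => s) f) k =
        e f k + ∑ l, N k l • e f l := by
    intro N s hs f k
    induction f using DirectSum.induction_on with
    | zero =>
      have : (DFinsupp.mapRange.addEquiv fun _ => s)
        (0 : DirectSum (Module.Basis.ofVectorSpaceIndex (ZMod 2) B) fun _ => M.carrier) = 0 :=
        map_zero _
      rw [this]; simp
    | of i m =>
      have : (DFinsupp.mapRange.addEquiv fun _ => s)
          (DirectSum.of (fun _ : Module.Basis.ofVectorSpaceIndex (ZMod 2) B => M.carrier) i m) =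
          DirectSum.of (fun _ => M.carrier) i (s m) := by
        exact DFinsupp.mapRange_single (hf := fun _ => map_zero s)
      rw [this]
      simp only [he, hs, add_smul, Finset.sum_smul, smul_assoc]
    | add f f' hf hf' =>
      have : (DFinsupp.mapRange.addEquiv fun _ => s) (f + f') =
        (DFinsupp.mapRange.addEquiv fun _ => s) f + (DFinsupp.mapRange.addEquiv fun _ => s) f' :=
        map_add _ _ _
      rw [this, map_add, Pi.add_apply, hf, hf', map_add]
      simp only [Pi.add_apply, smul_add, Finset.sum_add_distrib]
      abel
  have key2 : ∀ (N : Fin n → Fin n → ZMod 2) (z : J →ₗ[ZMod 2] J)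
      (hz : ∀ l b, z (g l b) = ∑ k, N k l • g k b) (p : Fin n → B),
      ∑ k, g k (p k + ∑ l, N k l • p l) = ∑ k, g k (p k) + z (∑ k, g k (p k)) := by
    intro N z hz p
    simp only [map_add, map_sum, map_smul, Finset.sum_add_distrib, hz]
    rw [Finset.sum_comm]
  let ψ : (Fin n → B) →ₗ[ZMod 2] J := ∑ k, g k ∘ₗ LinearMap.proj k
  have hψ : ∀ p, ψ p = ∑ k, g k (p k) := fun p => by simp [ψ]
  refine ⟨Module.Basis.ofVectorSpaceIndex (ZMod 2) B,
    ψ.toAddMonoidHom.comp e.toAddMonoidHom, e, fun f => ?_, fun f => ?_, fun f => hψ _⟩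
  · change ψ (e _) = ψ (e f) + x (ψ (e f))
    rw [hψ, hψ, ← key2 N1 x hx]
    exact Finset.sum_congr rfl fun k _ => congrArg _ (key N1 M.s1 h1 f k)
  · change ψ (e _) = ψ (e f) + y (ψ (e f))
    rw [hψ, hψ, ← key2 N2 y hy]
    exact Finset.sum_congr rfl fun k _ => congrArg _ (key N2 M.s2 h2 f k)

/-- Coordinates on `𝔽₂[G]` with respect to the basis `1, 1 + σ1, 1 + σ2, (1 + σ1)(1 + σ2)`. -/
def c0 : (ZMod 2 × ZMod 2 → ZMod 2) ≃+ (Fin 4 → ZMod 2) where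
  toFun f :=
    ![f (0, 0) + f (1, 0) + f (0, 1) + f (1, 1), f (1, 0) + f (1, 1), f (0, 1) + f (1, 1),
      f (1, 1)]
  invFun p := fun u => if u = (0, 0) then p 0 + p 1 + p 2 + p 3 else
    if u = (1, 0) then p 1 + p 3 else if u = (0, 1) then p 2 + p 3 else p 3
  left_inv := by decide
  right_inv := by decide
  map_add' f g := by
    funext k
    fin_cases k <;> simp <;> abel

/-- Coordinates on `𝔽₂[ℤ/2ℤ]` with respect to the basis `1, 1 + σ`. -/
def cReg : (ZMod 2 → ZMod 2) ≃+ (Fin 2 → ZMod 2) where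
  toFun f := ![f 0 + f 1, f 1]
  invFun p := fun u => if u = 0 then p 0 + p 1 else p 1
  left_inv := by decide
  right_inv := by decide
  map_add' f g := by
    funext k
    fin_cases k <;> simp <;> abel

/-- Coordinates on `Ω¹` with respect to the basis `a, b, c`. -/
def cO1 : o1Mod.carrier ≃+ (Fin 3 → ZMod 2) where
  toFun := fun p : ZMod 2 × ZMod 2 × ZMod 2 => ![p.1, p.2.1, p.2.2]
  invFun p := (p 0, p 1, p 2)
  left_inv p := rfl
  right_inv p := by funext k; fin_cases k <;> rfl
  map_add' p q := by funext k; fin_cases k <;> rfl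

/-- Coordinates on `Ω²` with respect to the basis `a, b, c, d, e`. -/
def cO2 : o2Mod.carrier ≃+ (Fin 5 → ZMod 2) where
  toFun := fun p : ZMod 2 × ZMod 2 × ZMod 2 × ZMod 2 × ZMod 2 =>
    ![p.1, p.2.1, p.2.2.1, p.2.2.2.1, p.2.2.2.2]
  invFun p := (p 0, p 1, p 2, p 3, p 4)
  left_inv p := rfl
  right_inv p := by funext k; fin_cases k <;> rfl
  map_add' p q := by funext k; fin_cases k <;> rfl

variable {J B : Type} [AddCommGroup J] [Module (ZMod 2) J] [AddCommGroup B] [Module (ZMod 2) B]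
  (x y : J →ₗ[ZMod 2] J)

lemma exists_hom_fg0 (hxx : ∀ j, x (x j) = 0) (hyy : ∀ j, y (y j) = 0)
    (hxy : ∀ j, y (x j) = x (y j)) (κ : B →ₗ[ZMod 2] J) :
    ∃ (I : Type) (φ : (fg0Mod.dsum I).carrier →+ J)
      (e : (fg0Mod.dsum I).carrier ≃+ (Fin 4 → B)),
      (∀ f, φ ((fg0Mod.dsum I).s1 f) = φ f + x (φ f)) ∧
      (∀ f, φ ((fg0Mod.dsum I).s2 f) = φ f + y (φ f)) ∧
      ∀ f, φ f = κ (e f 0) + x (κ (e f 1)) + y (κ (e f 2)) + x (y (κ (e f 3))) := by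
  obtain ⟨I, φ, e, h1, h2, h⟩ := exists_dsum_hom fg0Mod c0
    ![![0, 0, 0, 0], ![1, 0, 0, 0], ![0, 0, 0, 0], ![0, 0, 1, 0]]
    ![![0, 0, 0, 0], ![0, 0, 0, 0], ![1, 0, 0, 0], ![0, 1, 0, 0]]
    (by change ∀ f : ZMod 2 × ZMod 2 → ZMod 2, _; decide)
    (by change ∀ f : ZMod 2 × ZMod 2 → ZMod 2, _; decide)
    x y ![κ, x ∘ₗ κ, y ∘ₗ κ, x ∘ₗ y ∘ₗ κ]
    (by intro l b; fin_cases l <;> simp [Fin.sum_univ_succ, hxx])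
    (by intro l b; fin_cases l <;> simp [Fin.sum_univ_succ, hyy, hxy])
  exact ⟨I, φ, e, h1, h2, fun f => by simp [h, Fin.sum_univ_succ, add_assoc]⟩

lemma exists_hom_fg1 (β lam : B →ₗ[ZMod 2] J) (hβx : ∀ b, x (β b) = 0) (hβy : ∀ b, y (β b) = 0)
    (hx : ∀ b, x (lam b) = β b) (hy : ∀ b, y (lam b) = 0) :
    ∃ (I : Type) (φ : (fg1Mod.dsum I).carrier →+ J)
      (e : (fg1Mod.dsum I).carrier ≃+ (Fin 2 → B)),
      (∀ f, φ ((fg1Mod.dsum I).s1 f) = φ f + x (φ f)) ∧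
      (∀ f, φ ((fg1Mod.dsum I).s2 f) = φ f + y (φ f)) ∧
      ∀ f, φ f = lam (e f 0) + β (e f 1) := by
  obtain ⟨I, φ, e, h1, h2, h⟩ := exists_dsum_hom fg1Mod cReg
    ![![0, 0], ![1, 0]] ![![0, 0], ![0, 0]]
    (by change ∀ f : ZMod 2 → ZMod 2, _; decide) (by change ∀ f : ZMod 2 → ZMod 2, _; decide)
    x y ![lam, β]
    (by intro l b; fin_cases l <;> simp [Fin.sum_univ_succ, hx, hβx])
    (by intro l b; fin_cases l <;> simp [Fin.sum_univ_succ, hy, hβy])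
  exact ⟨I, φ, e, h1, h2, fun f => by simp [h, Fin.sum_univ_succ]⟩

lemma exists_hom_fg2 (β lam : B →ₗ[ZMod 2] J) (hβx : ∀ b, x (β b) = 0) (hβy : ∀ b, y (β b) = 0)
    (hx : ∀ b, x (lam b) = 0) (hy : ∀ b, y (lam b) = β b) :
    ∃ (I : Type) (φ : (fg2Mod.dsum I).carrier →+ J)
      (e : (fg2Mod.dsum I).carrier ≃+ (Fin 2 → B)),
      (∀ f, φ ((fg2Mod.dsum I).s1 f) = φ f + x (φ f)) ∧
      (∀ f, φ ((fg2Mod.dsum I).s2 f) = φ f + y (φ f)) ∧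
      ∀ f, φ f = lam (e f 0) + β (e f 1) := by
  obtain ⟨I, φ, e, h1, h2, h⟩ := exists_dsum_hom fg2Mod cReg
    ![![0, 0], ![0, 0]] ![![0, 0], ![1, 0]]
    (by change ∀ f : ZMod 2 → ZMod 2, _; decide) (by change ∀ f : ZMod 2 → ZMod 2, _; decide)
    x y ![lam, β]
    (by intro l b; fin_cases l <;> simp [Fin.sum_univ_succ, hx, hβx])
    (by intro l b; fin_cases l <;> simp [Fin.sum_univ_succ, hy, hβy])
  exact ⟨I, φ, e, h1, h2, fun f => by simp [h, Fin.sum_univ_succ]⟩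

lemma exists_hom_fg3 (β lam : B →ₗ[ZMod 2] J) (hβx : ∀ b, x (β b) = 0) (hβy : ∀ b, y (β b) = 0)
    (hx : ∀ b, x (lam b) = β b) (hy : ∀ b, y (lam b) = β b) :
    ∃ (I : Type) (φ : (fg3Mod.dsum I).carrier →+ J)
      (e : (fg3Mod.dsum I).carrier ≃+ (Fin 2 → B)),
      (∀ f, φ ((fg3Mod.dsum I).s1 f) = φ f + x (φ f)) ∧
      (∀ f, φ ((fg3Mod.dsum I).s2 f) = φ f + y (φ f)) ∧
      ∀ f, φ f = lam (e f 0) + β (e f 1) := by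
  obtain ⟨I, φ, e, h1, h2, h⟩ := exists_dsum_hom fg3Mod cReg
    ![![0, 0], ![1, 0]] ![![0, 0], ![1, 0]]
    (by change ∀ f : ZMod 2 → ZMod 2, _; decide) (by change ∀ f : ZMod 2 → ZMod 2, _; decide)
    x y ![lam, β]
    (by intro l b; fin_cases l <;> simp [Fin.sum_univ_succ, hx, hβx])
    (by intro l b; fin_cases l <;> simp [Fin.sum_univ_succ, hy, hβy])
  exact ⟨I, φ, e, h1, h2, fun f => by simp [h, Fin.sum_univ_succ]⟩

lemma exists_hom_f2 (β : B →ₗ[ZMod 2] J) (hβx : ∀ b, x (β b) = 0) (hβy : ∀ b, y (β b) = 0) :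
    ∃ (I : Type) (φ : (f2Mod.dsum I).carrier →+ J)
      (e : (f2Mod.dsum I).carrier ≃+ (Fin 1 → B)),
      (∀ f, φ ((f2Mod.dsum I).s1 f) = φ f + x (φ f)) ∧
      (∀ f, φ ((f2Mod.dsum I).s2 f) = φ f + y (φ f)) ∧
      ∀ f, φ f = β (e f 0) := by
  obtain ⟨I, φ, e, h1, h2, h⟩ := exists_dsum_hom f2Mod
    (AddEquiv.piUnique fun _ : Fin 1 => ZMod 2).symm ![![0]] ![![0]]
    (by intro m k; simp; rfl) (by intro m k; simp; rfl) x y ![β]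
    (by intro l b; fin_cases l; simp [hβx]) (by intro l b; fin_cases l; simp [hβy])
  exact ⟨I, φ, e, h1, h2, fun f => by simp [h]⟩

lemma exists_hom_o1 (α β γ : B →ₗ[ZMod 2] J) (hβx : ∀ b, x (β b) = 0) (hβy : ∀ b, y (β b) = 0)
    (hαx : ∀ b, x (α b) = β b) (hαy : ∀ b, y (α b) = 0)
    (hγx : ∀ b, x (γ b) = 0) (hγy : ∀ b, y (γ b) = β b) :
    ∃ (I : Type) (φ : (o1Mod.dsum I).carrier →+ J)
      (e : (o1Mod.dsum I).carrier ≃+ (Fin 3 → B)),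
      (∀ f, φ ((o1Mod.dsum I).s1 f) = φ f + x (φ f)) ∧
      (∀ f, φ ((o1Mod.dsum I).s2 f) = φ f + y (φ f)) ∧
      ∀ f, φ f = α (e f 0) + β (e f 1) + γ (e f 2) := by
  obtain ⟨I, φ, e, h1, h2, h⟩ := exists_dsum_hom o1Mod cO1
    ![![0, 0, 0], ![1, 0, 0], ![0, 0, 0]] ![![0, 0, 0], ![0, 0, 1], ![0, 0, 0]]
    (by change ∀ m : ZMod 2 × ZMod 2 × ZMod 2, _; decide)
    (by change ∀ m : ZMod 2 × ZMod 2 × ZMod 2, _; decide)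
    x y ![α, β, γ]
    (by intro l b; fin_cases l <;> simp [Fin.sum_univ_succ, hαx, hβx, hγx])
    (by intro l b; fin_cases l <;> simp [Fin.sum_univ_succ, hαy, hβy, hγy])
  exact ⟨I, φ, e, h1, h2, fun f => by simp [h, Fin.sum_univ_succ, add_assoc]⟩

lemma exists_hom_o2 (a b c d e : B →ₗ[ZMod 2] J)
    (hbx : ∀ v, x (b v) = 0) (hby : ∀ v, y (b v) = 0)
    (hdx : ∀ v, x (d v) = 0) (hdy : ∀ v, y (d v) = 0)
    (hax : ∀ v, x (a v) = b v) (hay : ∀ v, y (a v) = 0)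
    (hcx : ∀ v, x (c v) = d v) (hcy : ∀ v, y (c v) = b v)
    (hex : ∀ v, x (e v) = 0) (hey : ∀ v, y (e v) = d v) :
    ∃ (I : Type) (φ : (o2Mod.dsum I).carrier →+ J)
      (ε : (o2Mod.dsum I).carrier ≃+ (Fin 5 → B)),
      (∀ f, φ ((o2Mod.dsum I).s1 f) = φ f + x (φ f)) ∧
      (∀ f, φ ((o2Mod.dsum I).s2 f) = φ f + y (φ f)) ∧
      ∀ f, φ f = a (ε f 0) + b (ε f 1) + c (ε f 2) + d (ε f 3) + e (ε f 4) := by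
  obtain ⟨I, φ, ε, h1, h2, h⟩ := exists_dsum_hom o2Mod cO2
    ![![0, 0, 0, 0, 0], ![1, 0, 0, 0, 0], ![0, 0, 0, 0, 0], ![0, 0, 1, 0, 0], ![0, 0, 0, 0, 0]]
    ![![0, 0, 0, 0, 0], ![0, 0, 1, 0, 0], ![0, 0, 0, 0, 0], ![0, 0, 0, 0, 1], ![0, 0, 0, 0, 0]]
    (by change ∀ m : ZMod 2 × ZMod 2 × ZMod 2 × ZMod 2 × ZMod 2, _; decide)
    (by change ∀ m : ZMod 2 × ZMod 2 × ZMod 2 × ZMod 2 × ZMod 2, _; decide)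
    x y ![a, b, c, d, e]
    (by intro l v; fin_cases l <;> simp [Fin.sum_univ_succ, hax, hbx, hcx, hdx, hex])
    (by intro l v; fin_cases l <;> simp [Fin.sum_univ_succ, hay, hby, hcy, hdy, hey])
  exact ⟨I, φ, ε, h1, h2, fun f => by simp [h, Fin.sum_univ_succ, add_assoc]⟩

end Coordinates

/-! ### The decomposition of a module from its socle -/

section Decomposition

lemma nonempty_gmodIso_of_bijective {M N : GMod} (φ : N.carrier →+ M.carrier)
    (h1 : ∀ n, φ (N.s1 n) = M.s1 (φ n)) (h2 : ∀ n, φ (N.s2 n) = M.s2 (φ n))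
    (hφ : ∀ n, φ n = 0 → n = 0) (hφ' : ∀ m, ∃ n, φ n = m) : Nonempty (GModIso M N) := by
  let e := AddEquiv.ofBijective φ ⟨(injective_iff_map_eq_zero φ).2 hφ, hφ'⟩
  have he : ∀ n, e n = φ n := fun _ => rfl
  refine ⟨⟨e.symm, fun m => ?_, fun m => ?_⟩⟩
  · rw [AddEquiv.symm_apply_eq, he, h1, ← he, AddEquiv.apply_symm_apply]
  · rw [AddEquiv.symm_apply_eq, he, h2, ← he, AddEquiv.apply_symm_apply]

set_option maxHeartbeats 2000000 in
/-- Let `X` be a module killed by `xy` (where `x = 1 + σ1`, `y = 1 + σ2`) that maps to `M` by `ι`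
so that the socle of `X` is embedded independently of `x (ker y) + y (ker x) + x (ker (x + y))`.
If every element of `M` killed by `xy` is the sum of an element of `ι X` and of elements killed by
`y`, `x` and `x + y`, then `M` is the direct sum of `X` and of modules of the seven types
`𝔽₂[Ḡ0], …, 𝔽₂[Ḡ4], Ω¹, Ω²`.  The summands are read off from the position of the three subspaces
`x (ker y)`, `y (ker x)`, `x (ker (x + y))` in the socle of `M`. -/
theorem exists_decomposition (M : GMod) [Module (ZMod 2) M.carrier]
    (x y : M.carrier →ₗ[ZMod 2] M.carrier)
    (hs1 : ∀ j, M.s1 j = j + x j) (hs2 : ∀ j, M.s2 j = j + y j)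
    (hxx : ∀ j, x (x j) = 0) (hyy : ∀ j, y (y j) = 0) (hxy : ∀ j, y (x j) = x (y j))
    (X : GMod) (ι : X.carrier →+ M.carrier)
    (hι1 : ∀ ξ, ι (X.s1 ξ) = ι ξ + x (ι ξ)) (hι2 : ∀ ξ, ι (X.s2 ξ) = ι ξ + y (ι ξ))
    (hιxy : ∀ ξ, x (y (ι ξ)) = 0)
    (hinj : ∀ ξ e1 e2 e3, x (ι ξ) = 0 → y (ι ξ) = 0 → y e1 = 0 → x e2 = 0 → x e3 = y e3 →
      ι ξ = x e1 + y e2 + x e3 → ξ = 0)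
    (hgen : ∀ j, x (y j) = 0 → ∃ ξ e1 e2 e3, y e1 = 0 ∧ x e2 = 0 ∧ x e3 = y e3 ∧
      j = ι ξ + e1 + e2 + e3) :
    ∃ I0 I1 I2 I3 I4 I5 I6 : Type,
      Nonempty (GModIso M
        (X.prod ((fg0Mod.dsum I0).prod ((fg1Mod.dsum I1).prod ((fg2Mod.dsum I2).prod
          ((fg3Mod.dsum I3).prod ((f2Mod.dsum I4).prod
            ((o1Mod.dsum I5).prod (o2Mod.dsum I6))))))))) := by
  let J := M.carrier
  let S : Submodule (ZMod 2) J := LinearMap.ker x ⊓ LinearMap.ker y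
  let U : Submodule (ZMod 2) J := LinearMap.range (x ∘ₗ y)
  let V1 : Submodule (ZMod 2) J := (LinearMap.ker y).map x
  let V2 : Submodule (ZMod 2) J := (LinearMap.ker x).map y
  let V3 : Submodule (ZMod 2) J := (LinearMap.ker (x - y)).map x
  let Z : Submodule (ZMod 2) J := AddSubgroup.toZModSubmodule 2 ι.range ⊓ S
  have mS : ∀ {j}, j ∈ S ↔ x j = 0 ∧ y j = 0 := fun {j} => Iff.rfl
  have mV1 : ∀ {v}, v ∈ V1 ↔ ∃ e, y e = 0 ∧ x e = v := fun {v} => Iff.rfl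
  have mV2 : ∀ {v}, v ∈ V2 ↔ ∃ e, x e = 0 ∧ y e = v := fun {v} => Iff.rfl
  have mV3 : ∀ {v}, v ∈ V3 ↔ ∃ e, x e = v ∧ y e = v := by
    intro v
    constructor
    · rintro ⟨e, he, rfl⟩
      have he' : x e - y e = 0 := he
      exact ⟨e, rfl, (sub_eq_zero.1 he').symm⟩
    · rintro ⟨e, h1, h2⟩
      exact ⟨e, show x e - y e = 0 by rw [h1, h2, sub_self], h1⟩
  have h1S : V1 ≤ S := by
    rintro _ ⟨e, he, rfl⟩
    have he' : y e = 0 := he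
    exact mS.2 ⟨hxx e, by rw [hxy, he', map_zero]⟩
  have h2S : V2 ≤ S := by
    rintro _ ⟨e, he, rfl⟩
    have he' : x e = 0 := he
    exact mS.2 ⟨by rw [← hxy, he', map_zero], hyy e⟩
  have h3S : V3 ≤ S := by
    intro v hv
    obtain ⟨e, h1, h2⟩ := mV3.1 hv
    exact mS.2 ⟨by rw [← h1, hxx], by rw [← h2, hyy]⟩
  have hU1 : U ≤ V1 := by
    rintro _ ⟨e, rfl⟩
    exact mV1.2 ⟨y e, hyy e, rfl⟩
  have hU2 : U ≤ V2 := by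
    rintro _ ⟨e, rfl⟩
    exact mV2.2 ⟨x e, hxx e, hxy e⟩
  have h12 : ∀ v ∈ V1, v ∈ V2 → v ∈ V3 := by
    intro v hv hv'
    obtain ⟨a, a1, a2⟩ := mV1.1 hv
    obtain ⟨c, c1, c2⟩ := mV2.1 hv'
    exact mV3.2 ⟨a + c, by simp [a2, c1], by simp [a1, c2]⟩
  have h13 : ∀ v ∈ V1, v ∈ V3 → v ∈ V2 := by
    intro v hv hv'
    obtain ⟨a, a1, a2⟩ := mV1.1 hv
    obtain ⟨c, c1, c2⟩ := mV3.1 hv'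
    exact mV2.2 ⟨c - a, by simp [a2, c1], by simp [a1, c2]⟩
  have h23 : ∀ v ∈ V2, v ∈ V3 → v ∈ V1 := by
    intro v hv hv'
    obtain ⟨a, a1, a2⟩ := mV2.1 hv
    obtain ⟨c, c1, c2⟩ := mV3.1 hv'
    exact mV1.2 ⟨c - a, by simp [a2, c2], by simp [a1, c1]⟩
  have hZ' : ∀ ξ, x (ι ξ) = 0 → y (ι ξ) = 0 → ∀ v1 ∈ V1, ∀ v2 ∈ V2, ∀ v3 ∈ V3,
      ι ξ = v1 + v2 + v3 → ξ = 0 := by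
    intro ξ hx hy v1 hv1 v2 hv2 v3 hv3 h
    obtain ⟨a, a1, rfl⟩ := mV1.1 hv1
    obtain ⟨b, b1, rfl⟩ := mV2.1 hv2
    obtain ⟨c, rfl, c2⟩ := mV3.1 hv3
    exact hinj ξ a b c hx hy a1 b1 c2.symm h
  have hZ0 : ∀ ξ, ι ξ ∈ Z → ι ξ = 0 → ξ = 0 := by
    intro ξ hξ h0
    exact hZ' ξ (mS.1 hξ.2).1 (mS.1 hξ.2).2 0 V1.zero_mem 0 V2.zero_mem 0 V3.zero_mem
      (by simpa using h0)
  have mZ : ∀ ξ, x (ι ξ) = 0 → y (ι ξ) = 0 → ι ξ ∈ Z := fun ξ h1 h2 => ⟨⟨ξ, rfl⟩, h1, h2⟩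
  have hZ : ∀ z ∈ Z, ∀ v1 ∈ V1, ∀ v2 ∈ V2, ∀ v3 ∈ V3, z = v1 + v2 + v3 → z = 0 := by
    rintro _ ⟨⟨ξ, rfl⟩, h1, h2⟩ v1 hv1 v2 hv2 v3 hv3 h
    rw [hZ' ξ h1 h2 v1 hv1 v2 hv2 v3 hv3 h, map_zero]
  obtain ⟨U', Q, L1, L2, L3, L4, δ, hU'1, hU'2, hQ1, hδ2, hδ3, hL1, hL2, hL3, hL4,
    sp1, sp2, sp3, spS, ind⟩ := exists_three_subspaces V1 V2 V3 S U Z h1S h2S h3S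
      inf_le_right hU1 hU2 h12 h13 h23 hZ
  -- Each summand is generated by preimages, chosen linearly, of a piece of the socle.
  obtain ⟨κ, hκ⟩ : ∃ κ : U →ₗ[ZMod 2] J, ∀ u, x (y (κ u)) = u := by
    obtain ⟨κ, hκ⟩ := exists_lift (x ∘ₗ y) (0 : J →ₗ[ZMod 2] J) U.subtype 0 (by
      rintro ⟨_, e, rfl⟩
      exact ⟨e, rfl, rfl⟩)
    exact ⟨κ, fun u => (hκ u).1⟩
  obtain ⟨lam1, hlam1⟩ := exists_lift x y L1.subtype 0 (fun b => by
    obtain ⟨e, e1, e2⟩ := mV1.1 (hL1 b.2)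
    exact ⟨e, e2, e1⟩)
  obtain ⟨lam2, hlam2⟩ := exists_lift x y 0 L2.subtype (fun b => mV2.1 (hL2 b.2))
  obtain ⟨lam3, hlam3⟩ := exists_lift x y L3.subtype L3.subtype (fun b => mV3.1 (hL3 b.2))
  obtain ⟨α, hα⟩ := exists_lift x y U'.subtype 0 (fun b => by
    obtain ⟨e, e1, e2⟩ := mV1.1 (hU'1 b.2)
    exact ⟨e, e2, e1⟩)
  obtain ⟨γ, hγ⟩ := exists_lift x y 0 U'.subtype (fun b => mV2.1 (hU'2 b.2))
  obtain ⟨qa, hqa⟩ := exists_lift x y Q.subtype 0 (fun b => by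
    obtain ⟨e, e1, e2⟩ := mV1.1 (hQ1 b.2)
    exact ⟨e, e2, e1⟩)
  obtain ⟨qe, hqe⟩ := exists_lift x y 0 δ (fun b => mV2.1 (hδ2 b))
  obtain ⟨qc, hqc⟩ := exists_lift x y δ Q.subtype (fun b => by
    obtain ⟨e, e1, e2⟩ := mV3.1 (hδ3 b)
    refine ⟨e + qa b + qe b, ?_, ?_⟩
    · rw [map_add, map_add, e1, (hqa b).1, (hqe b).1, Submodule.subtype_apply,
        LinearMap.zero_apply, add_zero, add_right_comm, ZModModule.add_self, zero_add]
    · rw [map_add, map_add, e2, (hqa b).2, (hqe b).2, Submodule.subtype_apply,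
        LinearMap.zero_apply, add_zero, add_assoc, ZModModule.add_self, add_zero])
  have hqd : ∀ q, x (δ q) = 0 ∧ y (δ q) = 0 := fun q => mS.1 (h2S (hδ2 q))
  have hqb : ∀ q : Q, x q = 0 ∧ y q = 0 := fun q => mS.1 (h1S (hQ1 q.2))
  have hu' : ∀ q : U', x q = 0 ∧ y q = 0 := fun q => mS.1 (h1S (hU'1 q.2))
  have hl1 : ∀ q : L1, x q = 0 ∧ y q = 0 := fun q => mS.1 (h1S (hL1 q.2))
  have hl2 : ∀ q : L2, x q = 0 ∧ y q = 0 := fun q => mS.1 (h2S (hL2 q.2))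
  have hl3 : ∀ q : L3, x q = 0 ∧ y q = 0 := fun q => mS.1 (h3S (hL3 q.2))
  have hl4 : ∀ q : L4, x q = 0 ∧ y q = 0 := fun q => mS.1 (hL4 q.2)
  simp only [Submodule.subtype_apply, LinearMap.zero_apply] at hlam1 hlam2 hlam3 hα hγ hqa hqe hqc
  obtain ⟨I0, φ0, e0, φ01, φ02, hφ0⟩ := exists_hom_fg0 x y hxx hyy hxy κ
  obtain ⟨I1, φ1, e1, φ11, φ12, hφ1⟩ := exists_hom_fg1 x y L1.subtype lam1
    (fun b => (hl1 b).1) (fun b => (hl1 b).2) (fun b => (hlam1 b).1) (fun b => (hlam1 b).2)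
  obtain ⟨I2, φ2, e2, φ21, φ22, hφ2⟩ := exists_hom_fg2 x y L2.subtype lam2
    (fun b => (hl2 b).1) (fun b => (hl2 b).2) (fun b => (hlam2 b).1) (fun b => (hlam2 b).2)
  obtain ⟨I3, φ3, e3, φ31, φ32, hφ3⟩ := exists_hom_fg3 x y L3.subtype lam3
    (fun b => (hl3 b).1) (fun b => (hl3 b).2) (fun b => (hlam3 b).1) (fun b => (hlam3 b).2)
  obtain ⟨I4, φ4, e4, φ41, φ42, hφ4⟩ := exists_hom_f2 x y L4.subtype
    (fun b => (hl4 b).1) (fun b => (hl4 b).2)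
  obtain ⟨I5, φ5, e5, φ51, φ52, hφ5⟩ := exists_hom_o1 x y α U'.subtype γ
    (fun b => (hu' b).1) (fun b => (hu' b).2) (fun b => (hα b).1) (fun b => (hα b).2)
    (fun b => (hγ b).1) (fun b => (hγ b).2)
  obtain ⟨I6, φ6, e6, φ61, φ62, hφ6⟩ := exists_hom_o2 x y qa Q.subtype qc δ qe
    (fun b => (hqb b).1) (fun b => (hqb b).2) (fun b => (hqd b).1) (fun b => (hqd b).2)
    (fun b => (hqa b).1) (fun b => (hqa b).2) (fun b => (hqc b).1) (fun b => (hqc b).2)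
    (fun b => (hqe b).1) (fun b => (hqe b).2)
  simp only [Submodule.subtype_apply] at hφ1 hφ2 hφ3 hφ4 hφ5 hφ6
  refine ⟨I0, I1, I2, I3, I4, I5, I6, nonempty_gmodIso_of_bijective
    (ι.coprod (φ0.coprod (φ1.coprod (φ2.coprod (φ3.coprod (φ4.coprod (φ5.coprod φ6)))))))
    ?_ ?_ ?_ ?_⟩
  · rintro ⟨ξ, f0, f1, f2, f3, f4, f5, f6⟩
    rw [hs1]
    change ι (X.s1 ξ) + (φ0 ((fg0Mod.dsum I0).s1 f0) + (φ1 ((fg1Mod.dsum I1).s1 f1) +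
      (φ2 ((fg2Mod.dsum I2).s1 f2) + (φ3 ((fg3Mod.dsum I3).s1 f3) +
      (φ4 ((f2Mod.dsum I4).s1 f4) + (φ5 ((o1Mod.dsum I5).s1 f5) +
      φ6 ((o2Mod.dsum I6).s1 f6))))))) = (ι ξ + (φ0 f0 + (φ1 f1 + (φ2 f2 + (φ3 f3 + (φ4 f4 +
      (φ5 f5 + φ6 f6))))))) + x (ι ξ + (φ0 f0 + (φ1 f1 + (φ2 f2 + (φ3 f3 + (φ4 f4 +
      (φ5 f5 + φ6 f6)))))))
    rw [hι1, φ01, φ11, φ21, φ31, φ41, φ51, φ61]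
    simp only [map_add]
    abel
  · rintro ⟨ξ, f0, f1, f2, f3, f4, f5, f6⟩
    rw [hs2]
    change ι (X.s2 ξ) + (φ0 ((fg0Mod.dsum I0).s2 f0) + (φ1 ((fg1Mod.dsum I1).s2 f1) +
      (φ2 ((fg2Mod.dsum I2).s2 f2) + (φ3 ((fg3Mod.dsum I3).s2 f3) +
      (φ4 ((f2Mod.dsum I4).s2 f4) + (φ5 ((o1Mod.dsum I5).s2 f5) +
      φ6 ((o2Mod.dsum I6).s2 f6))))))) = (ι ξ + (φ0 f0 + (φ1 f1 + (φ2 f2 + (φ3 f3 + (φ4 f4 +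
      (φ5 f5 + φ6 f6))))))) + y (ι ξ + (φ0 f0 + (φ1 f1 + (φ2 f2 + (φ3 f3 + (φ4 f4 +
      (φ5 f5 + φ6 f6)))))))
    rw [hι2, φ02, φ12, φ22, φ32, φ42, φ52, φ62]
    simp only [map_add]
    abel
  · rintro ⟨ξ, f0, f1, f2, f3, f4, f5, f6⟩ h
    replace h : ι ξ + (φ0 f0 + (φ1 f1 + (φ2 f2 + (φ3 f3 + (φ4 f4 +
      (φ5 f5 + φ6 f6)))))) = 0 := h
    rw [hφ0, hφ1, hφ2, hφ3, hφ4, hφ5, hφ6] at h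
    have hu : ∀ q : U, x q = 0 ∧ y q = 0 := fun q => mS.1 (h1S (hU1 q.2))
    -- Multiplication by `xy` leaves only the leading coefficient of the free part.  Applying `x`
    -- and `y` lands in the socle, where `ind` kills the coefficients they detect.  What remains
    -- of `h` is a relation in the socle itself.
    have k0 : e0 f0 0 = 0 := by
      have := congrArg (fun j => x (y j)) h
      simpa [hκ, hxx, hyy, hxy, hlam1, hlam2, hlam3, hα, hγ, hqa, hqe, hqc, hu', hl1, hl2, hl3,
        hl4, hqd, hqb, hιxy, hu] using this
    have kx := congrArg x h
    have ky := congrArg y h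
    simp only [map_add, map_zero, k0, hκ, hxx, hyy, hxy, hlam1, hlam2, hlam3, hα, hγ, hqa, hqe,
      hqc, hu', hl1, hl2, hl3, hl4, hqd, hqb, hu, add_zero, zero_add] at kx ky
    have i1 : ι (X.s1 ξ - ξ) = x (ι ξ) := by rw [map_sub, hι1]; abel
    have i2 : ι (X.s2 ξ - ξ) = y (ι ξ) := by rw [map_sub, hι2]; abel
    have m1 : x (ι ξ) ∈ Z := by
      rw [← i1]; exact mZ _ (by rw [i1, hxx]) (by rw [i1, hxy, hιxy])
    have m2 : y (ι ξ) ∈ Z := by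
      rw [← i2]; exact mZ _ (by rw [i2, hιxy]) (by rw [i2, hyy])
    obtain ⟨x1, x2, x3, x4, x5, x6, -, x8, -⟩ := ind _ m1 _ (e0 f0 2).2 _ (e5 f5 0).2 (e6 f6 0)
      (e6 f6 2) _ (e1 f1 0).2 0 L2.zero_mem _ (e3 f3 0).2 0 L4.zero_mem (Eq.trans (by abel) kx)
    obtain ⟨y1, y2, y3, -, y5, -, y7, y8, -⟩ := ind _ m2 _ (e0 f0 1).2 _ (e5 f5 2).2 (e6 f6 2)
      (e6 f6 4) 0 L1.zero_mem _ (e2 f2 0).2 _ (e3 f3 0).2 0 L4.zero_mem (Eq.trans (by abel) ky)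
    rw [ZeroMemClass.coe_eq_zero] at x2 x3 x6 x8 y2 y3 y7
    simp only [k0, x2, x3, x4, x5, x6, x8, y2, y3, y5, y7, map_zero, add_zero, zero_add, hκ] at h
    obtain ⟨z1, z2, z3, z4, z5, z6, z7, z8, z9⟩ := ind _ (mZ ξ x1 y1) _ (e0 f0 3).2
      _ (e5 f5 1).2 (e6 f6 1) (e6 f6 3) _ (e1 f1 1).2 _ (e2 f2 1).2 _ (e3 f3 1).2 _
      (e4 f4 0).2 (Eq.trans (by abel) h)
    rw [ZeroMemClass.coe_eq_zero] at z2 z3 z6 z7 z8 z9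
    have c0 : ξ = 0 := hZ0 ξ (mZ ξ x1 y1) z1
    have c1 : f0 = 0 := e0.injective (by ext k; fin_cases k <;> simp [*])
    have c2 : f1 = 0 := e1.injective (by ext k; fin_cases k <;> simp [*])
    have c3 : f2 = 0 := e2.injective (by ext k; fin_cases k <;> simp [*])
    have c4 : f3 = 0 := e3.injective (by ext k; fin_cases k <;> simp [*])
    have c5 : f4 = 0 := e4.injective (by ext k; fin_cases k; simp [*])
    have c6 : f5 = 0 := e5.injective (by ext k; fin_cases k <;> simp [*])
    have c7 : f6 = 0 := e6.injective (by ext k; fin_cases k <;> simp [*])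
    rw [c0, c1, c2, c3, c4, c5, c6, c7]
    rfl
  · let Φ : X.carrier × (fg0Mod.dsum I0).carrier × (fg1Mod.dsum I1).carrier ×
        (fg2Mod.dsum I2).carrier × (fg3Mod.dsum I3).carrier × (f2Mod.dsum I4).carrier ×
        (o1Mod.dsum I5).carrier × (o2Mod.dsum I6).carrier →+ J :=
      ι.coprod (φ0.coprod (φ1.coprod (φ2.coprod (φ3.coprod (φ4.coprod (φ5.coprod φ6))))))
    let R : AddSubgroup J := Φ.range
    suffices h : ∀ m, m ∈ R from h
    have rι : ∀ ξ, ι ξ ∈ R := fun ξ => ⟨(ξ, 0, 0, 0, 0, 0, 0, 0), by simp [Φ]⟩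
    have r0 : ∀ v : Fin 4 → U,
        κ (v 0) + x (κ (v 1)) + y (κ (v 2)) + x (y (κ (v 3))) ∈ R := fun v =>
      ⟨(0, e0.symm v, 0, 0, 0, 0, 0, 0), by simp [Φ, hφ0]⟩
    have r1 : ∀ v : Fin 2 → L1, lam1 (v 0) + v 1 ∈ R := fun v =>
      ⟨(0, 0, e1.symm v, 0, 0, 0, 0, 0), by simp [Φ, hφ1]⟩
    have r2 : ∀ v : Fin 2 → L2, lam2 (v 0) + v 1 ∈ R := fun v =>
      ⟨(0, 0, 0, e2.symm v, 0, 0, 0, 0), by simp [Φ, hφ2]⟩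
    have r3 : ∀ v : Fin 2 → L3, lam3 (v 0) + v 1 ∈ R := fun v =>
      ⟨(0, 0, 0, 0, e3.symm v, 0, 0, 0), by simp [Φ, hφ3]⟩
    have r4 : ∀ v : Fin 1 → L4, (v 0 : J) ∈ R := fun v =>
      ⟨(0, 0, 0, 0, 0, e4.symm v, 0, 0), by simp [Φ, hφ4]⟩
    have r5 : ∀ v : Fin 3 → U', α (v 0) + v 1 + γ (v 2) ∈ R := fun v =>
      ⟨(0, 0, 0, 0, 0, 0, e5.symm v, 0), by simp [Φ, hφ5]⟩
    have r6 : ∀ v : Fin 5 → Q, qa (v 0) + v 1 + qc (v 2) + δ (v 3) + qe (v 4) ∈ R := fun v =>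
      ⟨(0, 0, 0, 0, 0, 0, 0, e6.symm v), by simp [Φ, hφ6]⟩
    have rU : ∀ u ∈ U, u ∈ R := fun u hu => by
      simpa [hκ] using r0 ![0, 0, 0, ⟨u, hu⟩]
    have rU' : ∀ u ∈ U', u ∈ R := fun u hu => by simpa using r5 ![0, ⟨u, hu⟩, 0]
    have rQ : ∀ q : Q, (q : J) ∈ R := fun q => by simpa using r6 ![0, q, 0, 0, 0]
    have rδ : ∀ q : Q, δ q ∈ R := fun q => by simpa using r6 ![0, 0, 0, q, 0]
    have rS : ∀ s ∈ S, s ∈ R := by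
      intro s hs
      obtain ⟨z, ⟨⟨ξ, rfl⟩, -⟩, v1, hv1, v2, hv2, v3, hv3, l, hl, rfl⟩ := spS s hs
      obtain ⟨u, hu, u', hu', q, l1, hl1, rfl⟩ := sp1 v1 hv1
      obtain ⟨t, ht, t', ht', q', l2, hl2, rfl⟩ := sp2 v2 hv2
      obtain ⟨w, hw, w', hw', q'', l3, hl3, rfl⟩ := sp3 v3 hv3
      have i1 : l1 ∈ R := by simpa using r1 ![0, ⟨l1, hl1⟩]
      have i2 : l2 ∈ R := by simpa using r2 ![0, ⟨l2, hl2⟩]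
      have i3 : l3 ∈ R := by simpa using r3 ![0, ⟨l3, hl3⟩]
      have i4 : l ∈ R := r4 ![⟨l, hl⟩]
      refine R.add_mem (R.add_mem (R.add_mem (R.add_mem (rι ξ) ?_) ?_) ?_) i4
      · exact R.add_mem (R.add_mem (R.add_mem (rU u hu) (rU' u' hu')) (rQ q)) i1
      · exact R.add_mem (R.add_mem (R.add_mem (rU t ht) (rU' t' ht')) (rδ q')) i2
      · exact R.add_mem (R.add_mem (R.add_mem (rU w hw) (rU' w' hw'))
          (R.add_mem (rQ q'') (rδ q''))) i3
    -- The range contains the socle, so membership of `j` only depends on `x j` and `y j`.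
    have key : ∀ j r : J, r ∈ R → x j = x r → y j = y r → j ∈ R := by
      intro j r hr h1 h2
      have := R.add_mem (rS (j - r) (mS.2 ⟨by rw [map_sub, h1, sub_self],
        by rw [map_sub, h2, sub_self]⟩)) hr
      rwa [sub_add_cancel] at this
    have rk1 : ∀ j, y j = 0 → j ∈ R := by
      intro j hj
      obtain ⟨u, hu, u', hu', q, l, hl, h⟩ := sp1 (x j) (mV1.2 ⟨j, hj, rfl⟩)
      refine key j _ (R.add_mem (R.add_mem (R.add_mem (r0 ![0, 0, ⟨u, hu⟩, 0])
        (r5 ![⟨u', hu'⟩, 0, 0])) (r6 ![q, 0, 0, 0, 0])) (r1 ![⟨l, hl⟩, 0])) ?_ ?_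
      · simp [h, hκ, hα, hqa, hlam1]
      · simp [hj, hyy, hα, hqa, hlam1]
    have rk2 : ∀ j, x j = 0 → j ∈ R := by
      intro j hj
      obtain ⟨u, hu, u', hu', q, l, hl, h⟩ := sp2 (y j) (mV2.2 ⟨j, hj, rfl⟩)
      refine key j _ (R.add_mem (R.add_mem (R.add_mem (r0 ![0, ⟨u, hu⟩, 0, 0])
        (r5 ![0, 0, ⟨u', hu'⟩])) (r6 ![0, 0, 0, 0, q])) (r2 ![⟨l, hl⟩, 0])) ?_ ?_
      · simp [hj, hxx, hγ, hqe, hlam2]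
      · simp [h, hxy, hκ, hγ, hqe, hlam2]
    have rk3 : ∀ j, x j = y j → j ∈ R := by
      intro j hj
      obtain ⟨u, hu, u', hu', q, l, hl, h⟩ := sp3 (x j) (mV3.2 ⟨j, rfl, hj.symm⟩)
      refine key j _ (R.add_mem (R.add_mem (R.add_mem (r0 ![0, ⟨u, hu⟩, ⟨u, hu⟩, 0])
        (r5 ![⟨u', hu'⟩, 0, ⟨u', hu'⟩])) (r6 ![q, 0, q, 0, q])) (r3 ![⟨l, hl⟩, 0])) ?_ ?_
      · simp [h, hκ, hxx, hα, hγ, hqa, hqc, hqe, hlam3]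
      · simp [← hj, h, hxy, hyy, hκ, hα, hγ, hqa, hqc, hqe, hlam3]
    have rxy : ∀ j, x (y j) = 0 → j ∈ R := by
      intro j hj
      obtain ⟨ξ, d1, d2, d3, hd1, hd2, hd3, rfl⟩ := hgen j hj
      exact R.add_mem (R.add_mem (R.add_mem (rι ξ) (rk1 d1 hd1)) (rk2 d2 hd2)) (rk3 d3 hd3)
    intro j
    have hj := R.add_mem (rxy (j - κ ⟨x (y j), ⟨j, rfl⟩⟩) (by simp [hκ]))
      (show κ ⟨x (y j), ⟨j, rfl⟩⟩ ∈ R by simpa using r0 ![⟨x (y j), ⟨j, rfl⟩⟩, 0, 0, 0])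
    rwa [sub_add_cancel] at hj

end Decomposition

/-! ### The exceptional summand -/

section Exceptional

/-- The assertion of the decomposition theorem for an arbitrary module `M`. -/
def HasDecomposition (M : GMod) : Prop :=
  ∃ X : GMod,
    (Nonempty (GModIso X zeroMod) ∨ Nonempty (GModIso X f2Mod) ∨
      Nonempty (GModIso X (f2Mod.prod f2Mod)) ∨ Nonempty (GModIso X o1Mod.dual) ∨
      Nonempty (GModIso X o2Mod.dual) ∨
      Nonempty (GModIso X (o1Mod.dual.prod o1Mod.dual))) ∧
    ∃ I0 I1 I2 I3 I4 I5 I6 : Type,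
      Nonempty (GModIso M
        (X.prod ((fg0Mod.dsum I0).prod ((fg1Mod.dsum I1).prod ((fg2Mod.dsum I2).prod
          ((fg3Mod.dsum I3).prod ((f2Mod.dsum I4).prod
            ((o1Mod.dsum I5).prod (o2Mod.dsum I6)))))))))

lemma nonempty_gmodIso_refl (M : GMod) : Nonempty (GModIso M M) :=
  ⟨⟨AddEquiv.refl _, fun _ => rfl, fun _ => rfl⟩⟩

lemma zmod_two_cases : ∀ c : ZMod 2, c = 0 ∨ c = 1 := by decide

lemma hom_eq_zero {A : Type} [AddCommGroup A] (f : ZMod 2 →+ A) (h : f 1 = 0) : f = 0 := by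
  ext c
  rcases zmod_two_cases c with rfl | rfl <;> simp [h]

/-- Homomorphisms out of `Ω⁻¹`, the module with a single generator `p` subject to
`x (y p) = 0`. -/
lemma exists_hom_dual_o1 {J : Type} [AddCommGroup J] [Module (ZMod 2) J]
    (x y : J →ₗ[ZMod 2] J) (hxx : ∀ j, x (x j) = 0) (hyy : ∀ j, y (y j) = 0)
    (hxy : ∀ j, y (x j) = x (y j)) (p : J) (hp : x (y p) = 0) :
    ∃ (ι : o1Mod.dual.carrier →+ J) (a b c : o1Mod.dual.carrier → ZMod 2),
      (∀ ξ, ι (o1Mod.dual.s1 ξ) = ι ξ + x (ι ξ)) ∧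
      (∀ ξ, ι (o1Mod.dual.s2 ξ) = ι ξ + y (ι ξ)) ∧
      (∀ ξ, ι ξ = a ξ • x p + b ξ • p + c ξ • y p) ∧
      (∀ ξ, a ξ = 0 → b ξ = 0 → c ξ = 0 → ξ = 0) ∧ ∃ ξ, ι ξ = p := by
  let ι : (ZMod 2 × ZMod 2 × ZMod 2 →+ ZMod 2) →+ J :=
    { toFun := fun f => f (1, 0, 0) • x p + f (0, 1, 0) • p + f (0, 0, 1) • y p
      map_zero' := by simp
      map_add' := fun f g => by simp only [AddMonoidHom.add_apply, add_smul]; abel }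
  have hι : ∀ f, ι f = f (1, 0, 0) • x p + f (0, 1, 0) • p + f (0, 0, 1) • y p := fun _ => rfl
  refine ⟨ι,
    fun f : ZMod 2 × ZMod 2 × ZMod 2 →+ ZMod 2 => f (1, 0, 0),
    fun f : ZMod 2 × ZMod 2 × ZMod 2 →+ ZMod 2 => f (0, 1, 0),
    fun f : ZMod 2 × ZMod 2 × ZMod 2 →+ ZMod 2 => f (0, 0, 1),
    ?_, ?_, hι,
    ?_, AddMonoidHom.coprod 0 (AddMonoidHom.coprod (AddMonoidHom.id _) 0), ?_⟩
  · intro (f : ZMod 2 × ZMod 2 × ZMod 2 →+ ZMod 2)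
    have h1 : f (1, 1, 0) = f (1, 0, 0) + f (0, 1, 0) := by rw [← map_add]; rfl
    change f (1, 1, 0) • x p + f (0, 1, 0) • p + f (0, 0, 1) • y p =
      (f (1, 0, 0) • x p + f (0, 1, 0) • p + f (0, 0, 1) • y p) +
      x (f (1, 0, 0) • x p + f (0, 1, 0) • p + f (0, 0, 1) • y p)
    rw [h1]
    simp only [map_add, map_smul, hxx, hp, add_smul, smul_zero]
    abel
  · intro (f : ZMod 2 × ZMod 2 × ZMod 2 →+ ZMod 2)
    have h1 : f (0, 1, 1) = f (0, 0, 1) + f (0, 1, 0) := by rw [← map_add]; rfl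
    change f (1, 0, 0) • x p + f (0, 1, 0) • p + f (0, 1, 1) • y p =
      (f (1, 0, 0) • x p + f (0, 1, 0) • p + f (0, 0, 1) • y p) +
      y (f (1, 0, 0) • x p + f (0, 1, 0) • p + f (0, 0, 1) • y p)
    rw [h1]
    simp only [map_add, map_smul, hyy, hxy, hp, add_smul, smul_zero]
    abel
  · intro (f : ZMod 2 × ZMod 2 × ZMod 2 →+ ZMod 2) h1 h2 h3
    have g1 := hom_eq_zero (f.comp (AddMonoidHom.inl _ _)) h1
    have g2 := hom_eq_zero ((f.comp (AddMonoidHom.inr _ _)).comp (AddMonoidHom.inl _ _)) h2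
    have g3 := hom_eq_zero ((f.comp (AddMonoidHom.inr _ _)).comp (AddMonoidHom.inr _ _)) h3
    change f = 0
    ext ⟨u, v, w⟩
    have e : f (u, v, w) = f (u, 0, 0) + f (0, v, 0) + f (0, 0, w) := by
      rw [← map_add, ← map_add]; simp
    rw [e]
    have l1 : f (u, 0, 0) = 0 := DFunLike.congr_fun g1 u
    have l2 : f (0, v, 0) = 0 := DFunLike.congr_fun g2 v
    have l3 : f (0, 0, w) = 0 := DFunLike.congr_fun g3 w
    simp [l1, l2, l3]
  · exact (hι _).trans (by simp)

/-- Homomorphisms out of `Ω⁻²`, the module with two generators `p`, `q` subject to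
`x p = y q`, `x (y p) = 0` and `x (y q) = 0`. -/
lemma exists_hom_dual_o2 {J : Type} [AddCommGroup J] [Module (ZMod 2) J]
    (x y : J →ₗ[ZMod 2] J) (hxx : ∀ j, x (x j) = 0) (hyy : ∀ j, y (y j) = 0)
    (hxy : ∀ j, y (x j) = x (y j)) (p q : J) (hp : x (y p) = 0) (hq : x (y q) = 0)
    (hpq : x p = y q) :
    ∃ (ι : o2Mod.dual.carrier →+ J) (a b c d e : o2Mod.dual.carrier → ZMod 2),
      (∀ ξ, ι (o2Mod.dual.s1 ξ) = ι ξ + x (ι ξ)) ∧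
      (∀ ξ, ι (o2Mod.dual.s2 ξ) = ι ξ + y (ι ξ)) ∧
      (∀ ξ, ι ξ = a ξ • x q + b ξ • q + c ξ • x p + d ξ • p + e ξ • y p) ∧
      (∀ ξ, a ξ = 0 → b ξ = 0 → c ξ = 0 → d ξ = 0 → e ξ = 0 → ξ = 0) ∧
      (∃ ξ, ι ξ = p) ∧ ∃ ξ, ι ξ = q := by
  let ι : (ZMod 2 × ZMod 2 × ZMod 2 × ZMod 2 × ZMod 2 →+ ZMod 2) →+ J :=
    { toFun := fun f => f (1, 0, 0, 0, 0) • x q + f (0, 1, 0, 0, 0) • q +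
        f (0, 0, 1, 0, 0) • x p + f (0, 0, 0, 1, 0) • p + f (0, 0, 0, 0, 1) • y p
      map_zero' := by simp
      map_add' := fun f g => by simp only [AddMonoidHom.add_apply, add_smul]; abel }
  have hι : ∀ f, ι f = f (1, 0, 0, 0, 0) • x q + f (0, 1, 0, 0, 0) • q +
        f (0, 0, 1, 0, 0) • x p + f (0, 0, 0, 1, 0) • p + f (0, 0, 0, 0, 1) • y p := fun _ => rfl
  refine ⟨ι,
    fun f : ZMod 2 × ZMod 2 × ZMod 2 × ZMod 2 × ZMod 2 →+ ZMod 2 => f (1, 0, 0, 0, 0),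
    fun f : ZMod 2 × ZMod 2 × ZMod 2 × ZMod 2 × ZMod 2 →+ ZMod 2 => f (0, 1, 0, 0, 0),
    fun f : ZMod 2 × ZMod 2 × ZMod 2 × ZMod 2 × ZMod 2 →+ ZMod 2 => f (0, 0, 1, 0, 0),
    fun f : ZMod 2 × ZMod 2 × ZMod 2 × ZMod 2 × ZMod 2 →+ ZMod 2 => f (0, 0, 0, 1, 0),
    fun f : ZMod 2 × ZMod 2 × ZMod 2 × ZMod 2 × ZMod 2 →+ ZMod 2 => f (0, 0, 0, 0, 1),
    ?_, ?_, hι, ?_,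
    ⟨AddMonoidHom.coprod 0 (AddMonoidHom.coprod 0 (AddMonoidHom.coprod 0
      (AddMonoidHom.coprod (AddMonoidHom.id _) 0))), ?_⟩,
    ⟨AddMonoidHom.coprod 0 (AddMonoidHom.coprod (AddMonoidHom.id _) 0), ?_⟩⟩
  · intro (f : ZMod 2 × ZMod 2 × ZMod 2 × ZMod 2 × ZMod 2 →+ ZMod 2)
    have h1 : f (1, 1, 0, 0, 0) = f (1, 0, 0, 0, 0) + f (0, 1, 0, 0, 0) := by
      rw [← map_add]; rfl
    have h2 : f (0, 0, 1, 1, 0) = f (0, 0, 1, 0, 0) + f (0, 0, 0, 1, 0) := by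
      rw [← map_add]; rfl
    change f (1, 1, 0, 0, 0) • x q + f (0, 1, 0, 0, 0) • q + f (0, 0, 1, 1, 0) • x p +
      f (0, 0, 0, 1, 0) • p + f (0, 0, 0, 0, 1) • y p =
      (f (1, 0, 0, 0, 0) • x q + f (0, 1, 0, 0, 0) • q + f (0, 0, 1, 0, 0) • x p +
        f (0, 0, 0, 1, 0) • p + f (0, 0, 0, 0, 1) • y p) +
      x (f (1, 0, 0, 0, 0) • x q + f (0, 1, 0, 0, 0) • q + f (0, 0, 1, 0, 0) • x p +
        f (0, 0, 0, 1, 0) • p + f (0, 0, 0, 0, 1) • y p)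
    rw [h1, h2]
    simp only [map_add, map_smul, hxx, hp, add_smul, smul_zero]
    abel
  · intro (f : ZMod 2 × ZMod 2 × ZMod 2 × ZMod 2 × ZMod 2 →+ ZMod 2)
    have h1 : f (0, 1, 1, 0, 0) = f (0, 0, 1, 0, 0) + f (0, 1, 0, 0, 0) := by
      rw [← map_add]; rfl
    have h2 : f (0, 0, 0, 1, 1) = f (0, 0, 0, 0, 1) + f (0, 0, 0, 1, 0) := by
      rw [← map_add]; rfl
    change f (1, 0, 0, 0, 0) • x q + f (0, 1, 0, 0, 0) • q + f (0, 1, 1, 0, 0) • x p +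
      f (0, 0, 0, 1, 0) • p + f (0, 0, 0, 1, 1) • y p =
      (f (1, 0, 0, 0, 0) • x q + f (0, 1, 0, 0, 0) • q + f (0, 0, 1, 0, 0) • x p +
        f (0, 0, 0, 1, 0) • p + f (0, 0, 0, 0, 1) • y p) +
      y (f (1, 0, 0, 0, 0) • x q + f (0, 1, 0, 0, 0) • q + f (0, 0, 1, 0, 0) • x p +
        f (0, 0, 0, 1, 0) • p + f (0, 0, 0, 0, 1) • y p)
    rw [h1, h2]
    simp only [map_add, map_smul, hxy, hyy, hq, hpq, add_smul, smul_zero]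
    abel
  · intro (f : ZMod 2 × ZMod 2 × ZMod 2 × ZMod 2 × ZMod 2 →+ ZMod 2) h1 h2 h3 h4 h5
    have g1 := hom_eq_zero (f.comp (AddMonoidHom.inl _ _)) h1
    have g2 := hom_eq_zero ((f.comp (AddMonoidHom.inr _ _)).comp (AddMonoidHom.inl _ _)) h2
    have g3 := hom_eq_zero (((f.comp (AddMonoidHom.inr _ _)).comp (AddMonoidHom.inr _ _)).comp
      (AddMonoidHom.inl _ _)) h3
    have g4 := hom_eq_zero ((((f.comp (AddMonoidHom.inr _ _)).comp (AddMonoidHom.inr _ _)).comp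
      (AddMonoidHom.inr _ _)).comp (AddMonoidHom.inl _ _)) h4
    have g5 := hom_eq_zero ((((f.comp (AddMonoidHom.inr _ _)).comp (AddMonoidHom.inr _ _)).comp
      (AddMonoidHom.inr _ _)).comp (AddMonoidHom.inr _ _)) h5
    change f = 0
    ext ⟨u, v, w, s, t⟩
    have e : f (u, v, w, s, t) = f (u, 0, 0, 0, 0) + f (0, v, 0, 0, 0) + f (0, 0, w, 0, 0) +
        f (0, 0, 0, s, 0) + f (0, 0, 0, 0, t) := by
      rw [← map_add, ← map_add, ← map_add, ← map_add]; simp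
    have l1 : f (u, 0, 0, 0, 0) = 0 := DFunLike.congr_fun g1 u
    have l2 : f (0, v, 0, 0, 0) = 0 := DFunLike.congr_fun g2 v
    have l3 : f (0, 0, w, 0, 0) = 0 := DFunLike.congr_fun g3 w
    have l4 : f (0, 0, 0, s, 0) = 0 := DFunLike.congr_fun g4 s
    have l5 : f (0, 0, 0, 0, t) = 0 := DFunLike.congr_fun g5 t
    simp [e, l1, l2, l3, l4, l5]
  · exact (hι _).trans (by simp)
  · exact (hι _).trans (by simp)

/-- The properties of `x = 1 + σ1`, `y = 1 + σ2` and of the subspace `V` of classes of elements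
of the base field on which the determination of the exceptional summand rests. -/
structure Setup (M : GMod) [Module (ZMod 2) M.carrier] (x y : M.carrier →ₗ[ZMod 2] M.carrier)
    (V : Submodule (ZMod 2) M.carrier) : Prop where
  hs1 : ∀ j, M.s1 j = j + x j
  hs2 : ∀ j, M.s2 j = j + y j
  hxx : ∀ j, x (x j) = 0
  hyy : ∀ j, y (y j) = 0
  hxy : ∀ j, y (x j) = x (y j)
  mem_iff : ∀ j, x j ∈ V ↔ y j ∈ V
  mem_iff' : ∀ j, x j ∈ V ↔ x j + y j ∈ V
  split : ∀ j, x j ∈ V → ∃ e1 e2 e3, y e1 = 0 ∧ x e2 = 0 ∧ x e3 = y e3 ∧ j = e1 + e2 + e3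

variable {M : GMod} [Module (ZMod 2) M.carrier] {x y : M.carrier →ₗ[ZMod 2] M.carrier}
  {V : Submodule (ZMod 2) M.carrier}

lemma Setup.mem1 (H : Setup M x y V) {e} (h : y e = 0) : x e ∈ V :=
  (H.mem_iff e).2 (h ▸ V.zero_mem)

lemma Setup.mem2 (H : Setup M x y V) {e} (h : x e = 0) : y e ∈ V :=
  (H.mem_iff e).1 (h ▸ V.zero_mem)

lemma Setup.mem3 (H : Setup M x y V) {e} (h : x e = y e) : x e ∈ V :=
  (H.mem_iff' e).2 (by rw [h, ZModModule.add_self]; exact V.zero_mem)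

lemma Setup.mem_sum (H : Setup M x y V) {e1 e2 e3} (h1 : y e1 = 0) (h2 : x e2 = 0)
    (h3 : x e3 = y e3) : x e1 + y e2 + x e3 ∈ V :=
  V.add_mem (V.add_mem (H.mem1 h1) (H.mem2 h2)) (H.mem3 h3)

/-- If `x j ∈ V` for all `j` killed by `xy`, there is no exceptional summand. -/
lemma Setup.case_zero (H : Setup M x y V) (h : ∀ j, x (y j) = 0 → x j ∈ V) :
    HasDecomposition M := by
  refine ⟨zeroMod, Or.inl (nonempty_gmodIso_refl _), ?_⟩
  refine exists_decomposition M x y H.hs1 H.hs2 H.hxx H.hyy H.hxy zeroMod 0 ?_ ?_ ?_ ?_ ?_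
  · simp
  · simp
  · simp
  · intros
    rfl
  · intro j hj
    obtain ⟨e1, e2, e3, h1, h2, h3, rfl⟩ := H.split j (h j hj)
    exact ⟨0, e1, e2, e3, h1, h2, h3, by simp⟩

/-- If, modulo those `j` with `x j ∈ V`, the kernel of `xy` is generated by one element `p`, then `p`
generates an exceptional summand `Ω⁻¹`. -/
lemma Setup.case_one (H : Setup M x y V) (p : M.carrier) (hp : x (y p) = 0) (hpV : x p ∉ V)
    (h : ∀ j, x (y j) = 0 → x j ∈ V ∨ x (j + p) ∈ V) : HasDecomposition M := by
  obtain ⟨ι, a, b, c, h1, h2, hι, h0, ξp, hξp⟩ :=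
    exists_hom_dual_o1 x y H.hxx H.hyy H.hxy p hp
  have hp0 : x p ≠ 0 := fun h => hpV (h ▸ V.zero_mem)
  refine ⟨o1Mod.dual, by simp [nonempty_gmodIso_refl], ?_⟩
  refine exists_decomposition M x y H.hs1 H.hs2 H.hxx H.hyy H.hxy _ ι h1 h2 ?_ ?_ ?_
  · intro ξ
    rw [hι]
    simp [H.hyy, H.hxy, hp]
  · intro ξ e1 e2 e3 hx hy d1 d2 d3 he
    have hV : ι ξ ∈ V := he ▸ H.mem_sum d1 d2 d3
    have hb : b ξ = 0 := by
      rw [hι] at hx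
      simpa [H.hxx, hp, hp0] using hx
    rw [hι, hb, zero_smul, add_zero] at hV
    rcases zmod_two_cases (a ξ) with ha | ha <;> rcases zmod_two_cases (c ξ) with hc | hc <;>
      simp only [ha, hc, zero_smul, one_smul, add_zero, zero_add] at hV
    · exact h0 ξ ha hb hc
    · exact absurd ((H.mem_iff p).2 hV) hpV
    · exact absurd hV hpV
    · exact absurd ((H.mem_iff' p).2 hV) hpV
  · intro j hj
    rcases h j hj with h | h
    · obtain ⟨e1, e2, e3, h1, h2, h3, rfl⟩ := H.split j h
      exact ⟨0, e1, e2, e3, h1, h2, h3, by simp⟩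
    · obtain ⟨e1, e2, e3, h1, h2, h3, e⟩ := H.split _ h
      refine ⟨ξp, e1, e2, e3, h1, h2, h3, ?_⟩
      rw [hξp, add_assoc, add_assoc, ← add_assoc e1, ← e, add_comm p, add_assoc,
        ZModModule.add_self, add_zero]

lemma mem_combination {p q : M.carrier} (hp : x p ∉ V) (hq : x q ∉ V) (hpq : x (p + q) ∉ V)
    (a b : ZMod 2) (h : a • x p + b • x q ∈ V) : a = 0 ∧ b = 0 := by
  rcases zmod_two_cases a with ha | ha <;> rcases zmod_two_cases b with hb | hb <;>
      simp only [ha, hb, zero_smul, one_smul, add_zero, zero_add] at h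
  · exact ⟨ha, hb⟩
  · exact absurd h hq
  · exact absurd h hp
  · exact absurd (by rwa [map_add]) hpq

/-- Two exceptional generators with `x p = y q` span a summand `Ω⁻²`. -/
lemma Setup.case_two (H : Setup M x y V) (p q : M.carrier) (hp : x (y p) = 0)
    (hq : x (y q) = 0) (hpV : x p ∉ V) (hqV : x q ∉ V) (hpqV : x (p + q) ∉ V)
    (hn : ∀ j, y p + x j ∉ V) (hpq : x p = y q)
    (h : ∀ j, x (y j) = 0 →
      x j ∈ V ∨ x (j + p) ∈ V ∨ x (j + q) ∈ V ∨ x (j + (p + q)) ∈ V) :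
    HasDecomposition M := by
  obtain ⟨ι, a, b, c, d, e, h1, h2, hι, h0, ⟨ξp, hξp⟩, ξq, hξq⟩ :=
    exists_hom_dual_o2 x y H.hxx H.hyy H.hxy p q hp hq hpq
  refine ⟨o2Mod.dual, by simp [nonempty_gmodIso_refl], ?_⟩
  refine exists_decomposition M x y H.hs1 H.hs2 H.hxx H.hyy H.hxy _ ι h1 h2 ?_ ?_ ?_
  · intro ξ
    rw [hι]
    simp [H.hyy, H.hxy, hp, hq]
  · intro ξ e1 e2 e3 hx hy d1 d2 d3 he
    have hV : ι ξ ∈ V := he ▸ H.mem_sum d1 d2 d3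
    obtain ⟨hd, hb⟩ : d ξ = 0 ∧ b ξ = 0 := by
      refine mem_combination hpV hqV hpqV _ _ ?_
      have e : x (ι ξ) = d ξ • x p + b ξ • x q := by
        rw [hι]
        simp only [map_add, map_smul, H.hxx, hp, smul_zero, add_zero, zero_add]
        abel
      rw [← e, hx]
      exact V.zero_mem
    rw [hι, hb, hd, zero_smul, zero_smul, add_zero, add_zero] at hV
    have he : e ξ = 0 := by
      rcases zmod_two_cases (e ξ) with he | he
      · exact he
      · refine absurd ?_ (hn (a ξ • q + c ξ • p))
        rw [he, one_smul, add_comm] at hV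
        rwa [map_add, map_smul, map_smul]
    rw [he, zero_smul, add_zero, add_comm] at hV
    obtain ⟨hc, ha⟩ := mem_combination hpV hqV hpqV _ _ hV
    exact h0 ξ ha hb hc hd he
  · intro j hj
    have key : ∀ ξ, x (j + ι ξ) ∈ V → ∃ ξ e1 e2 e3, y e1 = 0 ∧ x e2 = 0 ∧ x e3 = y e3 ∧
        j = ι ξ + e1 + e2 + e3 := by
      intro ξ h
      obtain ⟨e1, e2, e3, h1, h2, h3, e⟩ := H.split _ h
      refine ⟨ξ, e1, e2, e3, h1, h2, h3, ?_⟩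
      rw [add_assoc, add_assoc, ← add_assoc e1, ← e, add_comm j, ← add_assoc,
        ZModModule.add_self, zero_add]
    rcases h j hj with h | h | h | h
    · exact key 0 (by rwa [map_zero, add_zero])
    · exact key ξp (by rwa [hξp])
    · exact key ξq (by rwa [hξq])
    · exact key (ξp + ξq) (by rwa [map_add ι, hξp, hξq])

/-- Two exceptional generators with `x p ≡ y q` modulo `V`, where `p` and `q` cannot be corrected to
make this an equality (`hpq'`), span a summand `Ω⁻¹ ⊕ Ω⁻¹`. -/
lemma Setup.case_two' (H : Setup M x y V) (p q : M.carrier) (hp : x (y p) = 0)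
    (hq : x (y q) = 0) (hpV : x p ∉ V) (hqV : x q ∉ V) (hpqV : x (p + q) ∉ V)
    (hn : ∀ j, y p + x j ∉ V) (hpq : x p + y q ∈ V)
    (hpq' : ∀ e1 e2 e3, y e1 = 0 → x e2 = 0 → x e3 = y e3 → x p + y q ≠ x e1 + y e2 + x e3)
    (h : ∀ j, x (y j) = 0 →
      x j ∈ V ∨ x (j + p) ∈ V ∨ x (j + q) ∈ V ∨ x (j + (p + q)) ∈ V) :
    HasDecomposition M := by
  obtain ⟨ιp, a, b, c, h1, h2, hι, h0, ξp, hξp⟩ :=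
    exists_hom_dual_o1 x y H.hxx H.hyy H.hxy p hp
  obtain ⟨ιq, a', b', c', h1', h2', hι', h0', ξq, hξq⟩ :=
    exists_hom_dual_o1 x y H.hxx H.hyy H.hxy q hq
  refine ⟨o1Mod.dual.prod o1Mod.dual, by simp [nonempty_gmodIso_refl], ?_⟩
  let ι : (o1Mod.dual.prod o1Mod.dual).carrier →+ M.carrier := ιp.coprod ιq
  have hιι : ∀ ξ, ι ξ = ιp ξ.1 + ιq ξ.2 := fun _ => rfl
  refine exists_decomposition M x y H.hs1 H.hs2 H.hxx H.hyy H.hxy _ ι ?_ ?_ ?_ ?_ ?_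
  · rintro ⟨ξ, η⟩
    change ιp (o1Mod.dual.s1 ξ) + ιq (o1Mod.dual.s1 η) = (ιp ξ + ιq η) + x (ιp ξ + ιq η)
    rw [h1, h1', map_add]
    abel
  · rintro ⟨ξ, η⟩
    change ιp (o1Mod.dual.s2 ξ) + ιq (o1Mod.dual.s2 η) = (ιp ξ + ιq η) + y (ιp ξ + ιq η)
    rw [h2, h2', map_add]
    abel
  · intro ξ
    rw [hιι, hι, hι']
    simp [H.hyy, H.hxy, hp, hq]
  · rintro ⟨ξ, η⟩ e1 e2 e3 hx hy d1 d2 d3 he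
    have hιι' : ι (ξ, η) = ιp ξ + ιq η := rfl
    rw [hιι'] at he hx
    have hV : ιp ξ + ιq η ∈ V := he ▸ H.mem_sum d1 d2 d3
    obtain ⟨hb, hb'⟩ : b ξ = 0 ∧ b' η = 0 := by
      refine mem_combination hpV hqV hpqV _ _ ?_
      have e : x (ιp ξ + ιq η) = b ξ • x p + b' η • x q := by
        rw [hι, hι']
        simp only [map_add, map_smul, H.hxx, hp, hq, smul_zero, add_zero, zero_add]
      rw [← e, hx]
      exact V.zero_mem
    have e : ιp ξ + ιq η = a ξ • x p + c ξ • y p + a' η • x q + c' η • y q := by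
      rw [hι, hι', hb, hb', zero_smul, zero_smul]
      abel
    -- modulo `V`, the term `y q` may be replaced by `x p`
    have hV' : (a ξ + c' η) • x p + c ξ • y p + a' η • x q ∈ V := by
      have := V.add_mem hV (V.smul_mem (c' η) hpq)
      rw [e] at this
      have e' : (a ξ + c' η) • x p + c ξ • y p + a' η • x q =
          (a ξ • x p + c ξ • y p + a' η • x q + c' η • y q) + c' η • (x p + y q) -
            (c' η • y q + c' η • y q) := by
        rw [add_smul, smul_add]
        abel
      rw [e', ZModModule.add_self, sub_zero]
      exact this
    have hc : c ξ = 0 := by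
      rcases zmod_two_cases (c ξ) with hc | hc
      · exact hc
      · refine absurd ?_ (hn ((a ξ + c' η) • p + a' η • q))
        rw [hc, one_smul, add_comm _ (y p), add_assoc] at hV'
        rwa [map_add, map_smul, map_smul]
    rw [hc, zero_smul, add_zero] at hV'
    obtain ⟨hac, ha'⟩ := mem_combination hpV hqV hpqV _ _ hV'
    have hac' : c' η = a ξ := by
      rw [add_eq_zero_iff_eq_neg, ZModModule.neg_eq_self] at hac
      exact hac.symm
    rw [he, hc, ha', hac', zero_smul, zero_smul, add_zero, add_zero, ← smul_add] at e
    have ha : a ξ = 0 := by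
      rcases zmod_two_cases (a ξ) with ha | ha
      · exact ha
      · rw [ha, one_smul] at e
        exact absurd e.symm (hpq' e1 e2 e3 d1 d2 d3)
    rw [h0 ξ ha hb hc, h0' η ha' hb' (hac'.trans ha)]
    rfl
  · intro j hj
    have key : ∀ ξ, x (j + ι ξ) ∈ V → ∃ ξ e1 e2 e3, y e1 = 0 ∧ x e2 = 0 ∧ x e3 = y e3 ∧
        j = ι ξ + e1 + e2 + e3 := by
      intro ξ h
      obtain ⟨e1, e2, e3, h1, h2, h3, e⟩ := H.split _ h
      refine ⟨ξ, e1, e2, e3, h1, h2, h3, ?_⟩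
      rw [add_assoc, add_assoc, ← add_assoc e1, ← e, add_comm j, ← add_assoc,
        ZModModule.add_self, zero_add]
    have k1 : ι (ξp, 0) = p := by
      change ιp ξp + ιq 0 = p
      rw [map_zero, add_zero, hξp]
    have k2 : ι (0, ξq) = q := by
      change ιp 0 + ιq ξq = q
      rw [map_zero, zero_add, hξq]
    have k3 : ι (ξp, ξq) = p + q := by
      change ιp ξp + ιq ξq = p + q
      rw [hξp, hξq]
    rcases h j hj with h | h | h | h
    · exact key 0 (by rwa [map_zero, add_zero])
    · exact key ((ξp, 0) : o1Mod.dual.carrier × o1Mod.dual.carrier) (by rwa [k1])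
    · exact key ((0, ξq) : o1Mod.dual.carrier × o1Mod.dual.carrier) (by rwa [k2])
    · exact key ((ξp, ξq) : o1Mod.dual.carrier × o1Mod.dual.carrier) (by rwa [k3])

/-- Two independent exceptional classes: the summand is `Ω⁻²` if the relation
`x p ≡ y q` modulo `V` can be lifted to an equality, and `Ω⁻¹ ⊕ Ω⁻¹` otherwise. -/
lemma Setup.case_both (H : Setup M x y V) (p q : M.carrier) (hp : x (y p) = 0)
    (hq : x (y q) = 0) (hpV : x p ∉ V) (hqV : x q ∉ V) (hpqV : x (p + q) ∉ V)
    (hn : ∀ j, y p + x j ∉ V) (hpq : x p + y q ∈ V)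
    (h : ∀ j, x (y j) = 0 →
      x j ∈ V ∨ x (j + p) ∈ V ∨ x (j + q) ∈ V ∨ x (j + (p + q)) ∈ V) :
    HasDecomposition M := by
  by_cases hex : ∃ e1 e2 e3, y e1 = 0 ∧ x e2 = 0 ∧ x e3 = y e3 ∧ x p + y q = x e1 + y e2 + x e3
  · obtain ⟨e1, e2, e3, d1, d2, d3, e⟩ := hex
    have m : x (e1 + e3) ∈ V := by
      rw [map_add]
      exact V.add_mem (H.mem1 d1) (H.mem3 d3)
    have mp : ∀ j, x (j + (e1 + e3)) ∈ V ↔ x j ∈ V := fun j => by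
      rw [map_add x j]; exact V.add_mem_iff_left m
    have mq : ∀ j, x (j + e2) = x j := fun j => by rw [map_add, d2, add_zero]
    have mpq : p + (e1 + e3) + (q + e2) = p + q + (e1 + e3) + e2 := by abel
    refine H.case_two (p + (e1 + e3)) (q + e2) ?_ ?_ ?_ ?_ ?_ ?_ ?_ ?_
    · rw [map_add, map_add, map_add, hp, d1, zero_add, zero_add, ← d3, H.hxx]
    · rw [map_add, map_add, hq, ← H.hxy e2, d2, map_zero, add_zero]
    · rwa [mp]
    · rwa [mq]
    · rwa [mpq, mq, mp]
    · intro j hj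
      refine hn j ?_
      have m3 : y e3 ∈ V := d3 ▸ H.mem3 d3
      rw [map_add, map_add, d1, zero_add, add_right_comm] at hj
      exact (V.add_mem_iff_left m3).1 hj
    · rw [map_add, map_add, map_add, ← ZModModule.sub_eq_add (y q)]
      rw [← sub_eq_zero, ZModModule.sub_eq_add, ZModModule.sub_eq_add]
      have := sub_eq_zero.2 e
      rw [ZModModule.sub_eq_add] at this
      rw [← this]
      abel
    · intro j hj
      rw [mpq, ← add_assoc j, ← add_assoc j, mp, ← add_assoc j, mq, ← add_assoc j, mq, mp]
      exact h j hj
  · refine H.case_two' p q hp hq hpV hqV hpqV hn hpq ?_ h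
    intro e1 e2 e3 d1 d2 d3 e
    exact hex ⟨e1, e2, e3, d1, d2, d3, e⟩

end Exceptional

/-! ### Norms and square classes in a biquadratic extension -/

section Field

/-- A Klein four-group `{1, σ, τ, στ}` of endomorphisms of a field `K` of characteristic `≠ 2`,
with elements `r1`, `r2` on which it acts through the two independent sign characters. -/
structure KleinData {K : Type} [Field K] (σ τ : K →+* K) (r1 r2 : K) : Prop where
  two_ne : (2 : K) ≠ 0
  r1_ne : r1 ≠ 0
  r2_ne : r2 ≠ 0
  σσ : ∀ k, σ (σ k) = k
  ττ : ∀ k, τ (τ k) = k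
  comm : ∀ k, τ (σ k) = σ (τ k)
  σr1 : σ r1 = -r1
  σr2 : σ r2 = r2
  τr1 : τ r1 = r1
  τr2 : τ r2 = -r2

variable {K : Type} [Field K] {σ τ : K →+* K} {r1 r2 : K}

lemma KleinData.swap (D : KleinData σ τ r1 r2) : KleinData τ σ r2 r1 :=
  ⟨D.two_ne, D.r2_ne, D.r1_ne, D.ττ, D.σσ, fun k => (D.comm k).symm, D.τr2, D.τr1, D.σr2, D.σr1⟩

/-- The three involutions `σ`, `τ`, `στ` play symmetric roles. -/
lemma KleinData.rotate (D : KleinData σ τ r1 r2) : KleinData (σ.comp τ) σ r2 (r1 * r2) where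
  two_ne := D.two_ne
  r1_ne := D.r2_ne
  r2_ne := mul_ne_zero D.r1_ne D.r2_ne
  σσ k := by simp [D.comm, D.σσ, D.ττ]
  ττ := D.σσ
  comm k := by simp [D.comm]
  σr1 := by simp [D.τr2, D.σr2]
  σr2 := by simp [D.τr1, D.τr2, D.σr1, D.σr2]
  τr1 := D.σr2
  τr2 := by simp [D.σr1, D.σr2]

/-- Hilbert's Theorem 90 for the involution `τ`; the solution lies in the fixed field of `σ`
as soon as `k` does. -/
lemma KleinData.hilbert90 (D : KleinData σ τ r1 r2) (k : K) (h : k * τ k = 1) :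
    ∃ t, t ≠ 0 ∧ τ t = k * t ∧ (σ k = k → σ t = t) := by
  by_cases hk : 1 + τ k = 0
  · have hτ : τ k = -1 := by linear_combination hk
    have hk1 : k = -1 := by
      rw [hτ] at h
      linear_combination -h
    exact ⟨r2, D.r2_ne, by rw [D.τr2, hk1]; ring, fun _ => D.σr2⟩
  · refine ⟨1 + τ k, hk, ?_, fun hσ => ?_⟩
    · rw [map_add, map_one, D.ττ]
      linear_combination -h
    · rw [map_add, map_one, ← D.comm, hσ]

/-- An element of the quadratic field fixed by `σ` whose norm to the base field is a square `f²`
of the base field is itself the product of a square and an element `w` of the base field. -/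
lemma KleinData.norm_square (D : KleinData σ τ r1 r2) (g f : K) (hg : σ g = g)
    (hf0 : f ≠ 0) (hfσ : σ f = f) (hfτ : τ f = f) (h : g * τ g = f ^ 2) :
    ∃ w s, w ≠ 0 ∧ s ≠ 0 ∧ σ w = w ∧ τ w = w ∧ σ s = s ∧ g = w * s ^ 2 ∧
      w * (s * τ s) = f := by
  obtain ⟨t, ht0, ht, hσt⟩ := D.hilbert90 (g / f) (by
    rw [map_div₀, hfτ]
    field_simp
    exact h)
  replace hσt := hσt (by rw [map_div₀, hg, hfσ])
  have hτt0 : τ t ≠ 0 := (map_ne_zero τ).2 ht0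
  have hg' : g * t = f * τ t := by
    rw [ht]
    field_simp
  refine ⟨f * (t * τ t), t⁻¹, mul_ne_zero hf0 (mul_ne_zero ht0 hτt0), inv_ne_zero ht0,
    ?_, ?_, ?_, ?_, ?_⟩
  · rw [map_mul, map_mul, hfσ, hσt, ← D.comm, hσt]
  · rw [map_mul, map_mul, hfτ, D.ττ, mul_comm t]
  · rw [map_inv₀, hσt]
  · field_simp
    linear_combination hg'
  · rw [map_inv₀]
    field_simp

/-- The norm `k · σk · τk · στk`. -/
def nm (σ τ : K →+* K) (k : K) : K := k * σ k * τ k * σ (τ k)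

/-- `k` has type `(s, t)` if its norm is `n²` for an `n` on which `σ` acts as `s` and `τ` as `t`.
Elements of type `(1, 1)` are those whose norm is the square of an element of the base field. -/
def HasType (σ τ : K →+* K) (s t k : K) : Prop :=
  ∃ n, n ≠ 0 ∧ nm σ τ k = n ^ 2 ∧ σ n = s * n ∧ τ n = t * n

/-- `k` is the product of a nonzero element of the base field and a square. -/
def InBase (σ τ : K →+* K) (k : K) : Prop :=
  ∃ w t, w ≠ 0 ∧ t ≠ 0 ∧ σ w = w ∧ τ w = w ∧ k = w * t ^ 2

lemma eq_or_neg_of_sq {n : K}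
    (h : σ (n ^ 2) = n ^ 2) : ∃ s : K, (s = 1 ∨ s = -1) ∧ σ n = s * n := by
  rw [map_pow, sq_eq_sq_iff_eq_or_eq_neg] at h
  rcases h with h | h
  · exact ⟨1, Or.inl rfl, by rw [h, one_mul]⟩
  · exact ⟨-1, Or.inr rfl, by rw [h, neg_one_mul]⟩

lemma KleinData.map_nm_left (D : KleinData σ τ r1 r2) (k : K) : σ (nm σ τ k) = nm σ τ k := by
  simp only [nm, map_mul, D.σσ]
  ring

lemma KleinData.map_nm_right (D : KleinData σ τ r1 r2) (k : K) : τ (nm σ τ k) = nm σ τ k := by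
  simp only [nm, map_mul, D.comm, D.ττ]
  ring

lemma KleinData.nm_swap (D : KleinData σ τ r1 r2) (k : K) : nm τ σ k = nm σ τ k := by
  simp only [nm, D.comm]
  ring

lemma KleinData.nm_rotate (D : KleinData σ τ r1 r2) (k : K) :
    nm (σ.comp τ) σ k = nm σ τ k := by
  simp only [nm, RingHom.comp_apply, D.comm, D.σσ]
  ring

lemma KleinData.nm_map (D : KleinData σ τ r1 r2) (k : K) : nm σ τ (σ k) = nm σ τ k := by
  simp only [nm, D.comm, D.σσ]
  ring

lemma nm_mul (k l : K) : nm σ τ (k * l) = nm σ τ k * nm σ τ l := by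
  simp only [nm, map_mul]
  ring

lemma nm_ne_zero {k : K} (hk : k ≠ 0) : nm σ τ k ≠ 0 := by
  simp [nm, hk]

lemma HasType.mul {s t s' t' k l : K} (h : HasType σ τ s t k) (h' : HasType σ τ s' t' l) :
    HasType σ τ (s * s') (t * t') (k * l) := by
  obtain ⟨n, n0, h1, h2, h3⟩ := h
  obtain ⟨m, m0, g1, g2, g3⟩ := h'
  refine ⟨n * m, mul_ne_zero n0 m0, ?_, ?_, ?_⟩
  · rw [nm_mul, h1, g1]; ring
  · rw [map_mul, h2, g2]; ring
  · rw [map_mul, h3, g3]; ring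

lemma HasType.unique {s t s' t' k : K} (h : HasType σ τ s t k) (h' : HasType σ τ s' t' k) :
    s = s' ∧ t = t' := by
  obtain ⟨n, n0, h1, h2, h3⟩ := h
  obtain ⟨m, m0, g1, g2, g3⟩ := h'
  rw [h1, sq_eq_sq_iff_eq_or_eq_neg] at g1
  rcases g1 with rfl | rfl
  · exact ⟨mul_right_cancel₀ n0 (h2.symm.trans g2), mul_right_cancel₀ n0 (h3.symm.trans g3)⟩
  · rw [map_neg] at h2 h3
    exact ⟨mul_right_cancel₀ m0 (by linear_combination g2 + h2),
      mul_right_cancel₀ m0 (by linear_combination g3 + h3)⟩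

lemma KleinData.exists_hasType (D : KleinData σ τ r1 r2) {k n : K} (hk : k ≠ 0)
    (h : nm σ τ k = n ^ 2) :
    HasType σ τ 1 1 k ∨ HasType σ τ (-1) 1 k ∨ HasType σ τ 1 (-1) k ∨ HasType σ τ (-1) (-1) k := by
  have hn : n ≠ 0 := by
    rintro rfl
    exact nm_ne_zero (σ := σ) (τ := τ) hk (by simpa using h)
  obtain ⟨s, hs, h1⟩ := eq_or_neg_of_sq (n := n) (by rw [← h, D.map_nm_left])
  obtain ⟨t, ht, h2⟩ := eq_or_neg_of_sq (n := n) (by rw [← h, D.map_nm_right])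
  have key : HasType σ τ s t k := ⟨n, hn, h, h1, h2⟩
  rcases hs with rfl | rfl <;> rcases ht with rfl | rfl <;> simp [key]

lemma KleinData.hasType_swap (D : KleinData σ τ r1 r2) {s t k : K} :
    HasType τ σ t s k ↔ HasType σ τ s t k := by
  simp only [HasType, D.nm_swap]
  exact exists_congr fun n => by tauto

lemma KleinData.hasType_rotate (D : KleinData σ τ r1 r2) {k : K} :
    HasType (σ.comp τ) σ 1 1 k ↔ HasType σ τ 1 1 k := by
  simp only [HasType, D.nm_rotate, one_mul, RingHom.comp_apply]
  refine exists_congr fun n => ⟨?_, ?_⟩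
  · rintro ⟨h0, h1, h2, h3⟩
    refine ⟨h0, h1, h3, ?_⟩
    have := congrArg σ h2
    rwa [D.σσ, h3] at this
  · rintro ⟨h0, h1, h2, h3⟩
    exact ⟨h0, h1, by rw [h3, h2], h2⟩

lemma inBase_swap {k : K} :
    InBase τ σ k ↔ InBase σ τ k := by
  simp only [InBase]
  exact exists_congr fun w => exists_congr fun t => by tauto

lemma KleinData.inBase_rotate (D : KleinData σ τ r1 r2) {k : K} :
    InBase (σ.comp τ) σ k ↔ InBase σ τ k := by
  simp only [InBase, RingHom.comp_apply]
  refine exists_congr fun w => exists_congr fun t => ⟨?_, ?_⟩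
  · rintro ⟨h0, h0', h1, h2, h3⟩
    refine ⟨h0, h0', h2, ?_, h3⟩
    have := congrArg σ h1
    rwa [D.σσ, h2] at this
  · rintro ⟨h0, h0', h1, h2, h3⟩
    exact ⟨h0, h0', by rw [h2, h1], h1, h3⟩

/-- The norm of `k · σk` from the fixed field of `σ` is `nm k`, so the class of `k · σk` comes from
the base field exactly when `nm k` is the square of an element of the base field. -/
lemma KleinData.inBase_left_iff (D : KleinData σ τ r1 r2) {k : K} :
    InBase σ τ (k * σ k) ↔ HasType σ τ 1 1 k := by
  constructor
  · rintro ⟨w, t, w0, t0, hσ, hτ, h⟩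
    have e : nm σ τ k = (k * σ k) * τ (k * σ k) := by
      simp only [nm, map_mul, D.comm]
      ring
    refine ⟨w * (t * τ t), mul_ne_zero w0 (mul_ne_zero t0 ((map_ne_zero τ).2 t0)), ?_, ?_, ?_⟩
    · rw [e, h, map_mul, map_pow, hτ]
      ring
    · have h' : σ (t ^ 2) = t ^ 2 := by
        have h2 := congrArg σ h
        rw [map_mul, map_mul, hσ, D.σσ, mul_comm (σ k), h] at h2
        exact (mul_left_cancel₀ w0 h2).symm
      obtain ⟨s, hs, hst⟩ := eq_or_neg_of_sq h'
      rw [map_mul, map_mul, hσ, ← D.comm, hst, map_mul]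
      rcases hs with rfl | rfl <;> simp
    · rw [map_mul, map_mul, hτ, D.ττ]
      ring
  · rintro ⟨f, f0, h, hσ, hτ⟩
    rw [one_mul] at hσ hτ
    obtain ⟨w, s, w0, s0, h1, h2, -, h3, -⟩ := D.norm_square (k * σ k) f
      (by rw [map_mul, D.σσ, mul_comm]) f0 hσ hτ (by
        rw [← h]
        simp only [nm, map_mul, D.comm]
        ring)
    exact ⟨w, s, w0, s0, h1, h2, h3⟩

lemma KleinData.inBase_right_iff (D : KleinData σ τ r1 r2) {k : K} :
    InBase σ τ (k * τ k) ↔ HasType σ τ 1 1 k := by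
  rw [← inBase_swap, D.swap.inBase_left_iff, D.hasType_swap]

lemma KleinData.inBase_mid_iff (D : KleinData σ τ r1 r2) {k : K} :
    InBase σ τ (σ k * τ k) ↔ HasType σ τ 1 1 k := by
  have e : σ k * τ k = σ k * (σ.comp τ) (σ k) := by
    rw [RingHom.comp_apply, D.comm, D.σσ]
  rw [e, ← D.inBase_rotate, D.rotate.inBase_left_iff, D.hasType_rotate]
  simp only [HasType, D.nm_map]

/-- An element `k` of type `(1, 1)` is, up to a factor `e` whose class is fixed by the group,
a product of elements of the three intermediate quadratic fields. -/
lemma KleinData.split (D : KleinData σ τ r1 r2) {k : K} (h : HasType σ τ 1 1 k) :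
    ∃ s1 s2 s3 z1 z2, s1 ≠ 0 ∧ s2 ≠ 0 ∧ s3 ≠ 0 ∧ τ s1 = s1 ∧ σ s2 = s2 ∧ σ s3 = τ s3 ∧
      (k * s1 * s2 * s3) * σ (k * s1 * s2 * s3) = z1 ^ 2 ∧
      (k * s1 * s2 * s3) * τ (k * s1 * s2 * s3) = z2 ^ 2 := by
  obtain ⟨f, f0, hN, hσ, hτ⟩ := h
  rw [one_mul] at hσ hτ
  obtain ⟨u, s2, u0, s20, -, -, hs2, hu, hu'⟩ := D.norm_square (k * σ k) f
    (by rw [map_mul, D.σσ, mul_comm]) f0 hσ hτ (by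
      rw [← hN]; simp only [nm, map_mul, D.comm]; ring)
  obtain ⟨w, s1, w0, s10, -, -, hs1, hw, hw'⟩ := D.swap.norm_square (k * τ k) f
    (by rw [map_mul, D.ττ, mul_comm]) f0 hτ hσ (by
      rw [← hN]; simp only [nm, map_mul]; ring)
  obtain ⟨v, s3, v0, s30, -, -, hs3, hv, hv'⟩ := D.rotate.norm_square (k * σ (τ k)) f
    (by simp only [RingHom.comp_apply, map_mul, D.comm, D.σσ, D.ττ]; ring) f0
    (by rw [RingHom.comp_apply, hτ, hσ]) hσ (by
      rw [← hN]; simp only [nm, map_mul, D.σσ]; ring)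
  have hs3' : σ s3 = τ s3 := by
    have := congrArg σ hs3
    rw [RingHom.comp_apply, D.σσ] at this
    exact this.symm
  have hprod : u * w * v * (s1 * s2 * s3) ^ 2 = (k * f) ^ 2 := by
    have e : (k * σ k) * (k * τ k) * (k * σ (τ k)) = k ^ 2 * nm σ τ k := by
      rw [nm]; ring
    rw [hu, hw, hv, hN] at e
    linear_combination e
  have k1 : σ s1 = f / (w * s1) := by
    field_simp
    linear_combination hw'
  have k2 : τ s2 = f / (u * s2) := by
    field_simp
    linear_combination hu'
  have k3 : σ s3 = f / (v * s3) := by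
    field_simp
    linear_combination hv'
  refine ⟨s1, s2, s3, s2 * f * (k * f) / (s1 * s3 * w * v),
    s1 * f * (k * f) / (s2 * s3 * u * v), s10, s20, s30, hs1, hs2, hs3', ?_, ?_⟩
  · have e : (k * s1 * s2 * s3) * σ (k * s1 * s2 * s3) =
        (k * σ k) * s1 * s2 * s3 * σ s1 * σ s2 * σ s3 := by
      simp only [map_mul]; ring
    rw [e, hu, hs2, k1, k3]
    field_simp
    linear_combination hprod
  · have e : (k * s1 * s2 * s3) * τ (k * s1 * s2 * s3) =
        (k * τ k) * s1 * s2 * s3 * τ s1 * τ s2 * τ s3 := by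
      simp only [map_mul]; ring
    rw [e, hw, hs1, k2, ← hs3', k3]
    field_simp
    linear_combination hprod

/-- For `p` of type `(-1, 1)` and `q` of type `(1, -1)`, the elements `p · σp` and `q · τq` agree up
to squares and elements of the base field.  With `g = p · σp`, `h = q · τq` and norms `n²`, `m²`,
two applications of Hilbert 90 give an element `t s` with `σ (t s) = (m / h) t s` and
`τ (t s) = (n / g) t s`, so that `g h / (t s)²` is fixed by the group. -/
lemma KleinData.relation (D : KleinData σ τ r1 r2) {p q : K} (hp0 : p ≠ 0) (hq0 : q ≠ 0)
    (hp : HasType σ τ (-1) 1 p) (hq : HasType σ τ 1 (-1) q) :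
    InBase σ τ ((p * σ p) * (q * τ q)) := by
  obtain ⟨n, n0, hn, hσn, hτn⟩ := hp
  obtain ⟨m, m0, hm, hσm, hτm⟩ := hq
  rw [one_mul] at hτn hσm
  rw [neg_one_mul] at hσn hτm
  have hσp : σ p ≠ 0 := (map_ne_zero σ).2 hp0
  have hτq : τ q ≠ 0 := (map_ne_zero τ).2 hq0
  obtain ⟨g, hg⟩ : ∃ g, g = p * σ p := ⟨_, rfl⟩
  obtain ⟨h, hh⟩ : ∃ h, h = q * τ q := ⟨_, rfl⟩
  have g0 : g ≠ 0 := hg ▸ mul_ne_zero hp0 hσp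
  have h0 : h ≠ 0 := hh ▸ mul_ne_zero hq0 hτq
  have hσg : σ g = g := by rw [hg, map_mul, D.σσ, mul_comm]
  have hτh : τ h = h := by rw [hh, map_mul, D.ττ, mul_comm]
  have hgn : g * τ g = n ^ 2 := by
    rw [← hn, hg]; simp only [nm, map_mul, D.comm]; ring
  have hhm : h * σ h = m ^ 2 := by
    rw [← hm, hh]; simp only [nm, map_mul]; ring
  have hτg : τ g = n ^ 2 / g := by field_simp; linear_combination hgn
  have hσh : σ h = m ^ 2 / h := by field_simp; linear_combination hhm
  rw [← hg, ← hh]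
  obtain ⟨t, t0, ht, -⟩ := D.swap.hilbert90 (m / h) (by
    rw [map_div₀, hσm, hσh]; field_simp)
  have hτt : τ t ≠ 0 := (map_ne_zero τ).2 t0
  have hστt : σ (τ t) = -(m / h) * τ t := by
    rw [← D.comm, ht, map_mul, map_div₀, hτm, hτh]; ring
  obtain ⟨s, s0, hs, hσs⟩ := D.hilbert90 (n / g * (t / τ t)) (by
    simp only [map_mul, map_div₀, hτn, D.ττ, hτg]; field_simp)
  replace hσs := hσs (by
    simp only [map_mul, map_div₀, hσn, hσg, ht, hστt]; field_simp)
  have e1 : σ (t * s) = m / h * (t * s) := by rw [map_mul, ht, hσs]; ring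
  have e2 : τ (t * s) = n / g * (t * s) := by rw [map_mul, hs]; field_simp
  refine ⟨g * h / (t * s) ^ 2, t * s, ?_, mul_ne_zero t0 s0, ?_, ?_, ?_⟩
  · exact div_ne_zero (mul_ne_zero g0 h0) (pow_ne_zero 2 (mul_ne_zero t0 s0))
  · rw [map_div₀, map_mul, map_pow, e1, hσg, hσh]; field_simp
  · rw [map_div₀, map_mul, map_pow, e2, hτh, hτg]; field_simp
  · field_simp

/-- If `σ` negates a square root `n` of the norm of `p`, then `p · τp` is never congruent to some
`l · σl` modulo squares and the base field: such a congruence gives `z` with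
`(p · τp) · σz = ± n z`, and applying `σ` yields `n² z = -n² z`. -/
lemma KleinData.not_inBase (D : KleinData σ τ r1 r2) {t p l : K}
    (hp : HasType σ τ (-1) t p) : ¬ InBase σ τ ((p * τ p) * (l * σ l)) := by
  obtain ⟨n, n0, hn, hσn, -⟩ := hp
  rw [neg_one_mul] at hσn
  rintro ⟨w, z, w0, z0, hσw, -, hz⟩
  have hhn : (p * τ p) * σ (p * τ p) = n ^ 2 := by
    rw [← hn]; simp only [nm, map_mul]; ring
  have hz' := congrArg σ hz
  have e : σ (l * σ l) = l * σ l := by rw [map_mul, D.σσ, mul_comm]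
  rw [map_mul σ (p * τ p), e, map_mul σ w, map_pow, hσw] at hz'
  have hsq : ((p * τ p) * σ z) ^ 2 = (n * z) ^ 2 := by
    refine mul_left_cancel₀ w0 ?_
    linear_combination (-(p * τ p) ^ 2) * hz' + n ^ 2 * hz + (p * τ p) * (l * σ l) * hhn
  have hzz : ∃ s : K, (s = 1 ∨ s = -1) ∧ (p * τ p) * σ z = s * (n * z) := by
    rcases sq_eq_sq_iff_eq_or_eq_neg.1 hsq with h | h
    · exact ⟨1, Or.inl rfl, by rw [h, one_mul]⟩
    · exact ⟨-1, Or.inr rfl, by rw [h, neg_one_mul]⟩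
  obtain ⟨s, hs, hzz⟩ := hzz
  have hσs : σ s = s := by rcases hs with rfl | rfl <;> simp
  have hss : s * s = 1 := by rcases hs with rfl | rfl <;> simp
  have h2 := congrArg σ hzz
  rw [map_mul, D.σσ, map_mul σ s, map_mul σ n, hσs, hσn] at h2
  have : 2 * (n ^ 2 * z) = 0 := by
    linear_combination (p * τ p) * h2 - z * hhn - s * n * hzz - n ^ 2 * z * hss
  exact mul_ne_zero D.two_ne (mul_ne_zero (pow_ne_zero 2 n0) z0) this

end Field

/-! ### The module of square classes -/

section Classes

variable {F K : Type} [Field F] [Field K] [Algebra F K]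

lemma exists_mkJ (j : JK K) : ∃ u : Kˣ, mkJ K u = j :=
  QuotientGroup.mk_surjective (s := Sq K) j.toMul

lemma mkJ_mul (u v : Kˣ) : mkJ K (u * v) = mkJ K u + mkJ K v := rfl

lemma mkJ_eq_iff {u v : Kˣ} : mkJ K u = mkJ K v ↔ ∃ t : K, t ≠ 0 ∧ (u : K) = v * t ^ 2 := by
  have h : mkJ K u = mkJ K v ↔ v⁻¹ * u ∈ Sq K :=
    eq_comm.trans (QuotientGroup.eq (s := Sq K) (a := v) (b := u))
  rw [h]
  constructor
  · rintro ⟨z, hz⟩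
    refine ⟨z, z.ne_zero, ?_⟩
    have e : u = v * z ^ 2 := by
      rw [powMonoidHom_apply] at hz
      rw [hz, mul_inv_cancel_left]
    rw [e]
    simp
  · rintro ⟨t, t0, ht⟩
    refine ⟨Units.mk0 t t0, ?_⟩
    rw [powMonoidHom_apply, eq_inv_mul_iff_mul_eq]
    ext
    simp [ht]

lemma mkJ_eq_zero_iff {u : Kˣ} : mkJ K u = 0 ↔ ∃ t : K, t ≠ 0 ∧ (u : K) = t ^ 2 := by
  have h : mkJ K u = 0 ↔ mkJ K u = mkJ K 1 := Iff.rfl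
  rw [h, mkJ_eq_iff]
  simp

lemma mkJ_eq_zero {u : Kˣ} {t : K} (h : (u : K) = t ^ 2) : mkJ K u = 0 :=
  mkJ_eq_zero_iff.2 ⟨t, by rintro rfl; exact u.ne_zero (by rw [h]; simp), h⟩

/-- The operator `ρ + 1` on `J(K)`. -/
noncomputable def opJ (ρ : K ≃ₐ[F] K) : JK K →ₗ[ZMod 2] JK K :=
  AddMonoidHom.toZModLinearMap 2 (AddMonoidHom.id (JK K) + (Jact F K ρ).toAddMonoidHom)

lemma opJ_apply (ρ : K ≃ₐ[F] K) (j : JK K) : opJ ρ j = j + Jact F K ρ j := rfl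

lemma opJ_mkJ (ρ : K ≃ₐ[F] K) (u : Kˣ) : opJ ρ (mkJ K u) = mkJ K (u * galU F K ρ u) := rfl

lemma galU_val (ρ : K ≃ₐ[F] K) (u : Kˣ) : ((galU F K ρ u : Kˣ) : K) = ρ u := rfl

/-- The underlying ring endomorphism of an automorphism of `K` over `F`. -/
def toHom (ρ : K ≃ₐ[F] K) : K →+* K := ρ

lemma toHom_apply (ρ : K ≃ₐ[F] K) (k : K) : toHom ρ k = ρ k := rfl

/-- The subspace of `J(K)` of classes of elements fixed by `σ` and `τ`. -/
noncomputable def baseJ (σ τ : K →+* K) : Submodule (ZMod 2) (JK K) :=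
  AddSubgroup.toZModSubmodule 2
    { carrier := {j | ∃ u : Kˣ, σ u = u ∧ τ u = u ∧ mkJ K u = j}
      zero_mem' := ⟨1, by simp, by simp, rfl⟩
      add_mem' := by
        rintro _ _ ⟨u, h1, h2, rfl⟩ ⟨v, g1, g2, rfl⟩
        exact ⟨u * v, by simp [h1, g1], by simp [h2, g2], rfl⟩
      neg_mem' := by
        rintro _ ⟨u, h1, h2, rfl⟩
        exact ⟨u⁻¹, by simp [h1], by simp [h2], rfl⟩ }

lemma mkJ_mem_baseJ {σ τ : K →+* K} {u : Kˣ} : mkJ K u ∈ baseJ σ τ ↔ InBase σ τ (u : K) := by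
  have h : mkJ K u ∈ baseJ σ τ ↔ ∃ v : Kˣ, σ v = v ∧ τ v = v ∧ mkJ K v = mkJ K u := Iff.rfl
  rw [h]
  constructor
  · rintro ⟨v, h1, h2, h3⟩
    obtain ⟨t, t0, ht⟩ := mkJ_eq_iff.1 h3.symm
    exact ⟨v, t, v.ne_zero, t0, h1, h2, ht⟩
  · rintro ⟨w, t, w0, t0, h1, h2, h3⟩
    exact ⟨Units.mk0 w w0, h1, h2, (mkJ_eq_iff.2 ⟨t, t0, h3⟩).symm⟩

variable {σ1 σ2 : K ≃ₐ[F] K} {r1 r2 : K}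

lemma op_left_mem (D : KleinData (toHom σ1) (toHom σ2) r1 r2) (u : Kˣ) :
    opJ σ1 (mkJ K u) ∈ baseJ (toHom σ1) (toHom σ2) ↔
      HasType (toHom σ1) (toHom σ2) 1 1 (u : K) := by
  rw [opJ_mkJ, mkJ_mem_baseJ]
  exact D.inBase_left_iff

lemma op_right_mem (D : KleinData (toHom σ1) (toHom σ2) r1 r2) (u : Kˣ) :
    opJ σ2 (mkJ K u) ∈ baseJ (toHom σ1) (toHom σ2) ↔
      HasType (toHom σ1) (toHom σ2) 1 1 (u : K) := by
  rw [opJ_mkJ, mkJ_mem_baseJ]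
  exact D.inBase_right_iff

lemma op_mid_mem (D : KleinData (toHom σ1) (toHom σ2) r1 r2) (u : Kˣ) :
    opJ σ1 (mkJ K u) + opJ σ2 (mkJ K u) ∈ baseJ (toHom σ1) (toHom σ2) ↔
      HasType (toHom σ1) (toHom σ2) 1 1 (u : K) := by
  have e : opJ σ1 (mkJ K u) + opJ σ2 (mkJ K u) = mkJ K (galU F K σ1 u * galU F K σ2 u) := by
    rw [opJ_mkJ, opJ_mkJ, ← mkJ_mul, mkJ_eq_iff]
    exact ⟨u, u.ne_zero, by push_cast; ring⟩
  rw [e, mkJ_mem_baseJ]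
  exact D.inBase_mid_iff

/-- `(1 + σ1)(1 + σ2)` is the norm on square classes. -/
lemma op_op_eq_zero_iff (u : Kˣ) :
    opJ σ1 (opJ σ2 (mkJ K u)) = 0 ↔ ∃ n, n ≠ 0 ∧ nm (toHom σ1) (toHom σ2) (u : K) = n ^ 2 := by
  rw [opJ_mkJ, opJ_mkJ, mkJ_eq_zero_iff]
  refine exists_congr fun n => and_congr_right fun _ => ?_
  have e : ((u * galU F K σ2 u * galU F K σ1 (u * galU F K σ2 u) : Kˣ) : K) =
      nm (toHom σ1) (toHom σ2) (u : K) := by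
    simp only [nm, toHom_apply, Units.val_mul, galU_val, map_mul]
    ring
  rw [e]

/-- The square classes satisfy the axioms of `Setup`, with `V` the classes coming from the base
field. -/
lemma setup_JMod (D : KleinData (toHom σ1) (toHom σ2) r1 r2) :
    @Setup (JMod F K σ1 σ2) (inferInstanceAs (Module (ZMod 2) (JK K))) (opJ σ1) (opJ σ2)
      (baseJ (toHom σ1) (toHom σ2)) := by
  have cancel : ∀ a b : JK K, a + (a + b) = b := fun a b => by
    rw [← add_assoc, JK_two, zero_add]
  refine @Setup.mk (JMod F K σ1 σ2) (inferInstanceAs (Module (ZMod 2) (JK K))) _ _ _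
    ?_ ?_ ?_ ?_ ?_ ?_ ?_ ?_
  · exact fun j => (cancel j _).symm
  · exact fun j => (cancel j _).symm
  · intro j
    obtain ⟨u, rfl⟩ := exists_mkJ j
    change opJ σ1 (opJ σ1 (mkJ K u)) = 0
    rw [opJ_mkJ, opJ_mkJ]
    have := D.σσ u
    simp only [toHom_apply] at this
    refine mkJ_eq_zero (t := u * σ1 u) ?_
    simp only [Units.val_mul, galU_val, map_mul, this]
    ring
  · intro j
    obtain ⟨u, rfl⟩ := exists_mkJ j
    change opJ σ2 (opJ σ2 (mkJ K u)) = 0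
    rw [opJ_mkJ, opJ_mkJ]
    have := D.ττ u
    simp only [toHom_apply] at this
    refine mkJ_eq_zero (t := u * σ2 u) ?_
    simp only [Units.val_mul, galU_val, map_mul, this]
    ring
  · intro j
    obtain ⟨u, rfl⟩ := exists_mkJ j
    change opJ σ2 (opJ σ1 (mkJ K u)) = opJ σ1 (opJ σ2 (mkJ K u))
    simp only [opJ_mkJ]
    congr 1
    ext
    have := D.comm u
    simp only [toHom_apply] at this
    simp only [Units.val_mul, galU_val, map_mul, this]
    ring
  · intro j
    obtain ⟨u, rfl⟩ := exists_mkJ j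
    exact (op_left_mem D u).trans (op_right_mem D u).symm
  · intro j
    obtain ⟨u, rfl⟩ := exists_mkJ j
    exact (op_left_mem D u).trans (op_mid_mem D u).symm
  · intro j hj
    obtain ⟨u, rfl⟩ := exists_mkJ j
    obtain ⟨s1, s2, s3, z1, z2, h1, h2, h3, f1, f2, f3, g1, -⟩ :=
      D.split ((op_left_mem D u).1 hj)
    simp only [toHom_apply] at f1 f2 f3 g1
    let v1 := Units.mk0 s1 h1
    let v2 := Units.mk0 s2 h2
    let v3 := Units.mk0 s3 h3
    refine ⟨mkJ K v1, mkJ K (v2 * (u * v1 * v2 * v3)), mkJ K v3, ?_, ?_, ?_, ?_⟩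
    · change opJ σ2 (mkJ K v1) = 0
      rw [opJ_mkJ]
      refine mkJ_eq_zero (t := s1) ?_
      simp only [v1, Units.val_mul, galU_val, Units.val_mk0, f1]
      ring
    · change opJ σ1 (mkJ K (v2 * (u * v1 * v2 * v3))) = 0
      rw [opJ_mkJ]
      refine mkJ_eq_zero (t := s2 * z1) ?_
      rw [mul_pow, ← g1]
      simp only [v1, v2, v3, Units.val_mul, galU_val, Units.val_mk0, map_mul, f2]
      ring
    · change opJ σ1 (mkJ K v3) = opJ σ2 (mkJ K v3)
      rw [opJ_mkJ, opJ_mkJ]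
      congr 2
      ext
      exact f3
    · change mkJ K u = mkJ K v1 + mkJ K (v2 * (u * v1 * v2 * v3)) + mkJ K v3
      rw [← mkJ_mul, ← mkJ_mul]
      symm
      refine mkJ_eq_iff.2 ⟨s1 * s2 * s3, mul_ne_zero (mul_ne_zero h1 h2) h3, ?_⟩
      simp only [v1, v2, v3, Units.val_mul, Units.val_mk0]
      ring

lemma KleinData.one_ne_neg_one (D : KleinData (toHom σ1) (toHom σ2) r1 r2) : (1 : K) ≠ -1 := by
  intro h
  exact D.two_ne (by linear_combination h)

/-- If every element whose norm is a square has type `(1, 1)` or the type of `p`, the case of a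
single exceptional generator applies. -/
lemma decomposition_one (D : KleinData (toHom σ1) (toHom σ2) r1 r2) (p : Kˣ) {s t : K}
    (hs : s * s = 1) (ht : t * t = 1) (hst : ¬ (s = 1 ∧ t = 1))
    (hp : HasType (toHom σ1) (toHom σ2) s t (p : K))
    (h : ∀ (u : Kˣ) n, nm (toHom σ1) (toHom σ2) (u : K) = n ^ 2 →
      HasType (toHom σ1) (toHom σ2) 1 1 (u : K) ∨ HasType (toHom σ1) (toHom σ2) s t (u : K)) :
    HasDecomposition (JMod F K σ1 σ2) := by
  let _ : Module (ZMod 2) (JMod F K σ1 σ2).carrier := inferInstanceAs (Module (ZMod 2) (JK K))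
  refine Setup.case_one (setup_JMod D) (mkJ K p) ?_ ?_ ?_
  · obtain ⟨n, n0, hn, -⟩ := hp
    exact (op_op_eq_zero_iff p).2 ⟨n, n0, hn⟩
  · intro hV
    exact hst (hp.unique ((op_left_mem D p).1 hV))
  · intro j hj
    obtain ⟨u, rfl⟩ := exists_mkJ j
    obtain ⟨n, -, hn⟩ := (op_op_eq_zero_iff u).1 hj
    rcases h u n hn with hu | hu
    · exact Or.inl ((op_left_mem D u).2 hu)
    · refine Or.inr ((op_left_mem D (u * p)).2 ?_)
      have := hu.mul hp
      rwa [hs, ht] at this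

/-- Elements of two independent nontrivial types put the module in the case of two exceptional
generators. -/
lemma decomposition_both (D : KleinData (toHom σ1) (toHom σ2) r1 r2) (p q : Kˣ)
    (hp : HasType (toHom σ1) (toHom σ2) (-1) 1 (p : K))
    (hq : HasType (toHom σ1) (toHom σ2) 1 (-1) (q : K)) :
    HasDecomposition (JMod F K σ1 σ2) := by
  let _ : Module (ZMod 2) (JMod F K σ1 σ2).carrier := inferInstanceAs (Module (ZMod 2) (JK K))
  have hpq : HasType (toHom σ1) (toHom σ2) (-1) (-1) ((p * q : Kˣ) : K) := by
    simpa using hp.mul hq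
  refine Setup.case_both (setup_JMod D) (mkJ K p) (mkJ K q) ?_ ?_ ?_ ?_ ?_ ?_ ?_ ?_
  · obtain ⟨n, n0, hn, -⟩ := hp
    exact (op_op_eq_zero_iff p).2 ⟨n, n0, hn⟩
  · obtain ⟨n, n0, hn, -⟩ := hq
    exact (op_op_eq_zero_iff q).2 ⟨n, n0, hn⟩
  · exact fun hV => D.one_ne_neg_one (hp.unique ((op_left_mem D p).1 hV)).1.symm
  · exact fun hV => D.one_ne_neg_one (hq.unique ((op_left_mem D q).1 hV)).2.symm
  · exact fun hV => D.one_ne_neg_one (hpq.unique ((op_left_mem D (p * q)).1 hV)).1.symm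
  · intro j hV
    obtain ⟨u, rfl⟩ := exists_mkJ j
    exact D.not_inBase (l := u) hp
      (mkJ_mem_baseJ (u := (p * galU F K σ2 p) * (u * galU F K σ1 u)).1 hV)
  · exact mkJ_mem_baseJ (u := (p * galU F K σ1 p) * (q * galU F K σ2 q)).2
      (D.relation p.ne_zero q.ne_zero hp hq)
  · intro j hj
    obtain ⟨u, rfl⟩ := exists_mkJ j
    obtain ⟨n, -, hn⟩ := (op_op_eq_zero_iff u).1 hj
    rcases D.exists_hasType u.ne_zero hn with hu | hu | hu | hu
    · exact Or.inl ((op_left_mem D u).2 hu)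
    · exact Or.inr (Or.inl ((op_left_mem D (u * p)).2 (by simpa using hu.mul hp)))
    · exact Or.inr (Or.inr (Or.inl ((op_left_mem D (u * q)).2 (by simpa using hu.mul hq))))
    · exact Or.inr (Or.inr (Or.inr ((op_left_mem D (u * (p * q))).2 (by
        simpa using hu.mul hpq))))

/-- The types realized by elements of `K×` form a subgroup of `{±1} × {±1}`, and its order decides
between no, one and two exceptional generators. -/
lemma hasDecomposition_JMod (D : KleinData (toHom σ1) (toHom σ2) r1 r2) :
    HasDecomposition (JMod F K σ1 σ2) := by
  have h1 := D.one_ne_neg_one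
  by_cases hA : ∃ p : Kˣ, HasType (toHom σ1) (toHom σ2) (-1) 1 (p : K)
  · obtain ⟨p, hp⟩ := hA
    by_cases hB : ∃ q : Kˣ, HasType (toHom σ1) (toHom σ2) 1 (-1) (q : K)
    · obtain ⟨q, hq⟩ := hB
      exact decomposition_both D p q hp hq
    · refine decomposition_one D p (by simp) (by simp) (fun h => h1 h.1.symm) hp fun u n hn => ?_
      rcases D.exists_hasType u.ne_zero hn with hu | hu | hu | hu
      · exact Or.inl hu
      · exact Or.inr hu
      · exact (hB ⟨u, hu⟩).elim
      · exact (hB ⟨p * u, by simpa using hp.mul hu⟩).elim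
  · by_cases hB : ∃ q : Kˣ, HasType (toHom σ1) (toHom σ2) 1 (-1) (q : K)
    · obtain ⟨q, hq⟩ := hB
      refine decomposition_one D q (by simp) (by simp) (fun h => h1 h.2.symm) hq fun u n hn => ?_
      rcases D.exists_hasType u.ne_zero hn with hu | hu | hu | hu
      · exact Or.inl hu
      · exact (hA ⟨u, hu⟩).elim
      · exact Or.inr hu
      · exact (hA ⟨q * u, by simpa using hq.mul hu⟩).elim
    · by_cases hC : ∃ c : Kˣ, HasType (toHom σ1) (toHom σ2) (-1) (-1) (c : K)
      · obtain ⟨c, hc⟩ := hC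
        refine decomposition_one D c (by simp) (by simp) (fun h => h1 h.1.symm) hc
          fun u n hn => ?_
        rcases D.exists_hasType u.ne_zero hn with hu | hu | hu | hu
        · exact Or.inl hu
        · exact (hA ⟨u, hu⟩).elim
        · exact (hB ⟨u, hu⟩).elim
        · exact Or.inr hu
      · let _ : Module (ZMod 2) (JMod F K σ1 σ2).carrier :=
          inferInstanceAs (Module (ZMod 2) (JK K))
        refine Setup.case_zero (setup_JMod D) fun j hj => ?_
        obtain ⟨u, rfl⟩ := exists_mkJ j
        obtain ⟨n, -, hn⟩ := (op_op_eq_zero_iff u).1 hj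
        rcases D.exists_hasType u.ne_zero hn with hu | hu | hu | hu
        · exact (op_left_mem D u).2 hu
        · exact (hA ⟨u, hu⟩).elim
        · exact (hB ⟨u, hu⟩).elim
        · exact (hC ⟨u, hu⟩).elim

/-- The action on `r1` and `r2` separates the elements `1, σ1, σ2, σ1σ2`. -/
lemma eq_one_of_fix (h2 : (2 : K) ≠ 0) (hr1 : r1 ≠ 0) (hr2 : r2 ≠ 0)
    (hσ1r1 : σ1 r1 = -r1) (hσ2r1 : σ2 r1 = r1) (hσ2r2 : σ2 r2 = -r2)
    (hG : ∀ τ : K ≃ₐ[F] K, τ = 1 ∨ τ = σ1 ∨ τ = σ2 ∨ τ = σ1 * σ2)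
    (ρ : K ≃ₐ[F] K) (e1 : ρ r1 = r1) (e2 : ρ r2 = r2) : ρ = 1 := by
  have hne : ∀ r : K, r ≠ 0 → -r ≠ r := fun r hr h =>
    mul_ne_zero h2 hr (by linear_combination -h)
  rcases hG ρ with h | h | h | h
  · exact h
  · exact (hne r1 hr1 (by rw [← hσ1r1, ← h, e1])).elim
  · exact (hne r2 hr2 (by rw [← hσ2r2, ← h, e2])).elim
  · refine (hne r1 hr1 ?_).elim
    rw [h, AlgEquiv.mul_apply, hσ2r1, hσ1r1] at e1
    exact e1

end Classes

end Biquad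

/-- Let `F` be a field of characteristic `≠ 2`, `a1, a2 ∈ F×` with
`𝔽₂`-independent square classes, `K = F(√a1, √a2)`, and
`Gal(K/F) = {1, σ1, σ2, σ1σ2} ≅ ℤ/2ℤ × ℤ/2ℤ` where `σi(√aj) = (−1)^{δij}√aj`.
Then there are index sets `I0, …, I6` and a module `X` isomorphic to one of `{0}`,
`𝔽₂`, `𝔽₂ ⊕ 𝔽₂`, `Ω⁻¹`, `Ω⁻²`, `Ω⁻¹ ⊕ Ω⁻¹` such that, as `𝔽₂[Gal(K/F)]`-modules,
`J(K) ≅ X ⊕ (⊕_{I0} 𝔽₂[Ḡ0]) ⊕ (⊕_{I1} 𝔽₂[Ḡ1]) ⊕ (⊕_{I2} 𝔽₂[Ḡ2]) ⊕ (⊕_{I3} 𝔽₂[Ḡ3])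
⊕ (⊕_{I4} 𝔽₂[Ḡ4]) ⊕ (⊕_{I5} Ω¹) ⊕ (⊕_{I6} Ω²)`. -/
theorem stmt0
    (F K : Type) [Field F] [Field K] [Algebra F K] (hchar : (2 : F) ≠ 0)
    (a1 a2 : F) (ha1 : a1 ≠ 0) (ha2 : a2 ≠ 0)
    (hi1 : ¬ IsSquare a1) (hi2 : ¬ IsSquare a2) (hi12 : ¬ IsSquare (a1 * a2))
    (r1 r2 : K) (hr1 : r1 ^ 2 = algebraMap F K a1) (hr2 : r2 ^ 2 = algebraMap F K a2)
    (hgen : IntermediateField.adjoin F {r1, r2} = ⊤)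
    [IsGalois F K]
    (σ1 σ2 : K ≃ₐ[F] K)
    (hσ1r1 : σ1 r1 = -r1) (hσ1r2 : σ1 r2 = r2)
    (hσ2r1 : σ2 r1 = r1) (hσ2r2 : σ2 r2 = -r2)
    (hG : ∀ τ : K ≃ₐ[F] K, τ = 1 ∨ τ = σ1 ∨ τ = σ2 ∨ τ = σ1 * σ2)
    (hG4 : Nat.card (K ≃ₐ[F] K) = 4) :
    ∃ X : GMod,
      (Nonempty (GModIso X zeroMod) ∨ Nonempty (GModIso X f2Mod) ∨
        Nonempty (GModIso X (f2Mod.prod f2Mod)) ∨ Nonempty (GModIso X o1Mod.dual) ∨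
        Nonempty (GModIso X o2Mod.dual) ∨
        Nonempty (GModIso X (o1Mod.dual.prod o1Mod.dual))) ∧
      ∃ I0 I1 I2 I3 I4 I5 I6 : Type,
        Nonempty (GModIso (JMod F K σ1 σ2)
          (X.prod ((fg0Mod.dsum I0).prod ((fg1Mod.dsum I1).prod ((fg2Mod.dsum I2).prod
            ((fg3Mod.dsum I3).prod ((f2Mod.dsum I4).prod
              ((o1Mod.dsum I5).prod (o2Mod.dsum I6))))))))) := by
  have two_ne : (2 : K) ≠ 0 := by
    rw [← map_ofNat (algebraMap F K) 2]
    exact (map_ne_zero _).2 hchar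
  have r1_ne : r1 ≠ 0 := by
    rintro rfl
    exact (map_ne_zero (algebraMap F K)).2 ha1 (by rw [← hr1]; simp)
  have r2_ne : r2 ≠ 0 := by
    rintro rfl
    exact (map_ne_zero (algebraMap F K)).2 ha2 (by rw [← hr2]; simp)
  have triv := Biquad.eq_one_of_fix two_ne r1_ne r2_ne hσ1r1 hσ2r1 hσ2r2 hG
  have e1 : σ1 * σ1 = 1 := triv _ (by simp [hσ1r1]) (by simp [hσ1r2])
  have e2 : σ2 * σ2 = 1 := triv _ (by simp [hσ2r1]) (by simp [hσ2r2])
  have e4 : σ2 * σ1 = σ1 * σ2 := by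
    calc σ2 * σ1 = (σ1 * σ1) * (σ2 * σ1) * (σ2 * σ2) := by rw [e1, e2, one_mul, mul_one]
      _ = σ1 * ((σ1 * σ2) * (σ1 * σ2)) * σ2 := by group
      _ = σ1 * σ2 := by
        have e5 : (σ1 * σ2) * (σ1 * σ2) = 1 :=
          triv _ (by simp [hσ1r1, hσ2r1]) (by simp [hσ1r2, hσ2r2])
        rw [e5, mul_one]
  exact Biquad.hasDecomposition_JMod (r1 := r1) (r2 := r2)
    { two_ne := two_ne
      r1_ne := r1_ne
      r2_ne := r2_ne
      σσ := fun k => DFunLike.congr_fun e1 k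
      ττ := fun k => DFunLike.congr_fun e2 k
      comm := fun k => DFunLike.congr_fun e4 k
      σr1 := hσ1r1
      σr2 := hσ1r2
      τr1 := hσ2r1
      τr2 := hσ2r2 }
end

section
/- For every f, g ∈ F×, there exists γ ∈ K× such that γ·σ1(γ) ∈ f·K×² and γ·σ2(γ) ∈ g·K×² if and only if (a1, f) + (a2, g) ∈ S. -/
/-!
The proof goes through an intermediate condition on pairs `β, λ ∈ K`:
`β·σ1(β) = f'`, `λ·σ2(λ) = g'` and `β·σ1(λ) = λ·σ2(β)`, where
`f' = f·a1^e1·a2^e2` and `g' = g·a2^e3`. It says that `βσ1` and `λσ2` are commuting semilinear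
operators on `K` with squares `f'` and `g'`.

*Algebra.* Since `(a,b) ⊗ (a,c) ≃ (a,bc) ⊗ M₂(F)` (`quat_mul`), the fivefold tensor product is
`(a1,f') ⊗ (a2,g') ⊗ M₈(F)` (`five_equiv`). A pair `β, λ` makes the biquaternion algebra
`(a1,f') ⊗ (a2,g')` act on `K`, with `i1, i2` acting as multiplication by `√a1, √a2` and `j1, j2`
as `βσ1, λσ2`; by simplicity and a dimension count this action is an isomorphism onto `M₄(F)`
(`biquat_split`). Conversely, if the fivefold product is `M₃₂(F)`, cutting `F³²` down by an
idempotent of `M₈(F)` gives a module of dimension `4` over the biquaternion algebra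
(`matrix_peel`). The elements `i1, i2` make it a `K`-line, and a generator of that line produces
`β, λ` (`exists_pair_of_rep`).

*Arithmetic.* Given `γ` with `γ·σ1(γ) = f·k1²` and `γ·σ2(γ) = g·k2²`, invariance of the left sides
gives `σ1(k1) = ±k1` and `σ2(k2) = ±k2`, and comparing two expressions for the norm of `γ` gives
`f·k1·σ2(k1) = ±g·k2·σ1(k2)` for invariant `k1, k2`. The three signs are absorbed by `e1, e3, e2`,
after which `β = γ/k1` and `λ = γ/k2` work (`exists_pair`). Conversely `β, λ` give
`γ = √a1·√a2·λ·(β - σ2(β)) = √a1·√a2·β·(λ - σ1(λ))`, or `γ = βλ` if this vanishes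
(`exists_gamma`).
-/

open Quaternion TensorProduct

section

variable (F : Type) [Field F]

/-- The Brauer class of the quaternion algebra `(a,b)` over `F` when `e = true`, and the
trivial Brauer class (represented by the split algebra `M₂(F)`) when `e = false`.
Tensoring with this algebra realizes adding `e•(a,b)` to a Brauer class. -/
def opt (e : Bool) (a b : F) : Type :=
  match e with
  | true => ℍ[F, a, b]
  | false => Matrix (Fin 2) (Fin 2) F

instance (e : Bool) (a b : F) : Ring (opt F e a b) :=
  match e with
  | true => inferInstanceAs (Ring ℍ[F, a, b])
  | false => inferInstanceAs (Ring (Matrix (Fin 2) (Fin 2) F))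

instance (e : Bool) (a b : F) : Algebra F (opt F e a b) :=
  match e with
  | true => inferInstanceAs (Algebra F ℍ[F, a, b])
  | false => inferInstanceAs (Algebra F (Matrix (Fin 2) (Fin 2) F))

end

/-! ### Quaternion algebras and their tensor products -/

section Algebra

set_option maxSynthPendingDepth 5

variable {F : Type*} [Field F]

/-- Every element of `ℍ[F,a,b] ⊗ C` is a combination of `1, i, j, k` with coefficients in `C`. -/
lemma quat_tensor_decomp {a b : F} {C : Type*} [Ring C] [Algebra F C] (x : ℍ[F, a, b] ⊗[F] C) :
    ∃ c0 c1 c2 c3 : C, x = (1 : ℍ[F, a, b]) ⊗ₜ[F] c0 + (⟨0, 1, 0, 0⟩ : ℍ[F, a, b]) ⊗ₜ[F] c1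
      + (⟨0, 0, 1, 0⟩ : ℍ[F, a, b]) ⊗ₜ[F] c2 + (⟨0, 0, 0, 1⟩ : ℍ[F, a, b]) ⊗ₜ[F] c3 := by
  induction x using TensorProduct.induction_on with
  | zero => exact ⟨0, 0, 0, 0, by simp⟩
  | tmul q c =>
    refine ⟨q.re • c, q.imI • c, q.imJ • c, q.imK • c, ?_⟩
    simp only [← TensorProduct.smul_tmul, ← TensorProduct.add_tmul]
    congr 1
    ext <;> simp
  | add x y hx hy =>
    obtain ⟨c0, c1, c2, c3, rfl⟩ := hx
    obtain ⟨d0, d1, d2, d3, rfl⟩ := hy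
    refine ⟨c0 + d0, c1 + d1, c2 + d2, c3 + d3, ?_⟩
    simp only [TensorProduct.tmul_add]
    abel

/-- A homomorphism out of `ℍ[F,a,b] ⊗ C` is injective as soon as it is injective on `C`: averaging
over conjugation by `i` and `j` extracts the coefficients of an element of the kernel. -/
lemma quat_tensor_injective (h2 : (2 : F) ≠ 0) {a b : F} (ha : a ≠ 0) (hb : b ≠ 0)
    {C A : Type*} [Ring C] [Algebra F C] [Ring A] [Algebra F A]
    (φ : ℍ[F, a, b] ⊗[F] C →ₐ[F] A)
    (hφ : ∀ c : C, φ ((1 : ℍ[F, a, b]) ⊗ₜ[F] c) = 0 → c = 0) :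
    Function.Injective φ := by
  set i : ℍ[F, a, b] := ⟨0, 1, 0, 0⟩ with hi
  set j : ℍ[F, a, b] := ⟨0, 0, 1, 0⟩ with hj
  set k : ℍ[F, a, b] := ⟨0, 0, 0, 1⟩ with hk
  have hii : i * i = a • 1 := by ext <;> simp [i]
  have hjj : j * j = b • 1 := by ext <;> simp [j]
  have hij : i * j = k := by ext <;> simp [i, j, k]
  have hji : j * i = -k := by ext <;> simp [i, j, k]
  have hik : i * k = a • j := by ext <;> simp [i, j, k]
  have hki : k * i = -(a • j) := by ext <;> simp [i, j, k]
  have hkj : k * j = b • i := by ext <;> simp [i, j, k]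
  have hjk : j * k = -(b • i) := by ext <;> simp [i, j, k]
  have hkk : k * k = (-(a * b)) • 1 := by ext <;> simp [k]
  -- the coefficient of `1` of an element of the kernel vanishes
  have key : ∀ c0 c1 c2 c3 : C,
      φ ((1 : ℍ[F, a, b]) ⊗ₜ[F] c0 + i ⊗ₜ[F] c1 + j ⊗ₜ[F] c2 + k ⊗ₜ[F] c3) = 0 → c0 = 0 := by
    intro c0 c1 c2 c3 h
    have e1 : a • ((1 : ℍ[F, a, b]) ⊗ₜ[F] c0 + i ⊗ₜ[F] c1 + j ⊗ₜ[F] c2 + k ⊗ₜ[F] c3)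
        + (i ⊗ₜ[F] (1 : C)) * ((1 : ℍ[F, a, b]) ⊗ₜ[F] c0 + i ⊗ₜ[F] c1 + j ⊗ₜ[F] c2 + k ⊗ₜ[F] c3)
          * (i ⊗ₜ[F] (1 : C)) = (2 * a) • ((1 : ℍ[F, a, b]) ⊗ₜ[F] c0 + i ⊗ₜ[F] c1) := by
      simp only [mul_add, add_mul, Algebra.TensorProduct.tmul_mul_tmul, one_mul, mul_one]
      simp only [hii, hij, hik, smul_mul_assoc, one_mul, hki, hji, smul_neg]
      simp only [TensorProduct.neg_tmul, ← TensorProduct.smul_tmul']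
      module
    have e2 : b • ((1 : ℍ[F, a, b]) ⊗ₜ[F] c0 + i ⊗ₜ[F] c1)
        + (j ⊗ₜ[F] (1 : C)) * ((1 : ℍ[F, a, b]) ⊗ₜ[F] c0 + i ⊗ₜ[F] c1) * (j ⊗ₜ[F] (1 : C))
        = (2 * b) • ((1 : ℍ[F, a, b]) ⊗ₜ[F] c0) := by
      simp only [mul_add, add_mul, Algebra.TensorProduct.tmul_mul_tmul, one_mul, mul_one]
      simp only [hjj, hji, neg_mul, hkj]
      simp only [TensorProduct.neg_tmul, ← TensorProduct.smul_tmul']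
      module
    have h1 := congrArg φ e1
    rw [map_add, map_smul, map_mul, map_mul, h, map_smul] at h1
    have h1' : φ ((1 : ℍ[F, a, b]) ⊗ₜ[F] c0 + i ⊗ₜ[F] c1) = 0 := by
      have : (2 * a) • φ ((1 : ℍ[F, a, b]) ⊗ₜ[F] c0 + i ⊗ₜ[F] c1) = 0 := by
        rw [← h1]; simp
      exact (smul_eq_zero.mp this).resolve_left (mul_ne_zero h2 ha)
    have h3 := congrArg φ e2
    rw [map_add, map_smul, map_mul, map_mul, h1', map_smul] at h3
    have h3' : (2 * b) • φ ((1 : ℍ[F, a, b]) ⊗ₜ[F] c0) = 0 := by rw [← h3]; simp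
    exact hφ _ ((smul_eq_zero.mp h3').resolve_left (mul_ne_zero h2 hb))
  rw [injective_iff_map_eq_zero]
  intro x hx
  obtain ⟨c0, c1, c2, c3, rfl⟩ := quat_tensor_decomp x
  have z0 := key _ _ _ _ hx
  -- multiplication by `i`, `j`, `k` moves the other coefficients into the first place
  have z1 : a • c1 = 0 := by
    apply key _ c0 (a • c3) c2
    have := congrArg (φ (i ⊗ₜ[F] (1 : C)) * ·) hx
    simp only [mul_zero, ← map_mul] at this
    rw [← this]
    congr 1
    simp only [mul_add, Algebra.TensorProduct.tmul_mul_tmul, one_mul, mul_one, ← hi, ← hj, ← hk,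
      hii, hij, hik, TensorProduct.smul_tmul', TensorProduct.tmul_smul]
    abel
  have z2 : b • c2 = 0 := by
    apply key _ (-(b • c3)) c0 (-c1)
    have := congrArg (φ (j ⊗ₜ[F] (1 : C)) * ·) hx
    simp only [mul_zero, ← map_mul] at this
    rw [← this]
    congr 1
    simp only [mul_add, Algebra.TensorProduct.tmul_mul_tmul, one_mul, mul_one, ← hi, ← hj, ← hk,
      hjj, hji, hjk, TensorProduct.smul_tmul', TensorProduct.tmul_smul, TensorProduct.neg_tmul,
      TensorProduct.tmul_neg]
    abel
  have z3 : (-(a * b)) • c3 = 0 := by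
    apply key _ (b • c2) (-(a • c1)) c0
    have := congrArg (φ (k ⊗ₜ[F] (1 : C)) * ·) hx
    simp only [mul_zero, ← map_mul] at this
    rw [← this]
    congr 1
    simp only [mul_add, Algebra.TensorProduct.tmul_mul_tmul, one_mul, mul_one, ← hi, ← hj, ← hk,
      hkk, hki, hkj, TensorProduct.smul_tmul', TensorProduct.tmul_smul, TensorProduct.neg_tmul,
      TensorProduct.tmul_neg]
    abel
  have y1 := (smul_eq_zero.mp z1).resolve_left ha
  have y2 := (smul_eq_zero.mp z2).resolve_left hb
  have y3 := (smul_eq_zero.mp z3).resolve_left (neg_ne_zero.mpr (mul_ne_zero ha hb))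
  simp [z0, y1, y2, y3]

/-- The case `C = F` of `quat_tensor_injective`; it expresses that `ℍ[F,a,b]` is simple. -/
lemma quat_injective (h2 : (2 : F) ≠ 0) {a b : F} (ha : a ≠ 0) (hb : b ≠ 0)
    {A : Type*} [Ring A] [Nontrivial A] [Algebra F A] (φ : ℍ[F, a, b] →ₐ[F] A) :
    Function.Injective φ := by
  have := quat_tensor_injective h2 ha hb
    (φ.comp (Algebra.TensorProduct.rid F F ℍ[F, a, b]).toAlgHom) (by
      intro c hc
      simpa [Algebra.TensorProduct.rid_tmul] using hc)
  have h := this.comp (Algebra.TensorProduct.rid F F ℍ[F, a, b]).symm.injective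
  intro x y hxy
  apply h
  simpa using hxy

lemma algHom_bijective_of_finrank {A B : Type*} [Ring A] [Ring B] [Algebra F A] [Algebra F B]
    [FiniteDimensional F A] [FiniteDimensional F B]
    (φ : A →ₐ[F] B) (hφ : Function.Injective φ) (h : Module.finrank F A = Module.finrank F B) :
    Nonempty (A ≃ₐ[F] B) :=
  ⟨AlgEquiv.ofBijective φ ⟨hφ,
    (LinearMap.injective_iff_surjective_of_finrank_eq_finrank (f := φ.toLinearMap) h).mp hφ⟩⟩

lemma quat_equiv_matrix (h2 : (2 : F) ≠ 0) {a b : F} (ha : a ≠ 0) (hb : b ≠ 0)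
    (q : QuaternionAlgebra.Basis (Matrix (Fin 2) (Fin 2) F) a 0 b) :
    Nonempty (ℍ[F, a, b] ≃ₐ[F] Matrix (Fin 2) (Fin 2) F) :=
  algHom_bijective_of_finrank q.liftHom (quat_injective h2 ha hb _) (by
    simp [QuaternionAlgebra.finrank_eq_four, Module.finrank_matrix])

lemma quat_one_split (h2 : (2 : F) ≠ 0) {a : F} (ha : a ≠ 0) :
    Nonempty (ℍ[F, a, 1] ≃ₐ[F] Matrix (Fin 2) (Fin 2) F) :=
  quat_equiv_matrix h2 ha one_ne_zero
    { i := !![0, a; 1, 0]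
      j := !![1, 0; 0, -1]
      k := !![0, -a; 1, 0]
      i_mul_i := by ext i j; fin_cases i <;> fin_cases j <;> simp
      j_mul_j := by ext i j; fin_cases i <;> fin_cases j <;> simp
      i_mul_j := by ext i j; fin_cases i <;> fin_cases j <;> simp
      j_mul_i := by ext i j; fin_cases i <;> fin_cases j <;> simp }

lemma quat_neg_split (h2 : (2 : F) ≠ 0) {a c : F} (ha : a ≠ 0) (hc : c ≠ 0) :
    Nonempty (ℍ[F, c, -(a ^ 2 * c)] ≃ₐ[F] Matrix (Fin 2) (Fin 2) F) :=
  quat_equiv_matrix h2 hc (neg_ne_zero.mpr (mul_ne_zero (pow_ne_zero 2 ha) hc))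
    { i := !![0, c; 1, 0]
      j := !![0, a * c; -a, 0]
      k := !![-(a * c), 0; 0, a * c]
      i_mul_i := by ext i j; fin_cases i <;> fin_cases j <;> simp
      j_mul_j := by ext i j; fin_cases i <;> fin_cases j <;> simp <;> ring
      i_mul_j := by ext i j; fin_cases i <;> fin_cases j <;> simp; ring
      j_mul_i := by ext i j; fin_cases i <;> fin_cases j <;> simp }

lemma commute_liftHom {A : Type*} [Ring A] [Algebra F A] {a b c d : F}
    (P : QuaternionAlgebra.Basis A a 0 b) (Q : QuaternionAlgebra.Basis A c 0 d)
    (cii : Commute P.i Q.i) (cij : Commute P.i Q.j) (cji : Commute P.j Q.i)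
    (cjj : Commute P.j Q.j) (x : ℍ[F, a, b]) (y : ℍ[F, c, d]) :
    Commute (P.liftHom x) (Q.liftHom y) := by
  simp only [QuaternionAlgebra.Basis.liftHom, AlgHom.coe_mk', QuaternionAlgebra.Basis.lift,
    RingHom.coe_mk, MonoidHom.coe_mk, OneHom.coe_mk]
  simp only [← P.i_mul_j, ← Q.i_mul_j]
  have c1 : ∀ z, Commute P.i z → Commute P.j z → Commute (algebraMap F _ x.re + x.imI • P.i
      + x.imJ • P.j + x.imK • (P.i * P.j)) z := fun z h1 h2 =>
    (((Algebra.commute_algebraMap_left x.re z).add_left (h1.smul_left _)).add_left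
      (h2.smul_left _)).add_left ((h1.mul_left h2).smul_left _)
  have ci := c1 _ cii cji
  have cj := c1 _ cij cjj
  exact (((Algebra.commute_algebraMap_right y.re _).add_right (ci.smul_right _)).add_right
    (cj.smul_right _)).add_right ((ci.mul_right cj).smul_right _)

/-- `(a,b) + (a,c) = (a,bc)`: inside `(a,b) ⊗ (a,c)` the pairs `i ⊗ 1, j ⊗ j` and
`1 ⊗ j, i ⊗ k` generate commuting quaternion algebras `(a,bc)` and `(c,-a²c)`,
the latter being split. -/
lemma quat_mul (h2 : (2 : F) ≠ 0) {a b c : F} (ha : a ≠ 0) (hb : b ≠ 0) (hc : c ≠ 0) :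
    Nonempty (ℍ[F, a, b] ⊗[F] ℍ[F, a, c] ≃ₐ[F]
      ℍ[F, a, b * c] ⊗[F] Matrix (Fin 2) (Fin 2) F) := by
  let P : QuaternionAlgebra.Basis (ℍ[F, a, b] ⊗[F] ℍ[F, a, c]) a 0 (b * c) :=
    { i := (⟨0, 1, 0, 0⟩ : ℍ[F, a, b]) ⊗ₜ[F] (1 : ℍ[F, a, c])
      j := (⟨0, 0, 1, 0⟩ : ℍ[F, a, b]) ⊗ₜ[F] (⟨0, 0, 1, 0⟩ : ℍ[F, a, c])
      k := (⟨0, 0, 0, 1⟩ : ℍ[F, a, b]) ⊗ₜ[F] (⟨0, 0, 1, 0⟩ : ℍ[F, a, c])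
      i_mul_i := by
        rw [Algebra.TensorProduct.tmul_mul_tmul, Algebra.TensorProduct.one_def,
          TensorProduct.smul_tmul', zero_smul, add_zero, mul_one]
        congr 1; ext <;> simp
      j_mul_j := by
        rw [Algebra.TensorProduct.tmul_mul_tmul, Algebra.TensorProduct.one_def, mul_smul,
          ← TensorProduct.tmul_smul, TensorProduct.smul_tmul']
        congr 1 <;> ext <;> simp
      i_mul_j := by
        rw [Algebra.TensorProduct.tmul_mul_tmul, one_mul]
        congr 1; ext <;> simp
      j_mul_i := by
        rw [Algebra.TensorProduct.tmul_mul_tmul, mul_one, zero_smul, zero_sub,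
          ← TensorProduct.neg_tmul]
        congr 1; ext <;> simp }
  let Q : QuaternionAlgebra.Basis (ℍ[F, a, b] ⊗[F] ℍ[F, a, c]) c 0 (-(a ^ 2 * c)) :=
    { i := (1 : ℍ[F, a, b]) ⊗ₜ[F] (⟨0, 0, 1, 0⟩ : ℍ[F, a, c])
      j := (⟨0, 1, 0, 0⟩ : ℍ[F, a, b]) ⊗ₜ[F] (⟨0, 0, 0, 1⟩ : ℍ[F, a, c])
      k := (⟨0, 1, 0, 0⟩ : ℍ[F, a, b]) ⊗ₜ[F] (⟨0, -c, 0, 0⟩ : ℍ[F, a, c])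
      i_mul_i := by
        rw [Algebra.TensorProduct.tmul_mul_tmul, Algebra.TensorProduct.one_def,
          ← TensorProduct.tmul_smul, zero_smul, add_zero, mul_one]
        congr 1; ext <;> simp
      j_mul_j := by
        rw [show -(a ^ 2 * c) = a * -(a * c) by ring,
          Algebra.TensorProduct.tmul_mul_tmul, Algebra.TensorProduct.one_def, mul_smul,
          ← TensorProduct.tmul_smul, TensorProduct.smul_tmul']
        congr 1 <;> ext <;> simp
      i_mul_j := by
        rw [Algebra.TensorProduct.tmul_mul_tmul, one_mul]
        congr 1; ext <;> simp
      j_mul_i := by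
        rw [Algebra.TensorProduct.tmul_mul_tmul, mul_one, zero_smul, zero_sub,
          ← TensorProduct.tmul_neg]
        congr 1; ext <;> simp }
  have hcomm : ∀ x y, Commute (P.liftHom x) (Q.liftHom y) := by
    have hii : P.i * Q.i = Q.i * P.i := by
      simp [P, Q, Algebra.TensorProduct.tmul_mul_tmul]
    have hij : P.i * Q.j = Q.j * P.i := by
      simp [P, Q, Algebra.TensorProduct.tmul_mul_tmul]
    have hji : P.j * Q.i = Q.i * P.j := by
      simp [P, Q, Algebra.TensorProduct.tmul_mul_tmul]
    have hjj : P.j * Q.j = Q.j * P.j := by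
      simp only [P, Q, Algebra.TensorProduct.tmul_mul_tmul]
      rw [← neg_neg ((⟨0, 0, 1, 0⟩ : ℍ[F, a, b]) * _), TensorProduct.neg_tmul,
        ← TensorProduct.tmul_neg]
      congr 1 <;> ext <;> simp
    exact commute_liftHom P Q hii hij hji hjj
  obtain ⟨e⟩ := quat_neg_split h2 ha hc
  have hinj := quat_tensor_injective h2 ha (mul_ne_zero hb hc)
    (Algebra.TensorProduct.lift P.liftHom Q.liftHom hcomm) (by
      intro d hd
      have : Nontrivial (ℍ[F, a, b] ⊗[F] ℍ[F, a, c]) := Module.nontrivial_of_finrank_pos (R := F)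
        (by simp [QuaternionAlgebra.finrank_eq_four])
      rw [Algebra.TensorProduct.lift_tmul, map_one, one_mul] at hd
      exact (injective_iff_map_eq_zero _).mp (quat_injective h2 hc
        (neg_ne_zero.mpr (mul_ne_zero (pow_ne_zero 2 ha) hc)) Q.liftHom) _ hd)
  obtain ⟨e'⟩ := algHom_bijective_of_finrank _ hinj (by
    simp [QuaternionAlgebra.finrank_eq_four])
  exact ⟨e'.symm.trans (Algebra.TensorProduct.congr AlgEquiv.refl e)⟩

lemma opt_equiv {F : Type} [Field F] (h2 : (2 : F) ≠ 0) (e : Bool) {a : F} (ha : a ≠ 0) (b : F) :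
    Nonempty (opt F e a b ≃ₐ[F] ℍ[F, a, if e then b else 1]) := by
  cases e with
  | true => exact ⟨AlgEquiv.refl⟩
  | false =>
    obtain ⟨e⟩ := quat_one_split h2 ha
    exact ⟨e.symm⟩

lemma quat_mul_tensor (h2 : (2 : F) ≠ 0) {a b c : F} (ha : a ≠ 0) (hb : b ≠ 0) (hc : c ≠ 0)
    (X : Type*) [Ring X] [Algebra F X] :
    Nonempty (ℍ[F, a, b] ⊗[F] (ℍ[F, a, c] ⊗[F] X) ≃ₐ[F]
      ℍ[F, a, b * c] ⊗[F] (Matrix (Fin 2) (Fin 2) F ⊗[F] X)) := by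
  obtain ⟨e⟩ := quat_mul h2 ha hb hc
  exact ⟨(Algebra.TensorProduct.assoc F F F ℍ[F, a, b] ℍ[F, a, c] X).symm.trans
    ((Algebra.TensorProduct.congr e AlgEquiv.refl).trans
      (Algebra.TensorProduct.assoc F F F ℍ[F, a, b * c] (Matrix (Fin 2) (Fin 2) F) X))⟩

/-- The fivefold tensor product is Brauer equivalent to the biquaternion algebra obtained by
collecting the second slots. -/
lemma five_equiv {F : Type} [Field F] (h2 : (2 : F) ≠ 0) {a1 a2 f g : F}
    (ha1 : a1 ≠ 0) (ha2 : a2 ≠ 0) (hf : f ≠ 0) (hg : g ≠ 0) (e1 e2 e3 : Bool) :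
    Nonempty ((ℍ[F, a1, f] ⊗[F] (ℍ[F, a2, g] ⊗[F]
            (opt F e1 a1 a1 ⊗[F] (opt F e2 a1 a2 ⊗[F] opt F e3 a2 a2)))) ≃ₐ[F]
      (ℍ[F, a1, f * ((if e1 then a1 else 1) * (if e2 then a2 else 1))] ⊗[F]
        ℍ[F, a2, g * (if e3 then a2 else 1)]) ⊗[F]
        Matrix (Fin 2 × Fin 2 × Fin 2) (Fin 2 × Fin 2 × Fin 2) F) := by
  obtain ⟨o1⟩ := opt_equiv h2 e1 ha1 a1
  obtain ⟨o2⟩ := opt_equiv h2 e2 ha1 a2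
  obtain ⟨o3⟩ := opt_equiv h2 e3 ha2 a2
  have hu1 : (if e1 then a1 else 1) ≠ 0 := by split_ifs <;> simp [ha1]
  have hu2 : (if e2 then a2 else 1) ≠ 0 := by split_ifs <;> simp [ha2]
  have hu3 : (if e3 then a2 else 1) ≠ 0 := by split_ifs <;> simp [ha2]
  generalize (if e1 then a1 else 1) = u1 at *
  generalize (if e2 then a2 else 1) = u2 at *
  generalize (if e3 then a2 else 1) = u3 at *
  let M := Matrix (Fin 2) (Fin 2) F
  -- `Q2 ⊗ (Q3 ⊗ (Q4 ⊗ Q5)) ≃ Q3 ⊗ (Q4 ⊗ (Q2 ⊗ Q5))`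
  let s1 : ℍ[F, a2, g] ⊗[F] (opt F e1 a1 a1 ⊗[F] (opt F e2 a1 a2 ⊗[F] opt F e3 a2 a2)) ≃ₐ[F]
      ℍ[F, a1, u1] ⊗[F] (ℍ[F, a1, u2] ⊗[F] (ℍ[F, a2, g] ⊗[F] ℍ[F, a2, u3])) :=
    (Algebra.TensorProduct.congr AlgEquiv.refl (Algebra.TensorProduct.congr o1
      (Algebra.TensorProduct.congr o2 o3))).trans
    ((Algebra.TensorProduct.leftComm F ℍ[F, a2, g] ℍ[F, a1, u1] (ℍ[F, a1, u2] ⊗[F] ℍ[F, a2, u3])).trans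
      (Algebra.TensorProduct.congr AlgEquiv.refl
        (Algebra.TensorProduct.leftComm F ℍ[F, a2, g] ℍ[F, a1, u2] ℍ[F, a2, u3])))
  obtain ⟨m1⟩ := quat_mul h2 ha2 hg hu3
  obtain ⟨m2⟩ := quat_mul_tensor h2 ha1 hu1 hu2 (ℍ[F, a2, g] ⊗[F] ℍ[F, a2, u3])
  obtain ⟨m3⟩ := quat_mul_tensor h2 ha1 hf (mul_ne_zero hu1 hu2)
    (M ⊗[F] (ℍ[F, a2, g] ⊗[F] ℍ[F, a2, u3]))
  let t1 : M ⊗[F] (M ⊗[F] (ℍ[F, a2, g] ⊗[F] ℍ[F, a2, u3])) ≃ₐ[F]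
      ℍ[F, a2, g * u3] ⊗[F] (M ⊗[F] (M ⊗[F] M)) :=
    (Algebra.TensorProduct.congr AlgEquiv.refl
      ((Algebra.TensorProduct.congr AlgEquiv.refl m1).trans
        (Algebra.TensorProduct.leftComm F M ℍ[F, a2, g * u3] M))).trans
      (Algebra.TensorProduct.leftComm F M ℍ[F, a2, g * u3] (M ⊗[F] M))
  let k : M ⊗[F] (M ⊗[F] M) ≃ₐ[F] Matrix (Fin 2 × Fin 2 × Fin 2) (Fin 2 × Fin 2 × Fin 2) F :=
    (Algebra.TensorProduct.congr AlgEquiv.refl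
      (Matrix.kroneckerAlgEquiv (Fin 2) (Fin 2) F)).trans
      (Matrix.kroneckerAlgEquiv (Fin 2) (Fin 2 × Fin 2) F)
  exact ⟨(Algebra.TensorProduct.congr AlgEquiv.refl (s1.trans m2)).trans <| m3.trans <|
    (Algebra.TensorProduct.congr AlgEquiv.refl
      (t1.trans (Algebra.TensorProduct.congr AlgEquiv.refl k))).trans
    (Algebra.TensorProduct.assoc F F F _ _ _).symm⟩

/-- A module over `B ⊗ Mₙ(F)` is the `n`-fold power of a `B`-module, namely of its image under
the idempotent `E₁₁`. -/
lemma matrix_peel {B V ι : Type*} [Ring B] [Algebra F B] [AddCommGroup V] [Module F V]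
    [FiniteDimensional F V] [Fintype ι] [DecidableEq ι] (i₀ : ι)
    (φ : B ⊗[F] Matrix ι ι F →ₐ[F] Module.End F V) :
    ∃ W : Submodule F V, Fintype.card ι * Module.finrank F W = Module.finrank F V ∧
      Nonempty (B →ₐ[F] Module.End F W) := by
  let E : ι → ι → Module.End F V := fun i j => φ (1 ⊗ₜ[F] Matrix.single i j 1)
  let T : B →ₐ[F] Module.End F V := φ.comp Algebra.TensorProduct.includeLeft
  have hE : ∀ i j k, E i j * E j k = E i k := fun i j k => by
    simp [E, ← map_mul, Algebra.TensorProduct.tmul_mul_tmul]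
  have hE0 : ∀ i j k l, j ≠ k → E i j * E k l = 0 := fun i j k l h => by
    simp [E, ← map_mul, Algebra.TensorProduct.tmul_mul_tmul, h]
  have hsum : ∑ i, E i i = 1 := by
    simp only [E, ← map_sum, ← TensorProduct.tmul_sum]
    rw [Matrix.sum_single_one, ← Algebra.TensorProduct.one_def, map_one]
  have hET : ∀ i j b, T b * E i j = E i j * T b := fun i j b => by
    simp [E, T, ← map_mul, Algebra.TensorProduct.tmul_mul_tmul]
  have hE' : ∀ i j k v, E i j (E j k v) = E i k v := fun i j k v => by
    rw [← hE i j k]; rfl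
  let W : Submodule F V := LinearMap.range (E i₀ i₀)
  have hW : ∀ w ∈ W, E i₀ i₀ w = w := by
    rintro _ ⟨v, rfl⟩; exact hE' _ _ _ _
  have hTW : ∀ b, ∀ w ∈ W, T b w ∈ W := by
    rintro b _ ⟨v, rfl⟩
    exact ⟨T b v, by rw [← Module.End.mul_apply, ← hET]; rfl⟩
  refine ⟨W, ?_, ⟨AlgHom.ofLinearMap
    { toFun := fun b => (T b).restrict (hTW b)
      map_add' := fun x y => by ext; simp
      map_smul' := fun x y => by ext; simp } (by ext; simp) (fun x y => by ext; simp)⟩⟩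
  let e : V ≃ₗ[F] (ι → W) :=
    { toFun := fun v i => ⟨E i₀ i v, ⟨E i₀ i v, hE' _ _ _ _⟩⟩
      map_add' := fun x y => by ext; simp
      map_smul' := fun x y => by ext; simp
      invFun := fun w => ∑ i, E i i₀ (w i)
      left_inv := fun v => by
        simp only [hE']
        rw [← LinearMap.sum_apply, hsum]; rfl
      right_inv := fun w => by
        ext i
        simp only [map_sum]
        rw [Finset.sum_eq_single i]
        · rw [hE', hW _ (w i).2]
        · intro j _ hj
          rw [← Module.End.mul_apply, hE0 _ _ _ _ hj.symm]; rfl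
        · simp }
  rw [e.finrank_eq, Module.finrank_pi_fintype]
  simp

end Algebra

/-! ### The biquadratic extension -/

section Biquadratic

variable {F K : Type*} [Field F] [Field K] [Algebra F K]

lemma exists_biquadratic_basis (h2 : (2 : F) ≠ 0) {r1 r2 : K} (h1 : r1 ≠ 0) (h2' : r2 ≠ 0)
    {σ1 σ2 : K ≃ₐ[F] K} (hσ1r1 : σ1 r1 = -r1) (hσ1r2 : σ1 r2 = r2)
    (hσ2r2 : σ2 r2 = -r2) (hdim : Module.finrank F K = 4) :
    ∃ b : Module.Basis (Fin 4) F K, ⇑b = ![1, r1, r2, r1 * r2] := by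
  have h2K : (2 : K) ≠ 0 := by
    rw [← map_ofNat (algebraMap F K) 2]
    exact (map_ne_zero _).mpr h2
  have hli : LinearIndependent F ![1, r1, r2, r1 * r2] := by
    rw [Fintype.linearIndependent_iff]
    intro c hc
    simp only [Fin.sum_univ_four, Matrix.cons_val, Algebra.smul_def, mul_one] at hc
    have hc1 := congrArg σ1 hc
    simp only [map_add, map_mul, AlgEquiv.commutes, hσ1r1, hσ1r2, map_zero] at hc1
    have e1 : algebraMap F K (c 0) + algebraMap F K (c 2) * r2 = 0 := by
      apply mul_left_cancel₀ h2K; linear_combination hc + hc1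
    have e2 : algebraMap F K (c 1) + algebraMap F K (c 3) * r2 = 0 := by
      apply mul_left_cancel₀ h2K
      apply mul_left_cancel₀ h1; linear_combination hc - hc1
    have e1' := congrArg σ2 e1
    have e2' := congrArg σ2 e2
    simp only [map_add, map_mul, AlgEquiv.commutes, hσ2r2, map_zero] at e1' e2'
    have d0 : algebraMap F K (c 0) = 0 := by
      apply mul_left_cancel₀ h2K; linear_combination e1 + e1'
    have d1 : algebraMap F K (c 1) = 0 := by
      apply mul_left_cancel₀ h2K; linear_combination e2 + e2'
    have d2 : algebraMap F K (c 2) = 0 := by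
      apply mul_right_cancel₀ h2'; linear_combination e1 - d0
    have d3 : algebraMap F K (c 3) = 0 := by
      apply mul_right_cancel₀ h2'; linear_combination e2 - d1
    rw [map_eq_zero] at d0 d1 d2 d3
    intro i
    fin_cases i
    exacts [d0, d1, d2, d3]
  exact ⟨basisOfLinearIndependentOfCardEqFinrank hli (by simp [hdim]), by simp⟩

lemma biquadratic_ext {r1 r2 : K} {b : Module.Basis (Fin 4) F K}
    (hb : ⇑b = ![1, r1, r2, r1 * r2]) {V : Type*} [AddCommGroup V] [Module F V]
    {S T : K →ₗ[F] V} (h0 : S 1 = T 1) (h1 : S r1 = T r1) (h2 : S r2 = T r2)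
    (h3 : S (r1 * r2) = T (r1 * r2)) : S = T := by
  refine b.ext fun i => ?_
  rw [hb]
  fin_cases i
  exacts [h0, h1, h2, h3]

/-- If `β·σ1(β) = f'` and `λ·σ2(λ) = g'` lie in the classes of `f` and `g` modulo squares of `K`,
and the semilinear operators `βσ1`, `λσ2` commute, then `γ` exists: take
`γ = r1 r2 λ (β - σ2 β)`, or `γ = βλ` when `σ2 β = β`. -/
lemma exists_gamma {σ1 σ2 : K ≃ₐ[F] K} {r1 r2 : K} (h1 : r1 ≠ 0) (h2 : r2 ≠ 0)
    (hσ1r1 : σ1 r1 = -r1) (hσ1r2 : σ1 r2 = r2)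
    (hσ2r1 : σ2 r1 = r1) (hσ2r2 : σ2 r2 = -r2)
    (i1 : ∀ z, σ1 (σ1 z) = z) (i2 : ∀ z, σ2 (σ2 z) = z)
    {f g u v : K} (hu : u ≠ 0) (hv : v ≠ 0) (hf : f ≠ 0) (hg : g ≠ 0)
    {β l : K} (hβ : β * σ1 β = f * u ^ 2) (hl : l * σ2 l = g * v ^ 2)
    (hc : β * σ1 l = l * σ2 β) :
    ∃ γ : K, γ ≠ 0 ∧
      (∃ k : K, k ≠ 0 ∧ γ * σ1 γ = f * k ^ 2) ∧
      (∃ k : K, k ≠ 0 ∧ γ * σ2 γ = g * k ^ 2) := by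
  have hβ0 : β ≠ 0 := by
    rintro rfl; simp [hu, hf] at hβ
  have hl0 : l ≠ 0 := by
    rintro rfl; simp [hv, hg] at hl
  by_cases hd : σ2 β = β
  · have hd' : σ1 l = l := by
      apply mul_left_cancel₀ hβ0; rw [hc, hd, mul_comm]
    refine ⟨β * l, mul_ne_zero hβ0 hl0, ⟨u * l, mul_ne_zero hu hl0, ?_⟩,
      ⟨v * β, mul_ne_zero hv hβ0, ?_⟩⟩
    · rw [map_mul, hd']; linear_combination l ^ 2 * hβ
    · rw [map_mul, hd]; linear_combination β ^ 2 * hl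
  · have hd1 : β - σ2 β ≠ 0 := sub_ne_zero.mpr (Ne.symm hd)
    have hd2 : l - σ1 l ≠ 0 := fun h => by
      have : l * (β - σ2 β) = 0 := by linear_combination β * h + hc
      exact mul_ne_zero hl0 hd1 this
    have hγ : r1 * r2 * l * (β - σ2 β) = r1 * r2 * β * (l - σ1 l) := by
      linear_combination r1 * r2 * hc
    refine ⟨r1 * r2 * l * (β - σ2 β), by positivity, ⟨r1 * r2 * u * (l - σ1 l), by positivity, ?_⟩,
      ⟨r1 * r2 * v * (β - σ2 β), by positivity, ?_⟩⟩
    · rw [hγ]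
      simp only [map_mul, map_sub, hσ1r1, hσ1r2, i1]
      linear_combination (r1 * r2 * (l - σ1 l)) ^ 2 * hβ
    · simp only [map_mul, map_sub, hσ2r1, hσ2r2, i2]
      linear_combination (r1 * r2 * (β - σ2 β)) ^ 2 * hl

/-- Since `γ·σ(γ)` is `σ`-invariant, `σ k = ±k`; in the case of a minus sign, replacing `f` by
`f·a` and `k` by `k/√a` makes `k` invariant. -/
lemma fix_root {σ : K ≃ₐ[F] K} {r : K} {a : F} (hr0 : r ≠ 0) (hr : r ^ 2 = algebraMap F K a)
    (hσr : σ r = -r) (inv : ∀ z, σ (σ z) = z) {f : F} (hf : f ≠ 0) {γ k : K} (hk : k ≠ 0)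
    (h : γ * σ γ = algebraMap F K f * k ^ 2) :
    ∃ e : Bool, ∃ k' : K, k' ≠ 0 ∧ σ k' = k' ∧
      γ * σ γ = algebraMap F K (f * (if e then a else 1)) * k' ^ 2 := by
  have hfK : algebraMap F K f ≠ 0 := (map_ne_zero _).mpr hf
  have h' := congrArg σ h
  simp only [map_mul, inv, map_pow, AlgEquiv.commutes] at h'
  have hsq : σ k ^ 2 = k ^ 2 := by
    apply mul_left_cancel₀ hfK; rw [← h, ← h', mul_comm]
  rcases sq_eq_sq_iff_eq_or_eq_neg.mp hsq with hk1 | hk1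
  · exact ⟨false, k, hk, hk1, by simpa using h⟩
  · refine ⟨true, k / r, div_ne_zero hk hr0, ?_, ?_⟩
    · rw [map_div₀, hk1, hσr, neg_div_neg_eq]
    · rw [h]; simp only [if_true, map_mul, ← hr]; field_simp

/-- Once `k1` and `k2` are chosen invariant under `σ1` and `σ2`, the operators `(γ/k1)σ1` and
`(γ/k2)σ2` commute up to sign. If the sign is `-1`, replacing `f` by `f·a2` and `k1` by `k1/√a2`
corrects it, because `σ2(√a2) = -√a2`. -/
lemma exists_pair {σ1 σ2 : K ≃ₐ[F] K} {r1 r2 : K} {a1 a2 : F} (h1 : r1 ≠ 0) (h2 : r2 ≠ 0)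
    (hr1 : r1 ^ 2 = algebraMap F K a1) (hr2 : r2 ^ 2 = algebraMap F K a2)
    (hσ1r1 : σ1 r1 = -r1) (hσ1r2 : σ1 r2 = r2) (hσ2r2 : σ2 r2 = -r2)
    (i1 : ∀ z, σ1 (σ1 z) = z) (i2 : ∀ z, σ2 (σ2 z) = z) (hcomm : ∀ z, σ1 (σ2 z) = σ2 (σ1 z))
    {f g : F} (hf : f ≠ 0) (hg : g ≠ 0) {γ : K} (hγ : γ ≠ 0)
    (hk1 : ∃ k : K, k ≠ 0 ∧ γ * σ1 γ = algebraMap F K f * k ^ 2)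
    (hk2 : ∃ k : K, k ≠ 0 ∧ γ * σ2 γ = algebraMap F K g * k ^ 2) :
    ∃ e1 e2 e3 : Bool, ∃ β l : K,
      β * σ1 β = algebraMap F K (f * ((if e1 then a1 else 1) * (if e2 then a2 else 1))) ∧
      l * σ2 l = algebraMap F K (g * (if e3 then a2 else 1)) ∧
      β * σ1 l = l * σ2 β := by
  obtain ⟨k, hk, hk1⟩ := hk1
  obtain ⟨e1, k1, hk10, hs1, hk1⟩ := fix_root h1 hr1 hσ1r1 i1 hf hk hk1
  obtain ⟨k, hk, hk2⟩ := hk2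
  obtain ⟨e3, k2, hk20, hs2, hk2⟩ := fix_root h2 hr2 hσ2r2 i2 hg hk hk2
  obtain ⟨f', hfe⟩ : ∃ f', f' = f * (if e1 then a1 else 1) := ⟨_, rfl⟩
  obtain ⟨g', hge⟩ : ∃ g', g' = g * (if e3 then a2 else 1) := ⟨_, rfl⟩
  rw [← hfe] at hk1
  rw [← hge] at hk2
  have hσ1k2 : σ1 k2 ≠ 0 := (map_ne_zero σ1).mpr hk20
  have hσ2k1 : σ2 k1 ≠ 0 := (map_ne_zero σ2).mpr hk10
  -- both sides are the norm of `γ` down to `F`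
  have hN : (algebraMap F K f' * (k1 * σ2 k1)) ^ 2 = (algebraMap F K g' * (k2 * σ1 k2)) ^ 2 := by
    have x1 := congrArg σ2 hk1
    have x2 := congrArg σ1 hk2
    simp only [map_mul, map_pow, AlgEquiv.commutes] at x1 x2
    rw [← hcomm] at x1
    calc _ = (algebraMap F K f' * k1 ^ 2) * (algebraMap F K f' * σ2 k1 ^ 2) := by ring
      _ = (algebraMap F K g' * k2 ^ 2) * (algebraMap F K g' * σ1 k2 ^ 2) := by
        rw [← hk1, ← hk2, ← x1, ← x2]; ring
      _ = _ := by ring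
  rcases sq_eq_sq_iff_eq_or_eq_neg.mp hN with hs | hs
  · refine ⟨e1, false, e3, γ / k1, γ / k2, ?_, ?_, ?_⟩
    · rw [← mul_assoc, ← hfe, map_div₀, hs1]
      simp only [Bool.false_eq_true, if_false, mul_one]
      field_simp; linear_combination hk1
    · rw [← hge, map_div₀, hs2]; field_simp; linear_combination hk2
    · rw [map_div₀, map_div₀]; field_simp
      rw [← mul_right_inj' hγ]
      linear_combination (k2 * σ2 k1) * hk1 - k1 * σ1 k2 * hk2 + k1 * k2 * hs
  · refine ⟨e1, true, e3, γ * r2 / k1, γ / k2, ?_, ?_, ?_⟩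
    · rw [← mul_assoc, ← hfe, map_div₀, map_mul, hs1, hσ1r2]; simp only [if_true, map_mul, ← hr2]
      field_simp; linear_combination hk1
    · rw [← hge, map_div₀, hs2]; field_simp; linear_combination hk2
    · rw [map_div₀, map_div₀, map_mul, hσ2r2]; field_simp
      rw [← mul_right_inj' hγ]
      linear_combination (k2 * σ2 k1) * hk1 + k1 * σ1 k2 * hk2 + k1 * k2 * hs

/-! ### Biquaternion algebras split by the biquadratic extension -/

/-- The biquaternion algebra acts on `K`: `i1`, `i2` by multiplication with `r1`, `r2`, and
`j1`, `j2` as the semilinear operators `βσ1`, `λσ2`. -/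
lemma biquat_split {σ1 σ2 : K ≃ₐ[F] K} (h2 : (2 : F) ≠ 0) {r1 r2 : K} {a1 a2 : F}
    (ha1 : a1 ≠ 0) (ha2 : a2 ≠ 0)
    (hr1 : r1 ^ 2 = algebraMap F K a1) (hr2 : r2 ^ 2 = algebraMap F K a2)
    (hσ1r1 : σ1 r1 = -r1) (hσ1r2 : σ1 r2 = r2) (hσ2r1 : σ2 r1 = r1) (hσ2r2 : σ2 r2 = -r2)
    (i1 : ∀ z, σ1 (σ1 z) = z) (i2 : ∀ z, σ2 (σ2 z) = z) (hcomm : ∀ z, σ1 (σ2 z) = σ2 (σ1 z))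
    (hdim : Module.finrank F K = 4)
    {f g : F} (hf : f ≠ 0) (hg : g ≠ 0) {β l : K}
    (hβ : β * σ1 β = algebraMap F K f) (hl : l * σ2 l = algebraMap F K g)
    (hc : β * σ1 l = l * σ2 β) :
    Nonempty (ℍ[F, a1, f] ⊗[F] ℍ[F, a2, g] ≃ₐ[F] Matrix (Fin 4) (Fin 4) F) := by
  have : FiniteDimensional F K := FiniteDimensional.of_finrank_pos (by omega)
  have hm : ∀ x z : K, LinearMap.mulLeft F x z = x * z := fun _ _ => rfl
  let P : QuaternionAlgebra.Basis (Module.End F K) a1 0 f :=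
    { i := LinearMap.mulLeft F r1
      j := LinearMap.mulLeft F β * σ1.toLinearMap
      k := LinearMap.mulLeft F r1 * (LinearMap.mulLeft F β * σ1.toLinearMap)
      i_mul_i := by
        ext z
        simp [Algebra.smul_def, ← hr1]; ring
      j_mul_j := by
        ext z
        simp [Algebra.smul_def, ← hβ, i1]; ring
      i_mul_j := rfl
      j_mul_i := by
        ext z
        simp [hσ1r1]; ring }
  let Q : QuaternionAlgebra.Basis (Module.End F K) a2 0 g :=
    { i := LinearMap.mulLeft F r2
      j := LinearMap.mulLeft F l * σ2.toLinearMap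
      k := LinearMap.mulLeft F r2 * (LinearMap.mulLeft F l * σ2.toLinearMap)
      i_mul_i := by
        ext z
        simp [Algebra.smul_def, ← hr2]; ring
      j_mul_j := by
        ext z
        simp [Algebra.smul_def, ← hl, i2]; ring
      i_mul_j := rfl
      j_mul_i := by
        ext z
        simp [hσ2r2]; ring }
  have hPQ := commute_liftHom P Q
    (by ext z; simp [P, Q]; ring) (by ext z; simp [P, Q, hσ2r1]; ring)
    (by ext z; simp [P, Q, hσ1r2]; ring)
    (by ext z; simp [P, Q, hcomm]; linear_combination σ2 (σ1 z) * hc)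
  have hinj := quat_tensor_injective h2 ha1 hf
    (Algebra.TensorProduct.lift P.liftHom Q.liftHom hPQ) (by
      intro d hd
      rw [Algebra.TensorProduct.lift_tmul, map_one, one_mul] at hd
      exact (injective_iff_map_eq_zero _).mp (quat_injective h2 ha2 hg Q.liftHom) _ hd)
  obtain ⟨e⟩ := algHom_bijective_of_finrank _ hinj (by
    rw [Module.finrank_tensorProduct, Module.finrank_linearMap, hdim,
      QuaternionAlgebra.finrank_eq_four, QuaternionAlgebra.finrank_eq_four])
  exact ⟨e.trans (algEquivMatrix (Module.finBasisOfFinrankEq F K hdim))⟩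

lemma basis_end_apply {V : Type*} [AddCommGroup V] [Module F V] {a b : F}
    (P : QuaternionAlgebra.Basis (Module.End F V) a 0 b) :
    (∀ v, P.i (P.i v) = a • v) ∧ (∀ v, P.j (P.j v) = b • v) ∧
      ∀ v, P.j (P.i v) = -P.i (P.j v) := by
  refine ⟨fun v => ?_, fun v => ?_, fun v => ?_⟩
  · rw [← Module.End.mul_apply, P.i_mul_i]; simp
  · rw [← Module.End.mul_apply, P.j_mul_j]; simp
  · rw [← Module.End.mul_apply, ← Module.End.mul_apply, P.j_mul_i, P.i_mul_j]; simp

/-- A `4`-dimensional module over the biquaternion algebra is one-dimensional over `K`, and in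
terms of a generator `w`, `j1` and `j2` are semilinear operators `βσ1` and `λσ2`. -/
lemma exists_pair_of_rep {σ1 σ2 : K ≃ₐ[F] K} {r1 r2 : K} {a1 a2 : F}
    (hr1 : r1 ^ 2 = algebraMap F K a1) (hr2 : r2 ^ 2 = algebraMap F K a2)
    (hσ1r1 : σ1 r1 = -r1) (hσ1r2 : σ1 r2 = r2) (hσ2r1 : σ2 r1 = r1) (hσ2r2 : σ2 r2 = -r2)
    (hdim : Module.finrank F K = 4)
    {b : Module.Basis (Fin 4) F K} (hb : ⇑b = ![1, r1, r2, r1 * r2])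
    {f g : F} {V : Type*} [AddCommGroup V] [Module F V] (hV : Module.finrank F V = 4)
    (φ : ℍ[F, a1, f] ⊗[F] ℍ[F, a2, g] →ₐ[F] Module.End F V) :
    ∃ β l : K, β * σ1 β = algebraMap F K f ∧ l * σ2 l = algebraMap F K g ∧
      β * σ1 l = l * σ2 β := by
  have : FiniteDimensional F K := FiniteDimensional.of_finrank_pos (by omega)
  have : FiniteDimensional F V := FiniteDimensional.of_finrank_pos (by omega)
  have : Nontrivial V := Module.nontrivial_of_finrank_pos (R := F) (by omega)
  let P := (QuaternionAlgebra.Basis.self F (c₁ := a1) (c₂ := 0) (c₃ := f)).compHom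
    (φ.comp (Algebra.TensorProduct.includeLeft))
  let Q := (QuaternionAlgebra.Basis.self F (c₁ := a2) (c₂ := 0) (c₃ := g)).compHom
    (φ.comp (Algebra.TensorProduct.includeRight))
  have hPQ : ∀ x y, φ (x ⊗ₜ[F] 1) * φ (1 ⊗ₜ[F] y) = φ (1 ⊗ₜ[F] y) * φ (x ⊗ₜ[F] 1) := by
    intro x y
    simp [← map_mul, Algebra.TensorProduct.tmul_mul_tmul]
  have cii : ∀ v, P.i (Q.i v) = Q.i (P.i v) := fun v => DFunLike.congr_fun (hPQ _ _) v
  have cij : ∀ v, P.i (Q.j v) = Q.j (P.i v) := fun v => DFunLike.congr_fun (hPQ _ _) v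
  have cji : ∀ v, P.j (Q.i v) = Q.i (P.j v) := fun v => DFunLike.congr_fun (hPQ _ _) v
  have cjj : ∀ v, P.j (Q.j v) = Q.j (P.j v) := fun v => DFunLike.congr_fun (hPQ _ _) v
  obtain ⟨pii, pjj, pji⟩ := basis_end_apply P
  obtain ⟨qii, qjj, qji⟩ := basis_end_apply Q
  generalize P.i = I1 at *
  generalize P.j = J1 at *
  generalize Q.i = I2 at *
  generalize Q.j = J2 at *
  clear hPQ
  obtain ⟨w, hw⟩ := exists_ne (0 : V)
  let T : K →ₗ[F] V := b.constr F ![w, I1 w, I2 w, I1 (I2 w)]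
  have hb0 : b 0 = 1 := by rw [hb]; rfl
  have hb1 : b 1 = r1 := by rw [hb]; rfl
  have hb2 : b 2 = r2 := by rw [hb]; rfl
  have hb3 : b 3 = r1 * r2 := by rw [hb]; rfl
  have T0 : T 1 = w := by rw [← hb0]; simp [T]
  have T1 : T r1 = I1 w := by rw [← hb1]; simp [T]
  have T2 : T r2 = I2 w := by rw [← hb2]; simp [T]
  have T3 : T (r1 * r2) = I1 (I2 w) := by rw [← hb3]; simp [T]
  have r11 : r1 * r1 = a1 • (1 : K) := by rw [← sq, hr1, Algebra.algebraMap_eq_smul_one]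
  have r22 : r2 * r2 = a2 • (1 : K) := by rw [← sq, hr2, Algebra.algebraMap_eq_smul_one]
  have r112 : r1 * (r1 * r2) = a1 • r2 := by rw [← mul_assoc, r11, smul_mul_assoc, one_mul]
  have r212 : r2 * (r1 * r2) = a2 • r1 := by
    rw [mul_left_comm, r22, mul_smul_comm, mul_one]
  have TI1 : ∀ z, T (r1 * z) = I1 (T z) := by
    have : T ∘ₗ LinearMap.mulLeft F r1 = I1 ∘ₗ T := by
      apply biquadratic_ext hb <;>
        simp [T0, T1, T2, T3, pii, r11, r112]
    exact fun z => DFunLike.congr_fun this z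
  have TI2 : ∀ z, T (r2 * z) = I2 (T z) := by
    have : T ∘ₗ LinearMap.mulLeft F r2 = I2 ∘ₗ T := by
      apply biquadratic_ext hb <;>
        simp [T0, T1, T2, T3, qii, r22, r212, mul_comm r2 r1, ← cii]
    exact fun z => DFunLike.congr_fun this z
  have TI12 : ∀ z, T (r1 * r2 * z) = I1 (I2 (T z)) := fun z => by
    rw [mul_assoc, TI1, TI2]
  -- the kernel of `T` is an ideal of `K` not containing `1`
  have hinj : Function.Injective T := by
    rw [injective_iff_map_eq_zero]
    intro z hz
    by_contra hz0
    have : T ∘ₗ LinearMap.mulRight F z = 0 := by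
      apply biquadratic_ext hb <;> simp [TI1, TI2, TI12, hz]
    have h1 := DFunLike.congr_fun this z⁻¹
    simp [hz0, T0] at h1
    exact hw h1
  have hsurj : Function.Surjective T :=
    (LinearMap.injective_iff_surjective_of_finrank_eq_finrank (by rw [hdim, hV])).mp hinj
  obtain ⟨β, hβ⟩ := hsurj (J1 w)
  obtain ⟨l, hl⟩ := hsurj (J2 w)
  have TJ1 : ∀ z, J1 (T z) = T (β * σ1 z) := by
    have : J1 ∘ₗ T = T ∘ₗ LinearMap.mulLeft F β ∘ₗ σ1.toLinearMap := by
      apply biquadratic_ext hb <;>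
        simp [T0, T1, T2, T3, hσ1r1, hσ1r2, mul_comm β, TI1, TI2, TI12, hβ, pji, cji]
    exact fun z => DFunLike.congr_fun this z
  have TJ2 : ∀ z, J2 (T z) = T (l * σ2 z) := by
    have : J2 ∘ₗ T = T ∘ₗ LinearMap.mulLeft F l ∘ₗ σ2.toLinearMap := by
      apply biquadratic_ext hb <;>
        simp [T0, T1, T2, T3, hσ2r1, hσ2r2, mul_comm l, TI1, TI2, TI12, hl, qji, ← cij]
    exact fun z => DFunLike.congr_fun this z
  refine ⟨β, l, hinj ?_, hinj ?_, hinj ?_⟩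
  · rw [← TJ1, hβ, pjj, Algebra.algebraMap_eq_smul_one, map_smul, T0]
  · rw [← TJ2, hl, qjj, Algebra.algebraMap_eq_smul_one, map_smul, T0]
  · rw [← TJ1, ← TJ2, hβ, hl, cjj]

end Biquadratic

set_option maxSynthPendingDepth 5

/-- with `F` of characteristic `≠ 2`, `a1, a2 ∈ F×` independent mod squares,
`K = F(√a1,√a2)` and `Gal(K/F) = {1, σ1, σ2, σ1σ2} ≅ ℤ/2ℤ × ℤ/2ℤ`: for every
`f, g ∈ F×` there exists `γ ∈ K×` with `γ·σ1(γ) ∈ f·K×²` and `γ·σ2(γ) ∈ g·K×²` if and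
only if `(a1,f) + (a2,g)` lies in the `𝔽₂`-span `S = ⟨(a1,a1),(a1,a2),(a2,a2)⟩ ⊆ Br(F)`,
i.e. for some `e1,e2,e3 ∈ {0,1}` the sum
`(a1,f) + (a2,g) + e1(a1,a1) + e2(a1,a2) + e3(a2,a2)` is trivial; this sum is represented
by the tensor product below (a central simple algebra of dimension `4⁵`), and it is
trivial iff that algebra is split, i.e. isomorphic to `M₃₂(F)`. -/
theorem stmt4
    (F K : Type) [Field F] [Field K] [Algebra F K] (hchar : (2 : F) ≠ 0)
    (a1 a2 : F) (ha1 : a1 ≠ 0) (ha2 : a2 ≠ 0)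
    (hi1 : ¬ IsSquare a1) (hi2 : ¬ IsSquare a2) (hi12 : ¬ IsSquare (a1 * a2))
    (r1 r2 : K) (hr1 : r1 ^ 2 = algebraMap F K a1) (hr2 : r2 ^ 2 = algebraMap F K a2)
    (hgen : IntermediateField.adjoin F {r1, r2} = ⊤)
    [IsGalois F K]
    (σ1 σ2 : K ≃ₐ[F] K)
    (hσ1r1 : σ1 r1 = -r1) (hσ1r2 : σ1 r2 = r2)
    (hσ2r1 : σ2 r1 = r1) (hσ2r2 : σ2 r2 = -r2)
    (hG : ∀ τ : K ≃ₐ[F] K, τ = 1 ∨ τ = σ1 ∨ τ = σ2 ∨ τ = σ1 * σ2)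
    (hG4 : Nat.card (K ≃ₐ[F] K) = 4)
    (f g : F) (hf : f ≠ 0) (hg : g ≠ 0) :
    (∃ γ : K, γ ≠ 0 ∧
      (∃ k : K, k ≠ 0 ∧ γ * σ1 γ = algebraMap F K f * k ^ 2) ∧
      (∃ k : K, k ≠ 0 ∧ γ * σ2 γ = algebraMap F K g * k ^ 2))
    ↔
    ∃ e1 e2 e3 : Bool,
      Nonempty
        ((ℍ[F, a1, f] ⊗[F] (ℍ[F, a2, g] ⊗[F]
            (opt F e1 a1 a1 ⊗[F] (opt F e2 a1 a2 ⊗[F] opt F e3 a2 a2)))) ≃ₐ[F]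
          Matrix (Fin 32) (Fin 32) F) := by
  have hdim : Module.finrank F K = 4 := by
    have : FiniteDimensional F K := by
      have : Finite (K ≃ₐ[F] K) := Nat.finite_of_card_ne_zero (by omega)
      exact IsGalois.finiteDimensional_of_finite F K
    rw [← IsGalois.card_aut_eq_finrank, hG4]
  have h1 : r1 ≠ 0 := by rintro rfl; exact ha1 (by simpa using hr1.symm)
  have h2 : r2 ≠ 0 := by rintro rfl; exact ha2 (by simpa using hr2.symm)
  obtain ⟨b, hb⟩ := exists_biquadratic_basis hchar h1 h2 hσ1r1 hσ1r2 hσ2r2 hdim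
  have i1 : ∀ z, σ1 (σ1 z) = z := by
    have : σ1.toLinearMap ∘ₗ σ1.toLinearMap = LinearMap.id := by
      apply biquadratic_ext hb <;> simp [hσ1r1, hσ1r2]
    exact fun z => DFunLike.congr_fun this z
  have i2 : ∀ z, σ2 (σ2 z) = z := by
    have : σ2.toLinearMap ∘ₗ σ2.toLinearMap = LinearMap.id := by
      apply biquadratic_ext hb <;> simp [hσ2r1, hσ2r2]
    exact fun z => DFunLike.congr_fun this z
  have hcomm : ∀ z, σ1 (σ2 z) = σ2 (σ1 z) := by
    have : σ1.toLinearMap ∘ₗ σ2.toLinearMap = σ2.toLinearMap ∘ₗ σ1.toLinearMap := by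
      apply biquadratic_ext hb <;> simp [hσ1r1, hσ1r2, hσ2r1, hσ2r2]
    exact fun z => DFunLike.congr_fun this z
  constructor
  · rintro ⟨γ, hγ, hk1, hk2⟩
    obtain ⟨e1, e2, e3, β, l, hβ, hl, hc⟩ := exists_pair h1 h2 hr1 hr2 hσ1r1 hσ1r2 hσ2r2
      i1 i2 hcomm hf hg hγ hk1 hk2
    refine ⟨e1, e2, e3, ?_⟩
    have hf' : f * ((if e1 then a1 else 1) * (if e2 then a2 else 1)) ≠ 0 := by
      split_ifs <;> simp [ha1, ha2, hf]
    have hg' : g * (if e3 then a2 else 1) ≠ 0 := by split_ifs <;> simp [ha2, hg]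
    obtain ⟨E⟩ := five_equiv hchar ha1 ha2 hf hg e1 e2 e3
    obtain ⟨E'⟩ := biquat_split hchar ha1 ha2 hr1 hr2 hσ1r1 hσ1r2 hσ2r1 hσ2r2 i1 i2 hcomm hdim
      hf' hg' hβ hl hc
    exact ⟨E.trans ((Algebra.TensorProduct.congr E' AlgEquiv.refl).trans
      ((Matrix.kroneckerAlgEquiv (Fin 4) (Fin 2 × Fin 2 × Fin 2) F).trans
        (Matrix.reindexAlgEquiv F F (Fintype.equivOfCardEq (by simp)))))⟩
  · rintro ⟨e1, e2, e3, ⟨A⟩⟩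
    obtain ⟨E⟩ := five_equiv hchar ha1 ha2 hf hg e1 e2 e3
    obtain ⟨W, hW, ⟨φ⟩⟩ := matrix_peel (V := Fin 32 → F) ((0, 0, 0) : Fin 2 × Fin 2 × Fin 2)
      ((E.symm.trans A).trans (algEquivMatrix (Pi.basisFun F (Fin 32))).symm).toAlgHom
    have hW4 : Module.finrank F W = 4 := by
      simp at hW; omega
    obtain ⟨β, l, hβ, hl, hc⟩ := exists_pair_of_rep hr1 hr2 hσ1r1 hσ1r2 hσ2r1 hσ2r2 hdim hb hW4 φ
    refine exists_gamma h1 h2 hσ1r1 hσ1r2 hσ2r1 hσ2r2 i1 i2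
      (u := (if e1 then r1 else 1) * (if e2 then r2 else 1)) (v := if e3 then r2 else 1)
      (by split_ifs <;> simp [h1, h2]) (by split_ifs <;> simp [h2])
      ((map_ne_zero _).mpr hf) ((map_ne_zero _).mpr hg) ?_ ?_ hc
    · rw [hβ]; split_ifs <;> simp [← hr1, ← hr2, mul_pow]
    · rw [hl]; split_ifs <;> simp [← hr2]
end
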